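/- There exists a finite set S of 421 points in ℝ² and two points p, q ∈ S with dist(p,q) = 8/√3, such that the unit-distance graph on S is 4-colorable and every proper 4-coloring c of this graph satisfies c p = c q (i.e., {p,q} is a monochromatic pair of length 8/√3). -/

import Mathlib

/-- Binary trees of natural numbers (used as lookup tables). -/
inductive T where
  | L (m : Nat)
  | N (l r : T)

noncomputable def T.sel (l r : Nat → Nat) (v : Nat) : Nat :=
  Bool.rec (r (Nat.shiftRight v (nat_lit 1))) (l (Nat.shiftRight v (nat_lit 1)))
    (Nat.beq (Nat.land v (nat_lit 1)) (nat_lit 0))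
noncomputable def T.get (t : T) : Nat → Nat := T.rec (fun m _ => m) (fun _ _ => T.sel) t

/-- Force the evaluation of `b` before calling `f`. -/
noncomputable def frc {α : Type} (b : Nat) (f : Nat → α) : α :=
  Nat.rec (f (nat_lit 0)) (fun n _ => f (Nat.succ n)) b

/-- The list of `k` blocks of nine bits of `x`. -/
noncomputable def dec (k : Nat) : Nat → List Nat :=
  Nat.rec (fun _ => []) (fun _ ih x => Nat.land x (nat_lit 511) :: ih (Nat.shiftRight x (nat_lit 9))) k
noncomputable def msk (l : List Nat) : Nat :=
  List.rec (nat_lit 0) (fun a _ ih => Nat.lor (Nat.shiftLeft (nat_lit 1) a) ih) l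

noncomputable def vert (m : Nat) : Nat := Nat.land m (nat_lit 511)
noncomputable def nbl (m : Nat) : List Nat :=
  dec (Nat.land (Nat.shiftRight m (nat_lit 9)) (nat_lit 31)) (Nat.shiftRight m (nat_lit 14))

noncomputable def fld (c x : Nat) : Nat := Nat.shiftLeft x (Nat.mul (nat_lit 522) c)
/-- Other three colours are forbidden at the vertex, colour `c` is forbidden at the neighbours. -/
noncomputable def mk2 (d x : Nat) : Nat :=
  Nat.lor (Nat.shiftLeft d (nat_lit 64)) (Nat.lor (Nat.shiftLeft x (nat_lit 2152)) (Nat.shiftLeft x (nat_lit 4240)))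
noncomputable def mk1 (c b nb : Nat) : Nat :=
  mk2 (fld c b) (Nat.lor (fld c nb) (Nat.lor (fld (Nat.mod (Nat.add c (nat_lit 1)) (nat_lit 4)) b)
    (Nat.lor (fld (Nat.mod (Nat.add c (nat_lit 2)) (nat_lit 4)) b) (fld (Nat.mod (Nat.add c (nat_lit 3)) (nat_lit 4)) b))))
noncomputable def mk0 (c m : Nat) : Nat := mk1 c (Nat.shiftLeft (nat_lit 1) (vert m)) (msk (nbl m))
/-- Adjacency lists; the vertex `v` is stored at the index `2 ^ (v + 64) % 523`. -/
def adj : T :=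
  open T in
 (N (N (N (N (N (N (N (N (N (N (L 511)
 (L 511))
 (N (L 511)
 (L 0))) (N (N (L 511)
 (L 0))
 (N (L 1741669245003306498369793765848760752880)
 (L 0)))) (N (N (N (L 511)
 (L 0))
 (N (L 511)
 (L 0))) (N (N (L 1890595110411076567295192235265081826031)
 (L 0))
 (N (L 13180707659691579741470790214)
 (L 0))))) (N (N (N (N (L 511)
 (L 0))
 (N (L 30770218089662139405)
 (L 0))) (N (N (L 511)
 (L 0))
 (N (L 511)
 (L 0)))) (N (N (N (L 1895901656659432310698493488806049422062)
 (L 0))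
 (N (L 1576625213385017169823093803959482456787)
 (L 0))) (N (N (L 8304353848388502732000252485)
 (L 0))
 (N (L 1619537374430580598592020210621404896031)
 (L 0)))))) (N (N (N (N (N (L 511)
 (L 0))
 (N (L 14762097160937774980704281908584)
 (L 0))) (N (N (L 30192629285564189708)
 (L 0))
 (N (L 2312628682117722927122980738792921126)
 (L 0)))) (N (N (N (L 511)
 (L 0))
 (N (L 14801556954214307160871609292141)
 (L 0))) (N (N (L 511)
 (L 0))
 (N (L 12866717840479047673190800020608)
 (L 0))))) (N (N (N (N (L 1720733295834779661506111044090519722733)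
 (L 0))
 (N (L 31629544344283152318694773652)
 (L 0))) (N (N (L 1581931765919864547065215660790031735506)
 (L 0))
 (N (L 16066646339772777477529935596091632135642811330269857179957)
 (L 0)))) (N (N (N (L 8226831184482472405407928900)
 (L 0))
 (N (L 93118868501031864160094)
 (L 0))) (N (N (L 1624843922062876236896526852983938816798)
 (L 0))
 (N (L 83189988051388795948)
 (L 0))))))) (N (N (N (N (N (N (L 511)
 (L 511))
 (N (L 511)
 (L 0))) (N (N (L 14722560299521647454115263223143)
 (L 0))
 (N (L 1057680387738008287256337943523182863047875)
 (L 0)))) (N (N (N (L 65231468379874577419)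
 (L 0))
 (N (L 119482003691461524065797)
 (L 0))) (N (N (L 6748157690675214534043783717)
 (L 0))
 (N (L 19546594035942454428053836466)
 (L 0))))) (N (N (N (N (L 511)
 (L 0))
 (N (L 8325479107392550648206058634417784)
 (L 0))) (N (N (L 7561406360546532732554826842756972)
 (L 0))
 (N (L 9384734396733254517248017)
 (L 0)))) (N (N (N (L 511)
 (L 0))
 (N (L 12468966735372298019388275283004)
 (L 0))) (N (N (L 11948722296714037616306734077055)
 (L 0))
 (N (L 62980642289817609237844342)
 (L 0)))))) (N (N (N (N (N (L 2183544437213806245960490861716007951084)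
 (L 0))
 (N (L 25046414282270236286229549684)
 (L 0))) (N (N (L 31552172796104573816437543827)
 (L 0))
 (N (L 13129175785491669697247530849414)
 (L 0)))) (N (N (N (L 2881554041807885158947366908459636945)
 (L 0))
 (N (L 3137494774745819740004220818461)
 (L 0))) (N (N (L 16115590602816730986892578584878681285876381138496493168948)
 (L 0))
 (N (L 61160699646103817775206792)
 (L 0))))) (N (N (N (N (L 2620516919183729323096953583982147)
 (L 0))
 (N (L 296655595211071829669942061763804747053887894032454197099982801991019164892)
 (L 0))) (N (N (L 92823143011395020951389)
 (L 0))
 (N (L 1033626929289553229898583791073266266610946)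
 (L 0)))) (N (N (N (L 1608903590949737876713555631827491150621)
 (L 0))
 (N (L 21467432829653591998989505252)
 (L 0))) (N (N (L 166914305563140869163)
 (L 0))
 (N (L 67768315756618441281163)
 (L 0)))))))) (N (N (N (N (N (N (N (L 511)
 (L 3818480187335530855372487034651154757))
 (N (L 511)
 (L 0))) (N (N (L 511)
 (L 0))
 (N (L 8534400705161233978146706797287005)
 (L 0)))) (N (N (N (L 14682713954276285699571008722278)
 (L 0))
 (N (L 13478661276787641474049315410)
 (L 0))) (N (N (L 1054952822295573303117040635732996213284034)
 (L 0))
 (N (L 59610152104791827427262389394427549187033563327194427)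
 (L 0))))) (N (N (N (N (L 64653879524337683466)
 (L 0))
 (N (L 115316765628995730296690)
 (L 0))) (N (N (L 119186278197426634378756)
 (L 0))
 (N (L 3787347999028258547636976087748958620)
 (L 0)))) (N (N (N (L 6670635026766958740065489444)
 (L 0))
 (N (L 511)
 (L 0))) (N (N (L 21402597067363297042803741361)
 (L 0))
 (N (L 511)
 (L 0)))))) (N (N (N (N (N (L 511)
 (L 0))
 (N (L 16827287135245311456179769979)
 (L 0))) (N (N (L 8365206601442672287084892615923319)
 (L 0))
 (N (L 1002499028653857972812930619737895735622358153149924008569993788256479)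
 (L 0)))) (N (N (N (L 7541084259338960021679952101742443)
 (L 0))
 (N (L 31227701624147296416986059671)
 (L 0))) (N (N (L 9536146265444085488521232)
 (L 0))
 (N (L 511)
 (L 0))))) (N (N (N (N (L 511)
 (L 0))
 (N (L 228666254165596048720)
 (L 0))) (N (N (L 191123636063340995710443268774202611640163899)
 (L 0))
 (N (L 5363655733683775996652480839489184)
 (L 0)))) (N (N (N (L 11909185435299063013417050543230)
 (L 0))
 (N (L 61009332553497489767944531)
 (L 0))) (N (N (L 62829230836871745701286261)
 (L 0))
 (N (L 13872056256495644473511285333)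
 (L 0))))))) (N (N (N (N (N (N (L 46175750577561770504999147)
 (L 0))
 (N (L 511)
 (L 0))) (N (N (L 18701875380018407884911661683)
 (L 0))
 (N (L 1081988674338169776705587937900930988809496)
 (L 0)))) (N (N (N (L 31474650132194039885939659666)
 (L 0))
 (N (L 511)
 (L 0))) (N (N (L 8609844510475335224917597541509)
 (L 0))
 (N (L 323749872426912653)
 (L 0))))) (N (N (N (N (L 2871149205372815182762270728913557712)
 (L 0))
 (N (L 197016075274363194701)
 (L 0))) (N (N (L 3097803382329384495675599098908)
 (L 0))
 (N (L 353104968906361532)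
 (L 0)))) (N (N (N (L 43454464352356453775200563)
 (L 0))
 (N (L 42071432641401919278642)
 (L 0))) (N (N (L 61009288193162360875094407)
 (L 0))
 (N (L 1954636371293622234249301517280066755373)
 (L 0)))))) (N (N (N (N (N (L 2600194817976156612222078842967618)
 (L 0))
 (N (L 81737789716268254029340487757719133592854072)
 (L 0))) (N (N (L 195644917493761679762246042610754173227951604147512880797133573335152178395)
 (L 0))
 (N (L 1101645434766573897420020847273785683958937)
 (L 0)))) (N (N (N (L 94304652763293492776796)
 (L 0))
 (N (L 511)
 (L 0))) (N (N (L 1145223532854035829622268452711051476884737)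
 (L 0))
 (N (L 511)
 (L 0))))) (N (N (N (N (L 1614210138582033515018062274190025071388)
 (L 0))
 (N (L 1134616013572906831342882138275359398557)
 (L 0))) (N (N (L 8205446745776893767300294784538339)
 (L 0))
 (N (L 110537199795477129777056)
 (L 0)))) (N (N (N (L 166414252068588260394)
 (L 0))
 (N (L 511)
 (L 0))) (N (N (L 67472590266985893039754)
 (L 0))
 (N (L 20981847949052918353429)
 (L 0))))))))) (N (N (N (N (N (N (N (N (L 511)
 (L 28443397553962001065796981517))
 (N (L 7316111553623980144196639032989508)
 (L 0))) (N (N (L 511)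
 (L 0))
 (N (L 283167525493273605666759584458440330379503558949)
 (L 0)))) (N (N (N (L 511)
 (L 0))
 (N (L 511)
 (L 0))) (N (N (L 8514078603953956415177015704065628)
 (L 0))
 (N (L 7994029481501994762415372784747)
 (L 0))))) (N (N (N (N (L 14643177092860158172981990036837)
 (L 0))
 (N (L 37099100515913367439773870)
 (L 0))) (N (N (L 29751300002523144176225407569)
 (L 0))
 (N (L 2632140661955914863253589791586637973)
 (L 0)))) (N (N (N (L 285280536911203188316347475313568548038860481)
 (L 0))
 (N (L 2203896844178083969930478671926929808037)
 (L 0))) (N (N (L 59797588977546738362198048308683594195315819630896442)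
 (L 0))
 (N (L 854282472440740240067120754336608234151175)
 (L 0)))))) (N (N (N (N (N (L 242279285646205914121)
 (L 0))
 (N (L 3134400680231446353902729221153)
 (L 0))) (N (N (L 115021040134960840576881)
 (L 0))
 (N (L 6073293025356654955859821668898519)
 (L 0)))) (N (N (N (L 33357076210005596704259)
 (L 0))
 (N (L 511)
 (L 0))) (N (N (L 3776943083209981319669040220349503899)
 (L 0))
 (N (L 511)
 (L 0))))) (N (N (N (N (L 5229085604261391407954252323)
 (L 0))
 (N (L 511)
 (L 0))) (N (N (L 511)
 (L 0))
 (N (L 7979255482972190158004595807401)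
 (L 0)))) (N (N (N (L 21480119139822842903555740336)
 (L 0))
 (N (L 2184133196657938545175607624577312742055)
 (L 0))) (N (N (L 511)
 (L 0))
 (N (L 981717761057852873613721174706338390334759)
 (L 0))))))) (N (N (N (N (N (N (L 511)
 (L 970211048501236249994407323694844235898053))
 (N (L 69940101364913802247)
 (L 0))) (N (N (L 16749764472492202629882548858)
 (L 0))
 (N (L 15502592890713362581860183725118)
 (L 0)))) (N (N (N (L 4518996181342086297723320800417398)
 (L 0))
 (N (L 4181851157474496867828939183135)
 (L 0))) (N (N (L 999135604458031722385522231009691133354649498913143180911387311976670)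
 (L 0))
 (N (L 22174502710177188051658412774)
 (L 0))))) (N (N (N (N (L 7642535689173308997360446071002986)
 (L 0))
 (N (L 14880939557593473751812374025583)
 (L 0))) (N (N (L 31149876728784119425067619222)
 (L 0))
 (N (L 92529723355988478349152)
 (L 0)))) (N (N (N (L 46802649325600686295945231)
 (L 0))
 (N (L 1306709365453742486948051243651145571029)
 (L 0))) (N (N (L 511)
 (L 0))
 (N (L 93353847505474840649214738101437144903634084799218)
 (L 0)))))) (N (N (N (N (N (L 511)
 (L 0))
 (N (L 2687540695611493889)
 (L 0))) (N (N (L 228088665310059187535)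
 (L 0))
 (N (L 42702221445475059568180)
 (L 0)))) (N (N (N (L 189727111901370853442713524396658719313485370)
 (L 0))
 (N (L 511)
 (L 0))) (N (N (L 1833051112506108056587999136563344382623)
 (L 0))
 (N (L 511)
 (L 0))))) (N (N (N (N (L 10035358647990817584596013693)
 (L 0))
 (N (L 2141568752990338028205596457128249105305)
 (L 0))) (N (N (L 51488784047199701967049042)
 (L 0))
 (N (L 237346063074418167125)
 (L 0)))) (N (N (N (L 115908216617048329867124)
 (L 0))
 (N (L 511)
 (L 0))) (N (N (L 13794534182883177099545727572)
 (L 0))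
 (N (L 3921849580179980588193976710026847)
 (L 0)))))))) (N (N (N (N (N (N (N (L 46024340279793609452261610)
 (L 1066064879314303974472074375821860941012214))
 (N (L 511)
 (L 0))) (N (N (L 511)
 (L 0))
 (N (L 24265062448464863263713383179)
 (L 0)))) (N (N (N (L 18617716611762994698454143602)
 (L 0))
 (N (L 7356438843388180754525054133180226)
 (L 0))) (N (N (L 585145312274458758206622311291238467215040279)
 (L 0))
 (N (L 148435748426127560062)
 (L 0))))) (N (N (N (N (L 31397278584015461383682429841)
 (L 0))
 (N (L 511)
 (L 0))) (N (N (L 511)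
 (L 0))
 (N (L 511)
 (L 0)))) (N (N (N (L 8570153208785749682045448000644)
 (L 0))
 (N (L 231630350658975179817134297902018579760792658211)
 (L 0))) (N (N (L 223514389638693113228)
 (L 0))
 (N (L 150734833866908192122)
 (L 0)))))) (N (N (N (N (N (L 2975054129074698872547190606328879311)
 (L 0))
 (N (L 511)
 (L 0))) (N (N (L 7478172528387678258095953323939660)
 (L 0))
 (N (L 1853603359487276606236277296442977884925)
 (L 0)))) (N (N (N (L 12565152836016972153478174856219)
 (L 0))
 (N (L 511)
 (L 0))) (N (N (L 358657644385667771)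
 (L 0))
 (N (L 23885444985445640096738300691)
 (L 0))))) (N (N (N (N (L 43303052899414996875088178)
 (L 0))
 (N (L 59447728550513356574298)
 (L 0))) (N (N (L 41703066330621215624753)
 (L 0))
 (N (L 146105195167836998800)
 (L 0)))) (N (N (N (L 60857876744715690329461126)
 (L 0))
 (N (L 4421815496066041654218729182313)
 (L 0))) (N (N (L 1959953303519634791092187094703772605228)
 (L 0))
 (N (L 24000898860707105793880003172)
 (L 0))))))) (N (N (N (N (N (N (L 3606410839596507769026798778963521)
 (L 0))
 (N (L 91644852725680635088739)
 (L 0))) (N (N (L 144971046259813958172752126833041545542050056774199)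
 (L 0))
 (N (L 217213853450145090904)
 (L 0)))) (N (N (N (L 194761491609599050697943308876559402507294591111458959648734173588475213018)
 (L 0))
 (N (L 40590657596305053097857196)
 (L 0))) (N (N (L 1098917869303766850796328322468210033106072)
 (L 0))
 (N (L 8413398441467412674943323280494)
 (L 0))))) (N (N (N (N (L 94010080192970823126875)
 (L 0))
 (N (L 58663394348370661724344399)
 (L 0))) (N (N (L 511)
 (L 0))
 (N (L 41217167787825071001079884)
 (L 0)))) (N (N (N (L 1142283706275459122824443779365184493853952)
 (L 0))
 (N (L 2552753044333151074286010744640231571)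
 (L 0))) (N (N (L 511)
 (L 0))
 (N (L 59617360845426924910154113)
 (L 0)))))) (N (N (N (N (N (L 1090139469193734037679139132051595500805403)
 (L 0))
 (N (L 358756714513627583901660748621380051250896575)
 (L 0))) (N (N (L 1129288737238768098518088553924653669020)
 (L 0))
 (N (L 42236986643837741034443171)
 (L 0)))) (N (N (N (L 8185203874541977425479792872068834)
 (L 0))
 (N (L 6830433937202204588946051585529507)
 (L 0))) (N (N (L 110241474301442240057247)
 (L 0))
 (N (L 127014780178950347854496328612863377515914107167550)
 (L 0))))) (N (N (N (N (L 3486145226014723352806106183845271593)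
 (L 0))
 (N (L 65778405496854072135651631270291715079731433947047224)
 (L 0))) (N (N (L 511)
 (L 0))
 (N (L 2264351820844018603753884652787273)
 (L 0)))) (N (N (N (L 8780122614772282886718632154249)
 (L 0))
 (N (L 870488700143455191937738045554178553339141)
 (L 0))) (N (N (L 20686122455018028633620)
 (L 0))
 (N (L 39836304425722968762568885)
 (L 0)))))))))) (N (N (N (N (N (N (N (N (N (L 511)
 (L 1068792444797383005678368691005024244817143))
 (N (L 28520919626421546926548980492)
 (L 0))) (N (N (L 7295789452416702583483150094948163)
 (L 0))
 (N (L 146702990672823324031)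
 (L 0)))) (N (N (N (L 511)
 (L 0))
 (N (L 511)
 (L 0))) (N (N (L 282453898919355142686813013614781854437387739428)
 (L 0))
 (N (L 149006584119867837819)
 (L 0))))) (N (N (N (N (L 511)
 (L 0))
 (N (L 1044483991834779244655018787829613223222526)
 (L 0))) (N (N (L 511)
 (L 0))
 (N (L 24109714301212459401233175316)
 (L 0)))) (N (N (N (L 59152003021380010921563)
 (L 0))
 (N (L 145527610718953360529)
 (L 0))) (N (N (L 7954337877877255138171842729066)
 (L 0))
 (N (L 24078421229465226547384734309)
 (L 0)))))) (N (N (N (N (N (L 91940578215317461520228)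
 (L 0))
 (N (L 93418629211498147008345)
 (L 0))) (N (N (L 40742069046994718774218925)
 (L 0))
 (N (L 8453089893682427611883630056559)
 (L 0)))) (N (N (N (L 29673777338614862045507654224)
 (L 0))
 (N (L 41284626379109216868028493)
 (L 0))) (N (N (L 2621779038989835852776678223766067348)
 (L 0))
 (N (L 59465949394737267840536962)
 (L 0))))) (N (N (N (N (L 286677071643879943630923640806615256626568896)
 (L 0))
 (N (L 42237282369331775924162980)
 (L 0))) (N (N (L 1376057802201033857467657187884225665700)
 (L 0))
 (N (L 127380867821060417138902709081833030319596254946111)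
 (L 0)))) (N (N (N (L 65965111616008179641816234614925069074985959991600441)
 (L 0))
 (N (L 3219965185996561459170244215313994)
 (L 0))) (N (N (L 851554906957740591463025016366663397727494)
 (L 0))
 (N (L 39967929465825621357727926)
 (L 0))))))) (N (N (N (N (N (N (L 241701696790669052936)
 (L 693642212786746878645457121005402425023686))
 (N (L 15541357852402219687661948638271)
 (L 0))) (N (N (L 3094709076310405902975239492640)
 (L 0))
 (N (L 22252024782634482121186693863)
 (L 0)))) (N (N (N (L 14920631160923065470876551222640)
 (L 0))
 (N (L 91055707589416162430817)
 (L 0))) (N (N (L 6052971078891587157909281103992534)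
 (L 0))
 (N (L 92989187116512950313041241804713894363437975069427)
 (L 0))))) (N (N (N (N (L 33061350715970707017218)
 (L 0))
 (N (L 42996792887707372310069)
 (L 0))) (N (N (L 511)
 (L 0))
 (N (L 511)
 (L 0)))) (N (N (N (L 2152223386788021795887396776543747185562)
 (L 0))
 (N (L 237923651929955061078)
 (L 0))) (N (N (L 511)
 (L 0))
 (N (L 55662694916654123896416)
 (L 0)))))) (N (N (N (N (N (L 5151559405495776152643670562)
 (L 0))
 (N (L 4474037272689562796314044347012824)
 (L 0))) (N (N (L 511)
 (L 0))
 (N (L 511)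
 (L 0)))) (N (N (N (L 511)
 (L 0))
 (N (L 7632496420705919138157112169642)
 (L 0))) (N (N (L 7939563879642598438949008512168)
 (L 0))
 (N (L 872710733502878718366145414070763203861800)
 (L 0))))) (N (N (N (N (L 36948279361034069075808431)
 (L 0))
 (N (L 3486535610732234202379229298539894934)
 (L 0))) (N (N (L 2184122827878959320042257365481992329894)
 (L 0))
 (N (L 949343987108988735684098929923589045968136)
 (L 0)))) (N (N (N (L 511)
 (L 0))
 (N (L 8343745274267397579744771347564)
 (L 0))) (N (N (L 978995491758134366836089553015117797891366)
 (L 0))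
 (N (L 24650707428359388384691786510)
 (L 0)))))))) (N (N (N (N (N (N (N (L 511)
 (L 511))
 (N (L 967494096072936218718290635518712220359876)
 (L 0))) (N (N (L 69362512509376941062)
 (L 0))
 (N (L 19623814467240659597057381043)
 (L 0)))) (N (N (N (L 8325518827501694125324602007705209)
 (L 0))
 (N (L 9600729265653714423314)
 (L 0))) (N (N (L 12508658335758478880993311953981)
 (L 0))
 (N (L 59812820396612871267455351)
 (L 0))))) (N (N (N (N (L 28521622962203177514598814325)
 (L 0))
 (N (L 13168867087181255240119663613063)
 (L 0))) (N (N (L 4142159553553456416901449454622)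
 (L 0))
 (N (L 222934544576689311113)
 (L 0)))) (N (N (N (L 297539015380036880924024628462432227384975002785265088348715556771109418205)
 (L 0))
 (N (L 1036354515541819540803914011692422668311811)
 (L 0))) (N (N (L 21389910166900483181282251493)
 (L 0))
 (N (L 54735113491197601779340)
 (L 0)))))) (N (N (N (N (N (L 7622213587965736286485571329988457)
 (L 0))
 (N (L 2323033518707837640691730499981498407)
 (L 0))) (N (N (L 14841248557543898879935786489198)
 (L 0))
 (N (L 12827103910041919718394252088449)
 (L 0)))) (N (N (N (L 31072656296330740951643575189)
 (L 0))
 (N (L 17448286649821833168660540929449364355089857777674559433014)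
 (L 0))) (N (N (L 92233997866351635140447)
 (L 0))
 (N (L 83765476543363894317)
 (L 0))))) (N (N (N (N (L 46651828744113892908552206)
 (L 0))
 (N (L 511)
 (L 0))) (N (N (L 1301402812918895110295070019468228221652)
 (L 0))
 (N (L 3163051065366872719315962450747562272)
 (L 0)))) (N (N (N (L 511)
 (L 0))
 (N (L 13258230322446940363269952071)
 (L 0))) (N (N (L 1746996561902109394353009101957205121777)
 (L 0))
 (N (L 511)
 (L 0))))))) (N (N (N (N (N (N (L 511)
 (L 0))
 (N (L 1084705605956638481215670560335376148651289)
 (L 0))) (N (N (L 298413034730501213696)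
 (L 0))
 (N (L 322626167256763278)
 (L 0)))) (N (N (N (L 197593664129900055886)
 (L 0))
 (N (L 351976865689668285)
 (L 0))) (N (N (L 42366581670277852352051)
 (L 0))
 (N (L 16066028966431652414031524238638)
 (L 0))))) (N (N (N (N (L 83134313877437817421194861350645725676805689)
 (L 0))
 (N (L 1043946120219630256834338878727790813813914)
 (L 0))) (N (N (L 511)
 (L 0))
 (N (L 511)
 (L 0)))) (N (N (N (L 1827723795607305161200830707529151109790)
 (L 0))
 (N (L 42085279467654057648230817)
 (L 0))) (N (N (L 511)
 (L 0))
 (N (L 10963001868941755108724758)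
 (L 0)))))) (N (N (N (N (N (L 9957835984084791651738456700)
 (L 0))
 (N (L 4594462776502922166166566270572256)
 (L 0))) (N (N (L 31304922056600674890410103704)
 (L 0))
 (N (L 511)
 (L 0)))) (N (N (N (L 51337372594253838430523729)
 (L 0))
 (N (L 5383898606728833288016457616021153)
 (L 0))) (N (N (L 61160744006443353304469844)
 (L 0))
 (N (L 29346404675175537755057246806)
 (L 0))))) (N (N (N (N (L 115612491123013440147315)
 (L 0))
 (N (L 110832925280698712985501)
 (L 0))) (N (N (L 511)
 (L 0))
 (N (L 511)
 (L 0)))) (N (N (N (L 13556183940695923604767068755)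
 (L 0))
 (N (L 118262894545139382932388994633650614557618177680188)
 (L 0))) (N (N (L 3901567093053665010613798647830110)
 (L 0))
 (N (L 3828885023770903063012486871490910534)
 (L 0))))))))) (N (N (N (N (N (N (N (N (L 45871464031073358871548137)
 (L 1035822398182591119566545955526910949121224))
 (N (L 144976793049827714839294926501179051372971437220597)
 (L 0))) (N (N (L 511)
 (L 0))
 (N (L 84883588399434016706146)
 (L 0)))) (N (N (N (L 511)
 (L 0))
 (N (L 1747277635569505665796574660522658011946)
 (L 0))) (N (N (L 24187842606309546948808643338)
 (L 0))
 (N (L 24039432208601963839411786512)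
 (L 0))))) (N (N (N (N (L 16655516314437717492055488386161)
 (L 0))
 (N (L 59768772298368399006945668)
 (L 0))) (N (N (L 7336116742180903193811565195138881)
 (L 0))
 (N (L 82525318839382247411384)
 (L 0)))) (N (N (N (L 583743359577358007243430995404515038667710230)
 (L 0))
 (N (L 14886291723864026204909032039)
 (L 0))) (N (N (L 147858159570590666109)
 (L 0))
 (N (L 1035870655371458275358814307293141565103353)
 (L 0)))))) (N (N (N (N (N (L 320378774096268176)
 (L 0))
 (N (L 16145257431768818130939240977712)
 (L 0))) (N (N (L 511)
 (L 0))
 (N (L 4253119671413993921810456)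
 (L 0)))) (N (N (N (L 511)
 (L 0))
 (N (L 83353667412192634834520)
 (L 0))) (N (N (L 511)
 (L 0))
 (N (L 3787427699158436262101009930289862984)
 (L 0))))) (N (N (N (N (L 11591407949050651774450637100163)
 (L 0))
 (N (L 105238417433288994344495)
 (L 0))) (N (N (L 230918120603869811424003163831773136960579084578)
 (L 0))
 (N (L 511)
 (L 0)))) (N (N (N (L 224089722287763082635)
 (L 0))
 (N (L 135171543870680501390)
 (L 0))) (N (N (L 150157249418007743865)
 (L 0))
 (N (L 511)
 (L 0))))))) (N (N (N (N (N (N (L 2985418480073465975421312754806003918)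
 (L 0))
 (N (L 690160594961148950748994341300610924158157)
 (L 0))) (N (N (L 511)
 (L 0))
 (N (L 733631677699807675579142503317576134319308)
 (L 0)))) (N (N (N (L 7457929810387356177134863782942539)
 (L 0))
 (N (L 511)
 (L 0))) (N (N (L 1848276042667546828621254280286723463932)
 (L 0))
 (N (L 669067239559908337734354594619478197771467)
 (L 0))))) (N (N (N (N (L 12549399778480459453122562331674)
 (L 0))
 (N (L 7437528326576995750665914149656394)
 (L 0))) (N (N (L 511)
 (L 0))
 (N (L 511)
 (L 0)))) (N (N (N (L 359785747602361018)
 (L 0))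
 (N (L 2044389097309316440870332819329718721275)
 (L 0))) (N (N (L 23962664827600952013596496658)
 (L 0))
 (N (L 666350287131608151715734148692316426722506)
 (L 0)))))) (N (N (N (N (N (L 16184948733458401426401016632625)
 (L 0))
 (N (L 4404531124359854821117977)
 (L 0))) (N (N (L 83648260211330215562841)
 (L 0))
 (N (L 7417285608576673669704824608659273)
 (L 0)))) (N (N (N (L 41407340836586325904944)
 (L 0))
 (N (L 511)
 (L 0))) (N (N (L 135749128319580949647)
 (L 0))
 (N (L 511)
 (L 0))))) (N (N (N (N (L 60706465291774233429348741)
 (L 0))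
 (N (L 91378565922967952789177)
 (L 0))) (N (N (L 4382278785765639327654248682600)
 (L 0))
 (N (L 2039061820975177708044386313474422921978)
 (L 0)))) (N (N (N (L 1741960703343493108953689083098952162091)
 (L 0))
 (N (L 24116954871357324456932758289)
 (L 0))) (N (N (L 84587862883469040750179)
 (L 0))
 (N (L 1033105463669402671039383484792175685180617)
 (L 0)))))))) (N (N (N (N (N (N (N (L 3586088738388935058151924037948992)
 (L 695807286366547114905097468212826890181831))
 (N (L 45720642876194051917615336)
 (L 0))) (N (N (L 91351433079052988862306)
 (L 0))
 (N (L 144612175778724759726237892549292455612044871082740)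
 (L 0)))) (N (N (N (L 117176106107954767169057187553919204452282145071670)
 (L 0))
 (N (L 511)
 (L 0))) (N (N (L 216636264594608196951)
 (L 0))
 (N (L 55957280973586403069537)
 (L 0))))) (N (N (N (N (L 4494359373896545209126760568657625)
 (L 0))
 (N (L 511)
 (L 0))) (N (N (L 7672187722394349472617778500779)
 (L 0))
 (N (L 872716464987353848273701532975541651004713)
 (L 0)))) (N (N (N (L 3496940526550208607521065006300682391)
 (L 0))
 (N (L 946627034721332751475568394281096203672841)
 (L 0))) (N (N (L 8383359506345684632246543766637)
 (L 0))
 (N (L 24728230091114749002212758287)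
 (L 0)))))) (N (N (N (N (N (L 93713201781820816658266)
 (L 0))
 (N (L 16615824710516677041127998657648)
 (L 0))) (N (N (L 15528117726881549207933006)
 (L 0))
 (N (L 59920183749058056076562819)
 (L 0)))) (N (N (N (L 511)
 (L 0))
 (N (L 18308869976033448915904729892334964926011732701176196538431624789852600296250308148544)
 (L 0))) (N (N (L 3240287286901204831713704787990091)
 (L 0))
 (N (L 40119339763598171867041975)
 (L 0))))) (N (N (N (N (L 1046988683167502372178271445126165426887935)
 (L 0))
 (N (L 24032494459057147484374979349)
 (L 0))) (N (N (L 2542348207743338592037316128078403730)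
 (L 0))
 (N (L 14963512155163352867166163558)
 (L 0)))) (N (N (N (L 511)
 (L 0))
 (N (L 149584168568768286076)
 (L 0))) (N (N (L 147280579528360217984)
 (L 0))
 (N (L 1033143069119271038175723742325586488368376)
 (L 0))))))) (N (N (N (N (N (N (L 1087422537575265333169056509617150340963610)
 (L 0))
 (N (L 321502479266417551)
 (L 0))) (N (N (L 357365645504161696637569308464227794743893694)
 (L 0))
 (N (L 16105720268121235709493299893551)
 (L 0)))) (N (N (N (L 1046673706471817416948703588920513588681883)
 (L 0))
 (N (L 511)
 (L 0))) (N (N (L 42085575193148092537950626)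
 (L 0))
 (N (L 11114413321887618645282839)
 (L 0))))) (N (N (N (N (L 4615180167438698891968302628919009)
 (L 0))
 (N (L 511)
 (L 0))) (N (N (L 6810111835995146231937217061688994)
 (L 0))
 (N (L 29423927337928646581354435159)
 (L 0)))) (N (N (N (L 111128650774733602705310)
 (L 0))
 (N (L 511)
 (L 0))) (N (N (L 118628982187249452216795375102620267361300325458749)
 (L 0))
 (N (L 3777022862723064054461010093450107207)
 (L 0)))))) (N (N (N (N (N (L 3496509478866092801792513346448627752)
 (L 0))
 (N (L 11630944507643875665514737833090)
 (L 0))) (N (N (L 17497230539450688310125537357021541203959934930877401033015)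
 (L 0))
 (N (L 104942691939254104624686)
 (L 0)))) (N (N (N (L 511)
 (L 0))
 (N (L 3173455981184847125533184302147688737)
 (L 0))) (N (N (L 2244029719637037341610873232660040)
 (L 0))
 (N (L 511)
 (L 0))))) (N (N (N (N (L 8731859576265895994977158075528)
 (L 0))
 (N (L 222359211927619341706)
 (L 0))) (N (N (L 867761113891188726592134369166145082924292)
 (L 0))
 (N (L 54735691080044548738701)
 (L 0)))) (N (N (N (L 9896454759688604143123)
 (L 0))
 (N (L 59964231849558734804013432)
 (L 0))) (N (N (L 39685483268591870584885428)
 (L 0))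
 (N (L 511)
 (L 0)))))))))))

noncomputable def MM (c j : Nat) : Nat := mk0 c (T.get adj j)
noncomputable def MI (it : Nat) : Nat := MM (Nat.land it (nat_lit 3)) (Nat.shiftRight it (nat_lit 2))
noncomputable def NB1 (x : Nat) : Nat := Nat.lor (Nat.shiftLeft x (nat_lit 2152)) (Nat.shiftLeft x (nat_lit 4240))
noncomputable def NB (it : Nat) : Nat :=
  NB1 (fld (Nat.land it (nat_lit 3)) (Nat.shiftLeft (nat_lit 1) (vert (T.get adj (Nat.shiftRight it (nat_lit 2))))))

noncomputable def litm (k : Nat) : Nat → Nat :=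
  Nat.rec (fun _ => nat_lit 0) (fun _ ih x =>
    Nat.lor (Nat.shiftLeft (nat_lit 1) (Nat.land x (nat_lit 8191))) (ih (Nat.shiftRight x (nat_lit 13)))) k
noncomputable def litR (r : Nat) : Nat :=
  Nat.shiftLeft (litm (Nat.land r (nat_lit 31)) (Nat.shiftRight r (nat_lit 5))) (nat_lit 64)
noncomputable def strm (r : Nat) : Nat :=
  Nat.shiftRight r (Nat.add (nat_lit 5) (Nat.mul (nat_lit 13) (Nat.land r (nat_lit 31))))
noncomputable def QQ (tr : T) (j : Nat) : Nat := litR (T.get tr j)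
noncomputable def MASK : Nat := Nat.sub (Nat.pow (nat_lit 2) (nat_lit 2152)) (nat_lit 1)
noncomputable def MSKN : Nat := Nat.sub (Nat.pow (nat_lit 2) (nat_lit 4240)) (nat_lit 1)

abbrev Rn := (Nat → Bool) → Nat → Nat → Nat → Bool

noncomputable def i3 (rec : Rn) (k : Nat → Bool) (X Z S : Nat) : Bool := rec k S Z X
noncomputable def i2 (rec : Rn) (k : Nat → Bool) (S Z X m : Nat) : Bool :=
  frc (Nat.succ (Nat.lor S m)) (i3 rec k X Z)
noncomputable def pickK (rec : Rn) (k : Nat → Bool) (S Z X L j : Nat) : Bool :=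
  Bool.rec
    (Bool.rec (i2 rec k S Z X (MM (nat_lit 0) j)) (i2 rec k S Z X (MM (nat_lit 1) j))
      (Nat.ble (Nat.pow (nat_lit 2) (nat_lit 586)) L))
    (Bool.rec (i2 rec k S Z X (MM (nat_lit 2) j)) (i2 rec k S Z X (MM (nat_lit 3) j))
      (Nat.ble (Nat.pow (nat_lit 2) (nat_lit 1630)) L))
    (Nat.ble (Nat.pow (nat_lit 2) (nat_lit 1108)) L)
noncomputable def i1 (rec : Rn) (k : Nat → Bool) (S X W Z : Nat) : Bool :=
  frc (Nat.mod (Nat.xor W Z) (nat_lit 523)) (pickK rec k S Z X (Nat.xor W Z))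
noncomputable def i0 (rec : Rn) (k : Nat → Bool) (S X W : Nat) : Bool :=
  frc (Nat.land W (Nat.sub W (nat_lit 18446744073709551616))) (i1 rec k S X W)

noncomputable def kbr (rec : Rn) (k : Nat → Bool) (S it X : Nat) : Bool :=
  frc (Nat.lor (Nat.add S (nat_lit 1099511627776)) (NB it)) (i3 rec k X (nat_lit 0))
noncomputable def br (rec : Rn) (k : Nat → Bool) (S X it : Nat) : Bool :=
  i2 rec (kbr rec k S it) S (nat_lit 0) X (MI it)
noncomputable def h7 (rec : Rn) (k : Nat → Bool) (S X W : Nat) : Bool := rec k S W X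
noncomputable def h5 (rec : Rn) (k : Nat → Bool) (S X L Z : Nat) : Bool :=
  Bool.rec
    (Bool.rec false (frc (Nat.lor (Nat.shiftRight L (nat_lit 2088)) Z) (h7 rec k S X)) (Nat.ble L MSKN))
    (frc (Nat.succ (Nat.lor S (Nat.lor (Nat.shiftLeft L (nat_lit 2088)) (Nat.shiftLeft L (nat_lit 4176)))))
      (i3 rec k X (nat_lit 0)))
    (Nat.ble L MASK)
noncomputable def h4 (rec : Rn) (k : Nat → Bool) (S X R Z : Nat) : Bool :=
  Bool.rec false (h5 rec k S X (Nat.xor R Z) Z) (Nat.ble Z (nat_lit 18446744073709551615))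
noncomputable def h3 (rec : Rn) (k : Nat → Bool) (S X R : Nat) : Bool :=
  Bool.rec (frc (Nat.land R (Nat.sub R (nat_lit 18446744073709551616))) (h4 rec k S X R)) (k X)
    (Nat.ble R (nat_lit 18446744073709551615))
noncomputable def h2 (rec : Rn) (k : Nat → Bool) (S X q : Nat) : Bool :=
  frc (Nat.xor (Nat.lor q (Nat.xor S (Nat.land S (nat_lit 18446744073709551615)))) S) (h3 rec k S X)
noncomputable def h1 (tr : T) (kk : Nat) (rec : Rn) (k : Nat → Bool) (S X it : Nat) : Bool :=
  Bool.rec false (h2 rec k S X (QQ tr (Nat.sub it (nat_lit 2092))))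
    (Nat.ble (Nat.succ (Nat.sub it (nat_lit 2092))) kk)
noncomputable def op3 (tr : T) (kk : Nat) (rec : Rn) (k : Nat → Bool) (S X it : Nat) : Bool :=
  Bool.rec (h1 tr kk rec k S X it) (br rec k S X it) (Nat.ble it (nat_lit 2091))
noncomputable def op2 (tr : T) (kk : Nat) (rec : Rn) (k : Nat → Bool) (S X X1 : Nat) : Bool :=
  frc (Nat.land X (nat_lit 8191)) (op3 tr kk rec k S X1)
noncomputable def op1 (tr : T) (kk : Nat) (rec : Rn) (k : Nat → Bool) (S X : Nat) : Bool :=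
  frc (Nat.shiftRight X (nat_lit 13)) (op2 tr kk rec k S X)
noncomputable def o3 (tr : T) (kk : Nat) (rec : Rn) (k : Nat → Bool) (S X W : Nat) : Bool :=
  Bool.rec (i0 rec k S X W) (op1 tr kk rec k S X) (Nat.ble W (nat_lit 18446744073709551615))
noncomputable def o2 (tr : T) (kk : Nat) (rec : Rn) (k : Nat → Bool) (S X U : Nat) : Bool :=
  Bool.rec (k X) (frc (Nat.land (Nat.xor S U) MASK) (o3 tr kk rec k S X))
    (Nat.beq (Nat.land U (Nat.shiftRight U (nat_lit 522))) (nat_lit 0))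
noncomputable def o1 (tr : T) (kk : Nat) (rec : Rn) (k : Nat → Bool) (S X : Nat) : Bool :=
  o2 tr kk rec k S X (Nat.land (Nat.shiftRight S (nat_lit 2610))
    (Nat.land (Nat.shiftRight S (nat_lit 3132)) (Nat.shiftRight S (nat_lit 3654))))
noncomputable def stp (tr : T) (kk : Nat) (rec : Rn) (k : Nat → Bool) (S W X : Nat) : Bool :=
  Bool.rec (i0 rec k S X W) (o1 tr kk rec k S X) (Nat.ble W (nat_lit 18446744073709551615))
noncomputable def run (tr : T) (kk fuel : Nat) : Rn :=
  Nat.rec (fun _ _ _ _ => false) (fun _ => stp tr kk) fuel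
noncomputable def fin (_ : Nat) : Bool := true

noncomputable def c3 (tr : T) (kk S X : Nat) : Bool := run tr kk (nat_lit 65536) fin S (nat_lit 0) X
noncomputable def c2 (tr : T) (kk r S : Nat) : Bool := frc (strm r) (c3 tr kk S)
noncomputable def c1 (base : Nat) (tr : T) (kk r : Nat) : Bool :=
  frc (Nat.lor (Nat.shiftLeft kk (nat_lit 24)) (Nat.lor base (Nat.lor (litR r)
    (Nat.shiftLeft (Nat.shiftRight (litR r) (nat_lit 2152)) (nat_lit 4240))))) (c2 tr kk r)
noncomputable def chk (base : Nat) (tr : T) (kk : Nat) : Bool := frc (T.get tr kk) (c1 base tr kk)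
noncomputable def chkN (base : Nat) (tr : T) (ih : Nat → Bool) (kk : Nat) : Bool :=
  Bool.rec false (frc (Nat.succ kk) ih) (chk base tr kk)
/-- Check the lemmas `kk, …, kk + len - 1`. -/
noncomputable def chkR (base : Nat) (tr : T) (len : Nat) : Nat → Bool :=
  Nat.rec (fun _ => true) (fun _ => chkN base tr) len

/-- The points: colour (2 bits) and four coordinates (10 bits each, shifted by 512). -/
def ptT : T :=
  open T in
 (N (N (N (N (N (N (N (N (N (L 2201374164992)
 (L 2196865275964))
 (N (L 2188275365999)
 (L 2205555898381))) (N (N (L 2192507406289)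
 (L 2201172838400))
 (N (L 2196865300566)
 (L 0)))) (N (N (N (L 2196789803068)
 (L 2192557737985))
 (N (L 2209737607074)
 (L 2196965939214))) (N (N (L 2201122506659)
 (L 2218377873435))
 (N (L 2192582903737)
 (L 0))))) (N (N (N (N (L 2192582903979)
 (L 2192557713433))
 (N (L 2205430044780)
 (L 2201223145499))) (N (N (L 2183917471721)
 (L 2201198004441))
 (N (L 2209712441369)
 (L 0)))) (N (N (N (L 2196789778471)
 (L 2205455210532))
 (N (L 2192532596688)
 (L 0))) (N (N (L 2192507406339)
 (L 2188350838894))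
 (N (L 2214019979303)
 (L 0)))))) (N (N (N (N (N (L 2205329381438)
 (L 2209737607216))
 (N (L 2201122531402)
 (L 2205505542278))) (N (N (L 2205404903343)
 (L 2188350863396))
 (N (L 2196840134719)
 (L 0)))) (N (N (N (L 2201122506896)
 (L 2201147697155))
 (N (L 2196840134573)
 (L 0))) (N (N (L 2196814968774)
 (L 2201197979793))
 (N (L 2205430044638)
 (L 0))))) (N (N (N (N (L 2205379737686)
 (L 2201147672553))
 (N (L 2196814968820)
 (L 2192658401377))) (N (N (L 2201147672456)
 (L 2201273501842))
 (N (L 2188250200100)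
 (L 0)))) (N (N (N (L 2201097340857)
 (L 2196865300470))
 (N (L 2201172838305)
 (L 0))) (N (N (L 2201097365505)
 (L 2188376029295))
 (N (L 2196840134669)
 (L 0))))))) (N (N (N (N (N (N (L 2196739471422)
 (L 2205430044685))
 (N (L 2188225009701)
 (L 2209813104761))) (N (N (L 2196814944172)
 (L 2188300507244))
 (N (L 2192532572186)
 (L 0)))) (N (N (N (L 2192507406434)
 (L 2214045169702))
 (N (L 2205404878836)
 (L 2201248335995))) (N (N (L 2192582903691)
 (L 2209787963418))
 (N (L 2196840134623)
 (L 0))))) (N (N (N (N (L 2196789778516)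
 (L 2209737631768))
 (N (L 2192557737888)
 (L 2205530732679))) (N (N (L 2192532547489)
 (L 2201298667594))
 (N (L 2205430044735)
 (L 0)))) (N (N (N (L 2205404903535)
 (L 2192582903787))
 (N (L 2209712416721)
 (L 0))) (N (N (L 2214020003951)
 (L 2201273477195))
 (N (L 2205455235134)
 (L 0)))))) (N (N (N (N (N (L 2192507406480)
 (L 2183992969264))
 (N (L 2196814968870)
 (L 2188300531892))) (N (N (L 2192557713290)
 (L 2201223145544))
 (N (L 2205455210582)
 (L 0)))) (N (N (N (L 2192557738130)
 (L 2188275341351))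
 (N (L 2183992969122)
 (L 0))) (N (N (L 2205404878791)
 (L 2188376004646))
 (N (L 2201172862907)
 (L 0))))) (N (N (N (N (L 2205455235231)
 (L 2196865275868))
 (N (L 2205430044588)
 (L 2201273501697))) (N (N (L 2201097340907)
 (L 2209762797617))
 (N (L 2201147672649)
 (L 0)))) (N (N (N (L 2196865275772)
 (L 2205455210487))
 (N (L 2201122506800)
 (L 0))) (N (N (L 2188250175598)
 (L 2196915632262))
 (N (L 2192557738035)
 (L 0)))))))) (N (N (N (N (N (N (N (L 2196739446725)
 (L 2205430069237))
 (N (L 2188225034207)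
 (L 2209813104522))) (N (N (L 2192507406384)
 (L 2188300531605))
 (N (L 2192532572136)
 (L 0)))) (N (N (N (L 2192507406242)
 (L 2214045145055))
 (N (L 2209737607266)
 (L 2201248335753))) (N (N (L 2201122506850)
 (L 2209787914218))
 (N (L 2192582903882)
 (L 0))))) (N (N (N (N (L 2196789802927)
 (L 2209737582568))
 (N (L 2209687275520)
 (L 2205530707838))) (N (N (L 2183917471771)
 (L 2201298667449))
 (N (L 2205430069190)
 (L 0)))) (N (N (N (L 2205404878741)
 (L 2209737607170))
 (N (L 2192532547634)
 (L 0))) (N (N (L 2214019979156)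
 (L 2201273526202))
 (N (L 2205455210437)
 (L 0)))))) (N (N (N (N (N (L 2192507406192)
 (L 2183992969168))
 (N (L 2196814944222)
 (L 2188300506956))) (N (N (L 2205404878933)
 (L 2201223194553))
 (N (L 2205455234989)
 (L 0)))) (N (N (N (L 2192557737842)
 (L 2188275365853))
 (N (L 2196840110167)
 (L 0))) (N (N (L 2196814944318)
 (L 2188376029148))
 (N (L 2205430069287)
 (L 0))))) (N (N (N (N (L 2205455210341)
 (L 2201147672603))
 (N (L 2196814944268)
 (L 2201172863048))) (N (N (L 2201147672699)
 (L 2209762748371))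
 (N (L 2201147672506)
 (L 0)))) (N (N (N (L 2201097341003)
 (L 2196865275918))
 (N (L 2201122506704)
 (L 0))) (N (N (L 2188250199959)
 (L 2196915607423))
 (N (L 2192557737938)
 (L 0))))))) (N (N (N (N (N (N (L 2205329405895)
 (L 2209737607120))
 (N (L 2201122482107)
 (L 2205505566589))) (N (N (L 2196814968917)
 (L 2188350838749))
 (N (L 2196840110021)
 (L 0)))) (N (N (N (L 2201122506609)
 (L 2201147648001))
 (N (L 2205404903438)
 (L 0))) (N (N (L 2192582903929)
 (L 2201198028659))
 (N (L 2196840110117)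
 (L 0))))) (N (N (N (N (L 2205379712942)
 (L 2201172838355))
 (N (L 2192557738080)
 (L 2192658401184))) (N (N (L 2192532596835)
 (L 2201273501554))
 (N (L 2188250175452)
 (L 0)))) (N (N (N (L 2201172838258)
 (L 2192582903832))
 (N (L 2209712465971)
 (L 0))) (N (N (L 2201097316355)
 (L 2188376004501))
 (N (L 2196840110071)
 (L 0)))))) (N (N (N (N (N (L 2192582903641)
 (L 2192557762537))
 (N (L 2205430069140)
 (L 2201223194603))) (N (N (L 2192557762682)
 (L 2201198004011))
 (N (L 2209712441323)
 (L 0)))) (N (N (N (L 2196789802973)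
 (L 2205455235039))
 (N (L 2183992969314)
 (L 0))) (N (N (L 2205404903485)
 (L 2188350863254))
 (N (L 2214020003805)
 (L 0))))) (N (N (N (N (L 2196789778375)
 (L 2196865300516))
 (N (L 2205430069332)
 (L 2196965963766))) (N (N (L 2201097340953)
 (L 2218377873385))
 (N (L 2201122506754)
 (L 0)))) (N (N (N (L 2196865300613)
 (L 2205455235084))
 (N (L 2196865275822)
 (L 0))) (N (N (L 2188275341204)
 (L 2205555873783))
 (N (L 2196865300420)
 (L 0))))))))) (N (N (N (N (N (N (N (N (L 2200971511808)
 (L 2205480376381))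
 (N (L 2214070335597)
 (L 2192532572041))) (N (N (L 2209838270416)
 (L 2214045169557))
 (N (L 2205480400983)
 (L 0)))) (N (N (N (L 2205555898431)
 (L 2209787938816))
 (N (L 2192608069538)
 (L 2201097340810))) (N (N (L 2201223169954)
 (L 2192557713386))
 (N (L 2209762772923)
 (L 0))))) (N (N (N (N (L 2209762773160)
 (L 2209787914264))
 (N (L 2196915607660)
 (L 2196814944126))) (N (N (L 2218428205035)
 (L 2201047009211))
 (N (L 2192633235483)
 (L 0)))) (N (N (N (L 2205555873829)
 (L 2196890441767))
 (N (L 2209813129171)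
 (L 0))) (N (N (L 2209838270466)
 (L 2201072199610))
 (N (L 2188325672997)
 (L 0)))))) (N (N (N (N (N (L 2197016270909)
 (L 2192608069681))
 (N (L 2201223194698)
 (L 2214045144908))) (N (N (L 2196940797869)
 (L 2201122531256))
 (N (L 2205505566780)
 (L 0)))) (N (N (N (L 2201223170192)
 (L 2201198028801))
 (N (L 2205505566639)
 (L 0))) (N (N (L 2205530732486)
 (L 2213969672159))
 (N (L 2196915607518)
 (L 0))))) (N (N (N (N (L 2196965963862)
 (L 2201198004202))
 (N (L 2205530732532)
 (L 2201172813753))) (N (N (L 2201198004107)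
 (L 2192582879185))
 (N (L 2214095501348)
 (L 0)))) (N (N (N (L 2201248335803)
 (L 2205480400886))
 (N (L 2201172838496)
 (L 0))) (N (N (L 2201248360450)
 (L 2205430044542))
 (N (L 2205505566735)
 (L 0))))))) (N (N (N (N (N (N (L 2205606230077)
 (L 2196915607564))
 (N (L 2214120642598)
 (L 2196840134527))) (N (N (L 2205530707884)
 (L 2213994813404))
 (N (L 2209813104665)
 (L 0)))) (N (N (N (L 2209838270562)
 (L 2188300531750))
 (N (L 2196940773367)
 (L 0))) (N (N (L 2209762772873)
 (L 2201147697008))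
 (N (L 2205505566685)
 (L 0))))) (N (N (N (N (L 2205555873879)
 (L 2192608094233))
 (N (L 2209787938720)
 (L 2209687275424))) (N (N (L 2209813079970)
 (L 2201072174963))
 (N (L 2196915607614)
 (L 0)))) (N (N (N (L 2196940798061)
 (L 2209762772969))
 (N (L 2192633210835)
 (L 0))) (N (N (L 2188325697645)
 (L 2213969647510))
 (N (L 2196890466365)
 (L 0)))))) (N (N (N (N (N (L 2209838270608)
 (L 2218352707633))
 (N (L 2205530732582)
 (L 2201122531304))) (N (N (L 2209787914123)
 (L 2201147672361))
 (N (L 2196890441813)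
 (L 0)))) (N (N (N (L 2209787938962)
 (L 2214070310949))
 (N (L 2218352707490)
 (L 0))) (N (N (L 2196940773317)
 (L 2213994837911))
 (N (L 2201172813898)
 (L 0))))) (N (N (N (N (L 2196890466460)
 (L 2205480376284))
 (N (L 2196915607468)
 (L 2205379737591))) (N (N (L 2201248335848)
 (L 2183967803371))
 (N (L 2201198004299)
 (L 0)))) (N (N (N (L 2205480376188)
 (L 2196890441717))
 (N (L 2201223170096)
 (L 0))) (N (N (L 2214095476846)
 (L 2196789778421))
 (N (L 2209787938866)
 (L 0)))))))) (N (N (N (N (N (N (N (L 2205606205383)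
 (L 2196915632116))
 (N (L 2214120667100)
 (L 2192532572283))) (N (N (L 2209838270512)
 (L 2214045145196))
 (N (L 2209813104619)
 (L 0)))) (N (N (N (L 2209838270371)
 (L 2188300507103))
 (N (L 2192608069731)
 (L 2201097341049))) (N (N (L 2201223170146)
 (L 2192557762587))
 (N (L 2209762773065)
 (L 0))))) (N (N (N (N (L 2205555898285)
 (L 2192608045032))
 (N (L 2192658401280)
 (L 2196814968967))) (N (N (L 2218428205081)
 (L 2201047009353))
 (N (L 2196915632070)
 (L 0)))) (N (N (N (L 2196940773270)
 (L 2192608069634))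
 (N (L 2209813080113)
 (L 0))) (N (N (L 2188325672855)
 (L 2201072150602))
 (N (L 2196890441671)
 (L 0)))))) (N (N (N (N (N (L 2209838270321)
 (L 2218352707536))
 (N (L 2205530707934)
 (L 2214045169844))) (N (N (L 2196940773463)
 (L 2201122482248))
 (N (L 2196890466223)
 (L 0)))) (N (N (N (L 2209787938675)
 (L 2214070335454))
 (N (L 2205505542228)
 (L 0))) (N (N (L 2205530708030)
 (L 2213969647653))
 (N (L 2196915632166)
 (L 0))))) (N (N (N (N (L 2196890441574)
 (L 2201198004249))
 (N (L 2205530707980)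
 (L 2201072175104))) (N (N (L 2201198004345)
 (L 2192582928434))
 (N (L 2201198004152)
 (L 0)))) (N (N (N (L 2201248335945)
 (L 2205480376334))
 (N (L 2201223170001)
 (L 0))) (N (N (L 2214095501206)
 (L 2205430069382))
 (N (L 2209787938770)
 (L 0))))))) (N (N (N (N (N (N (L 2197016295367)
 (L 2192608069584))
 (N (L 2201223145402)
 (L 2196840110212))) (N (N (L 2205530732629)
 (L 2213994838052))
 (N (L 2205505542087)
 (L 0)))) (N (N (N (L 2201223169904)
 (L 2201197979650))
 (N (L 2196940797965)
 (L 0))) (N (N (L 2209762773115)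
 (L 2201147648147))
 (N (L 2205505542183)
 (L 0))))) (N (N (N (N (L 2196965939119)
 (L 2201172838450))
 (N (L 2209787938912)
 (L 2209687275617))) (N (N (L 2209813129313)
 (L 2201072175250))
 (N (L 2214095476701)
 (L 0)))) (N (N (N (L 2201172838546)
 (L 2209762773019))
 (N (L 2192633260080)
 (L 0))) (N (N (L 2201248311296)
 (L 2213969672301))
 (N (L 2205505542133)
 (L 0)))))) (N (N (N (N (N (L 2209762772826)
 (L 2209787963368))
 (N (L 2196915632020)
 (L 2201122482202))) (N (N (L 2209787963514)
 (L 2201147672795))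
 (N (L 2192633235433)
 (L 0)))) (N (N (N (L 2205555898335)
 (L 2196890466269))
 (N (L 2218352707683)
 (L 0))) (N (N (L 2196940798015)
 (L 2213994813550))
 (N (L 2188325697502)
 (L 0))))) (N (N (N (N (L 2205555873733)
 (L 2205480400933))
 (N (L 2196915632212)
 (L 2205379713039))) (N (N (L 2201248335898)
 (L 2183967803417))
 (N (L 2201223170051)
 (L 0)))) (N (N (N (L 2205480401028)
 (L 2196890466319))
 (N (L 2205480376238)
 (L 0))) (N (N (L 2214070310807)
 (L 2196789803023))
 (N (L 2205480400836)
 (L 0))))))))))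

/-- The centre has colour 0 and the vertices of the hexagon have the given colours. -/
noncomputable def hexb (c0 c1 c2 c3 c4 c5 : Nat) : Nat := Nat.lor (Nat.lor (Nat.lor (Nat.lor (Nat.lor (Nat.lor (MM (nat_lit 0) (nat_lit 343))
    (MM c0 (nat_lit 142)))
    (MM c1 (nat_lit 180)))
    (MM c2 (nat_lit 45)))
    (MM c3 (nat_lit 71)))
    (MM c4 (nat_lit 284)))
    (MM c5 (nat_lit 90))

/-! ### Soundness of the checker -/

theorem frc_eq {α : Type} (b : Nat) (f : Nat → α) : frc b f = f b := by cases b <;> rfl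

/-- The meaning of bit `x + 64` of a state for a colouring `κ`. -/
def Pm (κ : ℕ → ℕ) (x : ℕ) : Prop :=
  (x / 522 < 4 ∧ κ (x % 522) = x / 522) ∨ (4 ≤ x / 522 ∧ κ (x % 522) ≠ x / 522 % 4)

def Good (κ : ℕ → ℕ) (S : ℕ) : Prop := ∀ x, S.testBit (x + 64) = true → Pm κ x
def GoodW (κ : ℕ → ℕ) (W : ℕ) : Prop := ∀ x, W.testBit (x + 64) = true → x < 2088 ∧ Pm κ x

theorem Good.or {κ : ℕ → ℕ} {a b : ℕ} (ha : Good κ a) (hb : Good κ b) : Good κ (a ||| b) := by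
  intro x hx
  rw [Nat.testBit_or, Bool.or_eq_true] at hx
  exact hx.elim (ha x) (hb x)

theorem testBit_hi (S x : ℕ) : S.testBit (x + 64) = (S / 2 ^ 64).testBit x := by
  rw [Nat.testBit_div_two_pow]

theorem Good.add {κ : ℕ → ℕ} {S a : ℕ} (h : S % 2 ^ 64 + a < 2 ^ 64) (hS : Good κ S) : Good κ (S + a) := by
  intro x hx
  apply hS
  rw [testBit_hi] at hx ⊢
  rwa [show (S + a) / 2 ^ 64 = S / 2 ^ 64 by omega] at hx

theorem low_bit (r : ℕ) (hr : r ≠ 0) : ∃ i, r.testBit i = true ∧ r ^^^ (r &&& (r - 1)) = 2 ^ i := by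
  induction r using Nat.strong_induction_on with
  | _ r ih =>
    rcases Nat.even_or_odd' r with ⟨m, h | h⟩
    · have hm : m ≠ 0 := by omega
      obtain ⟨i, hi, he⟩ := ih m (by omega) hm
      refine ⟨i + 1, ?_, ?_⟩
      · rw [Nat.testBit_succ, h]; simpa using hi
      · apply Nat.eq_of_testBit_eq
        intro j
        have hj := congrArg (fun t => t.testBit (j - 1)) he
        simp only [Nat.testBit_xor, Nat.testBit_and] at hj ⊢
        cases j with
        | zero =>
          rw [Nat.testBit_zero, Nat.testBit_zero, Nat.testBit_zero]
          have : r % 2 = 0 := by omega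
          simp [this, pow_succ]
        | succ j =>
          simp only [Nat.add_sub_cancel] at hj
          rw [Nat.testBit_succ, Nat.testBit_succ, Nat.testBit_succ, show r / 2 = m by omega,
            show (r - 1) / 2 = m - 1 by omega, show 2 ^ (i + 1) / 2 = 2 ^ i by
              rw [pow_succ]; omega]
          exact hj
    · refine ⟨0, ?_, ?_⟩
      · rw [Nat.testBit_zero]; simp; omega
      · apply Nat.eq_of_testBit_eq
        intro j
        simp only [Nat.testBit_xor, Nat.testBit_and]
        cases j with
        | zero =>
          rw [Nat.testBit_zero, Nat.testBit_zero, Nat.testBit_zero]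
          have h1 : r % 2 = 1 := by omega
          have h2 : (r - 1) % 2 = 0 := by omega
          simp [h1, h2]
        | succ j =>
          rw [Nat.testBit_succ, Nat.testBit_succ, Nat.testBit_succ,
            show (r - 1) / 2 = r / 2 by omega]
          simp

/-- Extraction of the lowest bit above the low 64 bits. -/
theorem low_bit64 (W : ℕ) (hW : 2 ^ 64 ≤ W) :
    ∃ x, W.testBit (x + 64) = true ∧ W ^^^ (W &&& (W - 2 ^ 64)) = 2 ^ (x + 64) := by
  have hr : W / 2 ^ 64 ≠ 0 := by omega
  obtain ⟨x, hx, he⟩ := low_bit _ hr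
  refine ⟨x, by rwa [testBit_hi], ?_⟩
  have h1 : (W ^^^ (W &&& (W - 2 ^ 64))) / 2 ^ 64 = 2 ^ x := by
    rw [Nat.xor_div_two_pow, Nat.and_div_two_pow, show (W - 2 ^ 64) / 2 ^ 64 = W / 2 ^ 64 - 1 by omega, he]
  have h2 : (W ^^^ (W &&& (W - 2 ^ 64))) % 2 ^ 64 = 0 := by
    rw [Nat.xor_mod_two_pow, Nat.and_mod_two_pow, show (W - 2 ^ 64) % 2 ^ 64 = W % 2 ^ 64 by omega,
      Nat.and_self, Nat.xor_self]
  rw [pow_add]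
  omega

theorem land_sub_lt (W : ℕ) : W &&& (W - 2 ^ 64) ≤ W := Nat.and_le_left


def XOK (κ : ℕ → ℕ) (X : ℕ) : Prop := ∀ y, X.testBit y = true → y < 2088 ∧ κ (y % 522) ≠ y / 522

theorem XOK.or {κ : ℕ → ℕ} {a b : ℕ} (ha : XOK κ a) (hb : XOK κ b) : XOK κ (a ||| b) := by
  intro x hx
  rw [Nat.testBit_or, Bool.or_eq_true] at hx
  exact hx.elim (ha x) (hb x)

theorem XOK.good1 {κ : ℕ → ℕ} {X : ℕ} (h : XOK κ X) : Good κ (X <<< 2152) := by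
  intro x hx
  rw [Nat.testBit_shiftLeft, Bool.and_eq_true, decide_eq_true_eq] at hx
  obtain ⟨h1, h2⟩ := hx
  obtain ⟨h3, h4⟩ := h _ h2
  obtain ⟨y, rfl⟩ : ∃ y, x = y + 2088 := ⟨x - 2088, by omega⟩
  rw [show y + 2088 + 64 - 2152 = y by omega] at h3 h4
  right
  rw [show (y + 2088) % 522 = y % 522 by omega, show (y + 2088) / 522 = y / 522 + 4 by omega]
  refine ⟨by omega, fun h => h4 ?_⟩
  omega

theorem XOK.good2 {κ : ℕ → ℕ} {X : ℕ} (h : XOK κ X) : Good κ (X <<< 4240) := by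
  intro x hx
  rw [Nat.testBit_shiftLeft, Bool.and_eq_true, decide_eq_true_eq] at hx
  obtain ⟨h1, h2⟩ := hx
  obtain ⟨h3, h4⟩ := h _ h2
  obtain ⟨y, rfl⟩ : ∃ y, x = y + 4176 := ⟨x - 4176, by omega⟩
  rw [show y + 4176 + 64 - 4240 = y by omega] at h3 h4
  right
  rw [show (y + 4176) % 522 = y % 522 by omega, show (y + 4176) / 522 = y / 522 + 8 by omega]
  refine ⟨by omega, fun h => h4 ?_⟩
  omega

theorem fld_bit {c b y : ℕ} (h : (fld c b).testBit y = true) : 522 * c ≤ y ∧ b.testBit (y - 522 * c) = true := by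
  have h' : (b <<< (522 * c)).testBit y = true := h
  rw [Nat.testBit_shiftLeft, Bool.and_eq_true, decide_eq_true_eq] at h'
  exact h'

theorem one_bit {v y : ℕ} (h : (Nat.shiftLeft (nat_lit 1) v).testBit y = true) : y = v := by
  have h' : (1 <<< v).testBit y = true := h
  rw [Nat.one_shiftLeft, Nat.testBit_two_pow, decide_eq_true_eq] at h'
  exact h'.symm

theorem msk_bit {l : List ℕ} {y : ℕ} (h : (msk l).testBit y = true) : y ∈ l := by
  induction l with
  | nil =>
    have : (0 : ℕ).testBit y = true := h
    simp at this
  | cons a l ih =>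
    have h' : ((Nat.shiftLeft (nat_lit 1) a) ||| msk l).testBit y = true := h
    rw [Nat.testBit_or, Bool.or_eq_true] at h'
    rcases h' with h' | h'
    · rw [one_bit h']; simp
    · simp [ih h']

theorem fld_one_XOK {κ : ℕ → ℕ} {c v : ℕ} (hc : c < 4) (hv : v < 522) (h : κ v ≠ c) :
    XOK κ (fld c (Nat.shiftLeft (nat_lit 1) v)) := by
  intro y hy
  obtain ⟨h1, h2⟩ := fld_bit hy
  have h3 := one_bit h2
  have h4 : y = 522 * c + v := by omega
  subst h4
  rw [show (522 * c + v) % 522 = v by omega, show (522 * c + v) / 522 = c by omega]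
  exact ⟨by omega, h⟩

theorem dec_lt (k : ℕ) : ∀ x, ∀ u ∈ dec k x, u < 512 := by
  induction k with
  | zero => intro x u hu; exact absurd hu (by change u ∉ []; simp)
  | succ k ih =>
    intro x u hu
    have hu' : u ∈ (x &&& 511) :: dec k (x >>> 9) := hu
    rcases List.mem_cons.1 hu' with rfl | h
    · exact Nat.lt_of_le_of_lt Nat.and_le_right (by norm_num)
    · exact ih _ _ h

theorem vert_lt (m : ℕ) : vert m < 512 := by
  change m &&& 511 < 512
  exact Nat.lt_of_le_of_lt Nat.and_le_right (by norm_num)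

theorem mk0_good {κ : ℕ → ℕ} {c m : ℕ} (hc : c < 4) (hv : κ (vert m) = c)
    (hn : ∀ u ∈ nbl m, κ u ≠ κ (vert m)) : Good κ (mk0 c m) := by
  have hlt := vert_lt m
  have hX : XOK κ (Nat.lor (fld c (msk (nbl m))) (Nat.lor (fld ((c + 1) % 4) (Nat.shiftLeft (nat_lit 1) (vert m)))
      (Nat.lor (fld ((c + 2) % 4) (Nat.shiftLeft (nat_lit 1) (vert m)))
       (fld ((c + 3) % 4) (Nat.shiftLeft (nat_lit 1) (vert m)))))) := by
    refine XOK.or ?_ (XOK.or ?_ (XOK.or ?_ ?_))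
    · intro y hy
      obtain ⟨h1, h2⟩ := fld_bit hy
      have h3 := msk_bit h2
      have h4 : y - 522 * c < 512 := dec_lt _ _ _ h3
      have h5 := hn _ h3
      rw [hv] at h5
      obtain ⟨u, rfl⟩ : ∃ u, y = 522 * c + u := ⟨y - 522 * c, by omega⟩
      rw [show 522 * c + u - 522 * c = u by omega] at h4 h5
      rw [show (522 * c + u) % 522 = u by omega, show (522 * c + u) / 522 = c by omega]
      exact ⟨by omega, h5⟩
    all_goals exact fld_one_XOK (by omega) (by omega) (by omega)
  refine Good.or ?_ (Good.or hX.good1 hX.good2)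
  intro x hx
  have hx' : ((fld c (Nat.shiftLeft (nat_lit 1) (vert m))) <<< 64).testBit (x + 64) = true := hx
  rw [Nat.testBit_shiftLeft, Bool.and_eq_true, Nat.add_sub_cancel] at hx'
  obtain ⟨h1, h2⟩ := fld_bit hx'.2
  have h3 := one_bit h2
  have h4 : x = 522 * c + vert m := by omega
  left
  subst h4
  rw [show (522 * c + vert m) % 522 = vert m by omega, show (522 * c + vert m) / 522 = c by omega]
  exact ⟨hc, hv⟩

theorem shl_low (x n : ℕ) (hn : 64 ≤ n) : (x <<< n) % 2 ^ 64 = 0 := by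
  rw [Nat.shiftLeft_eq, ← Nat.sub_add_cancel hn, pow_add, ← mul_assoc, Nat.mul_mod_left]

theorem or_low (a b : ℕ) (h : b % 2 ^ 64 = 0) : (a ||| b) % 2 ^ 64 = a % 2 ^ 64 := by
  rw [Nat.or_mod_two_pow, h, Nat.or_zero]

theorem mk0_low (c m : ℕ) : mk0 c m % 2 ^ 64 = 0 := by
  have : ∀ d x : ℕ, (d <<< 64 ||| (x <<< 2152 ||| x <<< 4240)) % 2 ^ 64 = 0 := by
    intro d x
    rw [or_low _ _ (by rw [or_low _ _ (shl_low _ _ (by norm_num))]; exact shl_low _ _ (by norm_num))]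
    exact shl_low _ _ (le_refl _)
  exact this _ _

theorem NB1_low (x : ℕ) : NB1 x % 2 ^ 64 = 0 := by
  change (x <<< 2152 ||| x <<< 4240) % 2 ^ 64 = 0
  rw [or_low _ _ (shl_low _ _ (by norm_num))]; exact shl_low _ _ (by norm_num)


theorem frc_true {b : ℕ} {f : ℕ → Bool} (h : frc b f = true) : f b = true := by rwa [frc_eq] at h

theorem brec_true {a b t : Bool} (h : Bool.rec (motive := fun _ => Bool) a b t = true) :
    (t = true ∧ b = true) ∨ (t = false ∧ a = true) := by cases t <;> simp_all

theorem ble_false {a b : ℕ} (h : Nat.ble a b = false) : b < a := by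
  by_contra h'
  rw [Nat.ble_eq_true_of_le (Nat.le_of_not_lt h')] at h
  exact absurd h (by simp)

/-- There is enough room in the low 64 bits for `f` further steps. -/
def Bd (f S : ℕ) : Prop := S % 2 ^ 64 + f * 2 ^ 41 < 2 ^ 64

def RS (κ : ℕ → ℕ) (f : ℕ) (rec : Rn) : Prop :=
  ∀ k S W X, Bd f S → rec k S W X = true → ¬ (Good κ S ∧ GoodW κ W) ∧ ∃ X', k X' = true

theorem GoodW_zero (κ : ℕ → ℕ) : GoodW κ 0 := by
  intro x hx; simp at hx

theorem Bd.succ_or {f S m : ℕ} (h : Bd (f + 1) S) (hm : m % 2 ^ 64 = 0) : Bd f (Nat.succ (S ||| m)) := by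
  unfold Bd at *
  have := or_low S m hm
  rw [Nat.succ_eq_add_one]
  omega

theorem Bd.mono {f S : ℕ} (h : Bd (f + 1) S) : Bd f S :=
  lt_of_le_of_lt (Nat.add_le_add_left (Nat.mul_le_mul_right _ (Nat.le_succ f)) _) h

theorem good_succ_or {κ : ℕ → ℕ} {f S m : ℕ} (h : Bd (f + 1) S) (hm : m % 2 ^ 64 = 0) (hS : Good κ S)
    (hG : Good κ m) : Good κ (Nat.succ (S ||| m)) := by
  have h' : S % 2 ^ 64 + (f + 1) * 2 ^ 41 < 2 ^ 64 := h
  have h2 := Good.add (a := 1) (by rw [or_low S m hm]; omega) (Good.or hS hG)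
  exact h2

theorem i2_s {κ : ℕ → ℕ} {f : ℕ} {rec : Rn} (hr : RS κ f rec) {k : ℕ → Bool} {S Z X m : ℕ}
    (hB : Bd (f + 1) S) (hm : m % 2 ^ 64 = 0) (h : i2 rec k S Z X m = true) :
    ¬ (Good κ S ∧ GoodW κ Z ∧ Good κ m) ∧ ∃ X', k X' = true := by
  unfold i2 at h
  have h0 := frc_true h
  have h1 : rec k (Nat.succ (S ||| m)) Z X = true := h0
  obtain ⟨h2, h3⟩ := hr _ _ _ _ (hB.succ_or hm) h1
  exact ⟨fun ⟨a, b, c⟩ => h2 ⟨good_succ_or hB hm a c, b⟩, h3⟩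

theorem ble_pow {n L : ℕ} (h : Nat.ble (Nat.pow (nat_lit 2) n) L = true) : 2 ^ n ≤ L :=
  Nat.le_of_ble_eq_true h

theorem ble_pow' {n L : ℕ} (h : Nat.ble (Nat.pow (nat_lit 2) n) L = false) : L < 2 ^ n := ble_false h

set_option exponentiation.threshold 5000 in
theorem pickK_s {rec : Rn} {k : ℕ → Bool} {S Z X L j : ℕ} (h : pickK rec k S Z X L j = true) :
    ∃ c, i2 rec k S Z X (MM c j) = true ∧ ∀ x, x < 2088 → L = 2 ^ (x + 64) → c = x / 522 := by
  have key : ∀ n x, 2 ^ n ≤ 2 ^ (x + 64) ↔ n ≤ x + 64 := fun n x =>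
    Nat.pow_le_pow_iff_right (by norm_num)
  have key2 : ∀ n x, 2 ^ (x + 64) < 2 ^ n ↔ x + 64 < n := fun n x =>
    Nat.pow_lt_pow_iff_right (by norm_num)
  unfold pickK at h
  rcases brec_true h with ⟨h1, h2⟩ | ⟨h1, h2⟩ <;> rcases brec_true h2 with ⟨h3, h4⟩ | ⟨h3, h4⟩
  · refine ⟨3, h4, fun x hx hL => ?_⟩
    have h5 := ble_pow h3
    rw [hL, key] at h5
    have h5' : 1630 ≤ x + 64 := h5
    omega
  · refine ⟨2, h4, fun x hx hL => ?_⟩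
    have h5 := ble_pow' h3
    have h6 := ble_pow h1
    rw [hL, key2] at h5
    rw [hL, key] at h6
    have h5' : x + 64 < 1630 := h5
    have h6' : 1108 ≤ x + 64 := h6
    omega
  · refine ⟨1, h4, fun x hx hL => ?_⟩
    have h5 := ble_pow h3
    have h6 := ble_pow' h1
    rw [hL, key] at h5
    rw [hL, key2] at h6
    have h5' : 586 ≤ x + 64 := h5
    have h6' : x + 64 < 1108 := h6
    omega
  · refine ⟨0, h4, fun x hx hL => ?_⟩
    have h5 := ble_pow' h3
    rw [hL, key2] at h5
    have h5' : x + 64 < 586 := h5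
    omega

theorem GoodW.and {κ : ℕ → ℕ} {W a : ℕ} (h : GoodW κ W) : GoodW κ (W &&& a) := by
  intro x hx
  rw [Nat.testBit_and, Bool.and_eq_true] at hx
  exact h x hx.1

theorem MM_low (c j : ℕ) : MM c j % 2 ^ 64 = 0 := mk0_low _ _

theorem Pm_lt {κ : ℕ → ℕ} {x : ℕ} (hx : x < 2088) (h : Pm κ x) : κ (x % 522) = x / 522 := by
  rcases h with h | h
  · exact h.2
  · omega

/-- The colouring `κ` is proper for the graph given by `adj`. -/
structure OK (κ : ℕ → ℕ) : Prop where
  lt : ∀ v, κ v < 4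
  nbr : ∀ j, ∀ u ∈ nbl (adj.get j), κ u ≠ κ (vert (adj.get j))
  idx : ∀ x < 2088, κ (vert (adj.get (2 ^ (x + 64) % 523))) = κ (x % 522)

set_option exponentiation.threshold 5000 in
theorem i0_s {κ : ℕ → ℕ} (ok : OK κ) {f : ℕ} {rec : Rn} (hr : RS κ f rec) {k : ℕ → Bool} {S X W : ℕ}
    (hB : Bd (f + 1) S) (hW : 2 ^ 64 ≤ W) (h : i0 rec k S X W = true) :
    ¬ (Good κ S ∧ GoodW κ W) ∧ ∃ X', k X' = true := by
  obtain ⟨x, hx, hL⟩ := low_bit64 W hW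
  have h1 : pickK rec k S (W &&& (W - 2 ^ 64)) X (W ^^^ (W &&& (W - 2 ^ 64)))
    ((W ^^^ (W &&& (W - 2 ^ 64))) % 523) = true := by
      unfold i0 at h
      have h' := frc_true h
      unfold i1 at h'
      exact frc_true h'
  obtain ⟨c, hc, hcx⟩ := pickK_s h1
  obtain ⟨h2, h3⟩ := i2_s hr hB (MM_low _ _) hc
  refine ⟨fun ⟨hS, hG⟩ => h2 ⟨hS, hG.and, ?_⟩, h3⟩
  obtain ⟨hx1, hx2⟩ := hG x hx
  have hc2 := hcx x hx1 hL
  rw [hL]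
  refine mk0_good (by omega) ?_ (ok.nbr _)
  rw [ok.idx x hx1, Pm_lt hx1 hx2, hc2]

theorem br_s {κ : ℕ → ℕ} (ok : OK κ) {f : ℕ} {rec : Rn} (hr : RS κ f rec) {k : ℕ → Bool} {S X it : ℕ}
    (hB : Bd (f + 1) S) (h : br rec k S X it = true) :
    ¬ Good κ S ∧ ∃ X', k X' = true := by
  obtain ⟨h1, X1, h2⟩ := i2_s hr hB (MM_low _ _) h
  have h3 : rec k ((S + 1099511627776) ||| NB it) 0 X1 = true := by
    unfold kbr at h2
    have h0 := frc_true h2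
    exact h0
  have hlow := or_low (S + 1099511627776) (NB it) (NB1_low _)
  have hB' : S % 2 ^ 64 + (f + 1) * 2 ^ 41 < 2 ^ 64 := hB
  obtain ⟨h4, h5⟩ := hr _ _ _ _ (by unfold Bd; omega) h3
  refine ⟨fun hS => ?_, h5⟩
  have hc : Nat.land it (nat_lit 3) < 4 := Nat.lt_of_le_of_lt (Nat.and_le_right (n := it) (m := 3)) (by norm_num)
  by_cases hk : κ (vert (adj.get (it.shiftRight 2))) = Nat.land it (nat_lit 3)
  · exact h1 ⟨hS, GoodW_zero κ, mk0_good hc hk (ok.nbr _)⟩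
  · refine h4 ⟨Good.or (Good.add (by omega) hS) ?_, GoodW_zero κ⟩
    have hX : XOK κ (fld (Nat.land it (nat_lit 3)) (Nat.shiftLeft (nat_lit 1) (vert (adj.get (it.shiftRight 2))))) :=
      fld_one_XOK hc (lt_trans (vert_lt _) (by norm_num)) hk
    exact Good.or hX.good1 hX.good2

theorem low_mask_bit (S x : ℕ) : (S &&& 18446744073709551615).testBit (x + 64) = false := by
  rw [show 18446744073709551615 = 2 ^ 64 - 1 by norm_num, Nat.testBit_and, Nat.testBit_two_pow_sub_one]
  simp

theorem lt_bit {Z x : ℕ} (h : Z < 2 ^ 64) : Z.testBit (x + 64) = false :=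
  Nat.testBit_lt_two_pow (lt_of_lt_of_le h (Nat.pow_le_pow_right (by norm_num) (by omega)))

theorem ble_mask {a n : ℕ} (h : Nat.ble (2 ^ a) (Nat.sub (Nat.pow (nat_lit 2) n) (nat_lit 1)) = true) : a < n := by
  have h9 : 2 ^ a ≤ 2 ^ n - 1 := Nat.le_of_ble_eq_true h
  have h10 : 2 ^ a < 2 ^ n := lt_of_le_of_lt h9 (Nat.sub_lt (by positivity) (by norm_num))
  rwa [Nat.pow_lt_pow_iff_right (by norm_num)] at h10

theorem ble_mask' {a n : ℕ} (h : Nat.ble (2 ^ a) (Nat.sub (Nat.pow (nat_lit 2) n) (nat_lit 1)) = false) : n ≤ a := by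
  have h9 : 2 ^ n - 1 < 2 ^ a := ble_false h
  by_contra hn
  have : 2 ^ a < 2 ^ n := Nat.pow_lt_pow_right (by norm_num) (Nat.lt_of_not_le hn)
  omega

theorem h5_s {rec : Rn} {k : ℕ → Bool} {S X L Z : ℕ} (h : h5 rec k S X L Z = true) :
    (Nat.ble L MASK = true ∧ rec k (Nat.succ (S ||| (L <<< 2088 ||| L <<< 4176))) 0 X = true) ∨
    (Nat.ble L MASK = false ∧ Nat.ble L MSKN = true ∧ rec k S (L >>> 2088 ||| Z) X = true) := by
  unfold h5 at h
  generalize Nat.ble L MASK = t at h ⊢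
  generalize Nat.ble L MSKN = t' at h ⊢
  rcases brec_true h with ⟨h6, h7⟩ | ⟨h6, h7⟩
  · have h0 := frc_true h7
    exact Or.inl ⟨h6, h0⟩
  · rcases brec_true h7 with ⟨h8, h9⟩ | ⟨_, hd⟩
    · have h0 := frc_true h9
      exact Or.inr ⟨h6, h8, h0⟩
    · exact absurd hd (by simp)

set_option exponentiation.threshold 5000 in
theorem h2_s {κ : ℕ → ℕ} (ok : OK κ) {f : ℕ} {rec : Rn} (hr : RS κ f rec) {k : ℕ → Bool} {S X q : ℕ}
    (hB : Bd (f + 1) S) (hq : ¬ Good κ q) (h : h2 rec k S X q = true) :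
    ¬ Good κ S ∧ ∃ X', k X' = true := by
  unfold h2 at h
  have h1 := frc_true h
  have hbit : ∀ x, ((q ||| (S ^^^ (S &&& 18446744073709551615))) ^^^ S).testBit (x + 64) = false →
      q.testBit (x + 64) = true → S.testBit (x + 64) = true := by
    intro x
    rw [Nat.testBit_xor, Nat.testBit_or, Nat.testBit_xor, low_mask_bit]
    cases q.testBit (x + 64) <;> cases S.testBit (x + 64) <;> simp
  change h3 rec k S X ((q ||| (S ^^^ (S &&& 18446744073709551615))) ^^^ S) = true at h1
  generalize ((q ||| (S ^^^ (S &&& 18446744073709551615))) ^^^ S) = R at h1 hbit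
  rcases brec_true h1 with ⟨ha, hb⟩ | ⟨ha, hb⟩
  · have hR : R < 2 ^ 64 := by have : R ≤ 18446744073709551615 := Nat.le_of_ble_eq_true ha
                               omega
    exact ⟨fun hS => hq fun x hx => hS x (hbit x (lt_bit hR) hx), X, hb⟩
  · have hR : 2 ^ 64 ≤ R := by have : 18446744073709551615 < R := ble_false ha
                               omega
    obtain ⟨x, hx, hL⟩ := low_bit64 R hR
    have hd4 : h4 rec k S X R (R &&& (R - 2 ^ 64)) = true := frc_true hb
    generalize R &&& (R - 2 ^ 64) = Z at hd4 hL
    rcases brec_true hd4 with ⟨hc, hd5⟩ | ⟨_, hd⟩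
    swap
    · exact absurd hd (by simp)
    have hZ : Z < 2 ^ 64 := by have : Z ≤ 18446744073709551615 := Nat.le_of_ble_eq_true hc
                               omega
    have hRb : ∀ y, y ≠ x → R.testBit (y + 64) = false := by
      intro y hy
      have := congrArg (fun t => t.testBit (y + 64)) hL
      simp only [Nat.testBit_xor, lt_bit hZ, Nat.testBit_two_pow, Bool.xor_false] at this
      rw [this]
      simp; omega
    have hneg : Good κ S → ¬ Pm κ x := by
      intro hS hP
      refine hq fun y hy => ?_
      by_cases hyx : y = x
      · rwa [hyx]
      · exact hS y (hbit y (hRb y hyx) hy)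
    change h5 rec k S X (R ^^^ Z) Z = true at hd5
    rw [hL] at hd5
    rcases h5_s hd5 with ⟨h6, h8⟩ | ⟨h6, h8, h10⟩
    · unfold MASK at h6
      have hx1 : x + 64 < 2152 := ble_mask h6
      have hm : (2 ^ (x + 64) <<< 2088 ||| 2 ^ (x + 64) <<< 4176) % 2 ^ 64 = 0 := by
        rw [or_low _ _ (shl_low _ _ (by norm_num))]; exact shl_low _ _ (by norm_num)
      obtain ⟨h9, h10⟩ := hr _ _ _ _ (hB.succ_or hm) h8
      refine ⟨fun hS => h9 ⟨good_succ_or hB hm hS ?_, GoodW_zero κ⟩, h10⟩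
      have hP : κ (x % 522) ≠ x / 522 := fun hh => hneg hS (Or.inl ⟨by omega, hh⟩)
      refine Good.or ?_ ?_
      · intro y hy
        rw [Nat.testBit_shiftLeft, Bool.and_eq_true, Nat.testBit_two_pow, decide_eq_true_eq,
          decide_eq_true_eq] at hy
        have hy' : y = x + 2088 := by omega
        refine Or.inr ⟨by omega, ?_⟩
        rw [show y % 522 = x % 522 by omega, show y / 522 % 4 = x / 522 by omega]
        exact hP
      · intro y hy
        rw [Nat.testBit_shiftLeft, Bool.and_eq_true, Nat.testBit_two_pow, decide_eq_true_eq,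
          decide_eq_true_eq] at hy
        have hy' : y = x + 4176 := by omega
        refine Or.inr ⟨by omega, ?_⟩
        rw [show y % 522 = x % 522 by omega, show y / 522 % 4 = x / 522 by omega]
        exact hP
    · unfold MASK at h6
      unfold MSKN at h8
      have hx1 : x + 64 < 4240 := ble_mask h8
      have hx2 : 2152 ≤ x + 64 := ble_mask' h6
      clear h6 h8
      have hB2 : Bd f S := hB.mono
      obtain ⟨h11, h12⟩ := hr _ _ _ _ hB2 h10
      refine ⟨fun hS => h11 ⟨hS, ?_⟩, h12⟩
      have hP : κ (x % 522) = x / 522 % 4 := by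
        by_contra hh
        exact hneg hS (Or.inr ⟨by omega, hh⟩)
      intro y hy
      rw [Nat.testBit_or, lt_bit hZ, Bool.or_false, Nat.testBit_shiftRight, Nat.testBit_two_pow,
        decide_eq_true_eq] at hy
      have hy' : x = y + 2088 := by omega
      refine ⟨by omega, Or.inl ⟨by omega, ?_⟩⟩
      rw [show y % 522 = x % 522 by omega, hP]
      omega

set_option exponentiation.threshold 5000 in
theorem o2_s {κ : ℕ → ℕ} (ok : OK κ) {f : ℕ} {tr : T} {kk : ℕ} (hh : ∀ j < kk, ¬ Good κ (QQ tr j))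
    {rec : Rn} (hr : RS κ f rec) {k : ℕ → Bool} {S X : ℕ}
    (hB : Bd (f + 1) S) (h : o1 tr kk rec k S X = true) :
    ¬ Good κ S ∧ ∃ X', k X' = true := by
  have hU : ∀ b, ((S >>> 2610) &&& ((S >>> 3132) &&& (S >>> 3654))).testBit b = true →
      S.testBit (b + 2546 + 64) = true ∧ S.testBit (b + 3068 + 64) = true ∧ S.testBit (b + 3590 + 64) = true := by
    intro b hb
    rw [Nat.testBit_and, Nat.testBit_and, Nat.testBit_shiftRight, Nat.testBit_shiftRight,
      Nat.testBit_shiftRight, Bool.and_eq_true, Bool.and_eq_true] at hb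
    rw [show b + 2546 + 64 = 2610 + b by omega, show b + 3068 + 64 = 3132 + b by omega,
      show b + 3590 + 64 = 3654 + b by omega]
    exact hb
  change o2 tr kk rec k S X ((S >>> 2610) &&& ((S >>> 3132) &&& (S >>> 3654))) = true at h
  generalize ((S >>> 2610) &&& ((S >>> 3132) &&& (S >>> 3654))) = U at h hU
  unfold o2 at h
  have hN : ∀ z, 2088 ≤ z → Pm κ z → κ (z % 522) ≠ z / 522 % 4 := by
    intro z hz hP
    rcases hP with hP | hP
    · omega
    · exact hP.2
  rcases brec_true h with ⟨g1, h2⟩ | ⟨g1, h2⟩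
  · have hW : Good κ S → GoodW κ ((S ^^^ U) &&& (2 ^ 2152 - 1)) := by
      intro hS x hx
      rw [Nat.testBit_and, Bool.and_eq_true, Nat.testBit_two_pow_sub_one, decide_eq_true_eq,
        Nat.testBit_xor] at hx
      obtain ⟨hx1, hx2⟩ := hx
      refine ⟨by omega, ?_⟩
      rcases Bool.eq_false_or_eq_true (S.testBit (x + 64)) with hs | hs
      · exact hS x hs
      · rw [hs, Bool.false_xor] at hx1
        obtain ⟨ha, hb, hc⟩ := hU _ hx1
        have ha' := hN _ (by omega) (hS _ ha)
        have hb' := hN _ (by omega) (hS _ hb)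
        have hc' := hN _ (by omega) (hS _ hc)
        rw [show (x + 64 + 2546) % 522 = x % 522 by omega] at ha'
        rw [show (x + 64 + 3068) % 522 = x % 522 by omega] at hb'
        rw [show (x + 64 + 3590) % 522 = x % 522 by omega] at hc'
        have := ok.lt (x % 522)
        exact Or.inl ⟨by omega, by omega⟩
    have h3 : o3 tr kk rec k S X ((S ^^^ U) &&& (2 ^ 2152 - 1)) = true := by
      unfold MASK at h2
      have h0 := frc_true h2
      exact h0
    generalize ((S ^^^ U) &&& (2 ^ 2152 - 1)) = W at h3 hW
    unfold o3 at h3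
    rcases brec_true h3 with ⟨h4, h5⟩ | ⟨h4, h5⟩
    · unfold op1 at h5
      have h6 := frc_true h5
      unfold op2 at h6
      have h7 := frc_true h6
      unfold op3 at h7
      rcases brec_true h7 with ⟨_, h8⟩ | ⟨_, h8⟩
      · exact br_s ok hr hB h8
      · unfold h1 at h8
        rcases brec_true h8 with ⟨h9, h10⟩ | ⟨_, hd⟩
        · exact h2_s ok hr hB (hh _ (Nat.le_of_ble_eq_true h9)) h10
        · exact absurd hd (by simp)
    · have hW' : 2 ^ 64 ≤ W := by
        have : 18446744073709551615 < W := ble_false h4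
        omega
      obtain ⟨h6, h7⟩ := i0_s ok hr hB hW' h5
      exact ⟨fun hS => h6 ⟨hS, hW hS⟩, h7⟩
  · refine ⟨fun hS => ?_, X, h2⟩
    have hne : U &&& (U >>> 522) ≠ 0 := Nat.ne_of_beq_eq_false g1
    obtain ⟨b, hb⟩ := Nat.exists_testBit_of_ne_zero hne
    rw [Nat.testBit_and, Bool.and_eq_true, Nat.testBit_shiftRight] at hb
    obtain ⟨ha, hb', hc⟩ := hU _ hb.1
    obtain ⟨_, _, hd⟩ := hU _ hb.2
    have ha' := hN _ (by omega) (hS _ ha)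
    have hb' := hN _ (by omega) (hS _ hb')
    have hc' := hN _ (by omega) (hS _ hc)
    have hd' := hN _ (by omega) (hS _ hd)
    rw [show (b + 3068) % 522 = (b + 2546) % 522 by omega] at hb'
    rw [show (b + 3590) % 522 = (b + 2546) % 522 by omega] at hc'
    rw [show (522 + b + 3590) % 522 = (b + 2546) % 522 by omega] at hd'
    have := ok.lt ((b + 2546) % 522)
    omega

theorem run_s {κ : ℕ → ℕ} (ok : OK κ) {tr : T} {kk : ℕ} (hh : ∀ j < kk, ¬ Good κ (QQ tr j)) (f : ℕ) :
    RS κ f (run tr kk f) := by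
  induction f with
  | zero => intro k S W X _ h; exact absurd h (by change ¬ (false = true); simp)
  | succ f ih =>
    intro k S W X hB h
    change stp tr kk (run tr kk f) k S W X = true at h
    unfold stp at h
    rcases brec_true h with ⟨h1, h2⟩ | ⟨h1, h2⟩
    · obtain ⟨h3, h4⟩ := o2_s ok hh ih hB h2
      exact ⟨fun hS => h3 hS.1, h4⟩
    · have hW' : 2 ^ 64 ≤ W := by
        have : 18446744073709551615 < W := ble_false h1
        omega
      exact i0_s ok ih hB hW' h2


theorem chk_s {κ : ℕ → ℕ} (ok : OK κ) {base : ℕ} (hb : Good κ base) (hl : base % 2 ^ 64 = 0) {tr : T} {kk : ℕ}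
    (hk : kk < 65536) (hh : ∀ j < kk, ¬ Good κ (QQ tr j)) (h : chk base tr kk = true) : ¬ Good κ (QQ tr kk) := by
  unfold chk at h
  have h1 := frc_true h
  unfold c1 at h1
  have h2 := frc_true h1
  unfold c2 at h2
  have h3 := frc_true h2
  unfold c3 at h3
  change run tr kk 65536 fin ((kk <<< 24) ||| (base ||| (QQ tr kk ||| ((QQ tr kk) >>> 2152) <<< 4240))) 0 _ = true at h3
  have hq : QQ tr kk % 2 ^ 64 = 0 := shl_low _ _ le_rfl
  have hlow : ((base ||| (QQ tr kk ||| ((QQ tr kk) >>> 2152) <<< 4240))) % 2 ^ 64 = 0 := by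
    rw [or_low _ _ (by rw [or_low _ _ (shl_low _ _ (by norm_num))]; exact hq)]
    exact hl
  have hkk : kk <<< 24 < 2 ^ 40 := by
    rw [Nat.shiftLeft_eq]; omega
  obtain ⟨h4, -⟩ := run_s ok hh 65536 _ _ _ _ (by
    unfold Bd
    rw [or_low _ _ hlow]
    omega) h3
  intro hG
  refine h4 ⟨Good.or ?_ (Good.or hb (Good.or hG ?_)), GoodW_zero κ⟩
  · intro x hx
    rw [lt_bit (by omega)] at hx
    exact absurd hx (by simp)
  · intro x hx
    rw [Nat.testBit_shiftLeft, Bool.and_eq_true, decide_eq_true_eq, Nat.testBit_shiftRight] at hx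
    obtain ⟨hx1, hx2⟩ := hx
    have hx3 := hG (x - 2088) (by rwa [show x - 2088 + 64 = 2152 + (x + 64 - 4240) by omega])
    refine Or.inr ⟨by omega, ?_⟩
    rcases hx3 with hx3 | hx3
    · omega
    · rw [show x % 522 = (x - 2088) % 522 by omega, show x / 522 % 4 = (x - 2088) / 522 % 4 by omega]
      exact hx3.2

theorem chkR_s {κ : ℕ → ℕ} (ok : OK κ) {base : ℕ} (hb : Good κ base) (hl : base % 2 ^ 64 = 0) {tr : T} (len : ℕ) :
    ∀ lo, lo + len < 65536 → (∀ j < lo, ¬ Good κ (QQ tr j)) → chkR base tr len lo = true →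
      ∀ j < lo + len, ¬ Good κ (QQ tr j) := by
  induction len with
  | zero => intro lo _ h _; exact h
  | succ len ih =>
    intro lo hlt h hc
    change chkN base tr (chkR base tr len) lo = true at hc
    unfold chkN at hc
    rcases brec_true hc with ⟨h1, h2⟩ | ⟨_, hd⟩
    · have h3 := chk_s ok hb hl (by omega) h h1
      have h4 := ih (lo + 1) (by omega) (fun j hj => by
        rcases Nat.lt_succ_iff_lt_or_eq.1 hj with hj | rfl
        · exact h j hj
        · exact h3) (frc_true h2)
      intro j hj
      exact h4 j (by omega)
    · exact absurd hd (by simp)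

theorem Good_zero (κ : ℕ → ℕ) : Good κ 0 := by
  intro x hx; simp at hx


theorem hexb_low (c0 c1 c2 c3 c4 c5 : ℕ) : hexb c0 c1 c2 c3 c4 c5 % 2 ^ 64 = 0 := by
  have h : ∀ a c j : ℕ, a % 2 ^ 64 = 0 → Nat.lor a (MM c j) % 2 ^ 64 = 0 := by
    intro a c j ha
    have := or_low a (MM c j) (MM_low c j)
    exact this.trans ha
  exact h _ _ _ (h _ _ _ (h _ _ _ (h _ _ _ (h _ _ _ (h _ _ _ (MM_low _ _))))))

theorem hexb_good {κ : ℕ → ℕ} (ok : OK κ) {c0 c1 c2 c3 c4 c5 : ℕ} (hO : κ 320 = 0)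
  (h0 : κ 55 = c0) (h1 : κ 59 = c1) (h2 : κ 57 = c2) (h3 : κ 54 = c3) (h4 : κ 56 = c4) (h5 : κ 58 = c5) : Good κ (hexb c0 c1 c2 c3 c4 c5) := by
  have h : ∀ c j v : ℕ, vert (adj.get j) = v → κ v = c → Good κ (MM c j) := by
    intro c j v hv hc
    have hlt : c < 4 := hc ▸ ok.lt v
    exact mk0_good hlt (by rw [hv]; exact hc) (ok.nbr j)
  refine Good.or (Good.or (Good.or (Good.or (Good.or (Good.or (h _ _ 320 (by decide +kernel) hO) (h _ _ 55 (by decide +kernel) h0)) (h _ _ 59 (by decide +kernel) h1)) (h _ _ 57 (by decide +kernel) h2)) (h _ _ 54 (by decide +kernel) h3)) (h _ _ 56 (by decide +kernel) h4)) (h _ _ 58 (by decide +kernel) h5)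


/-! ### The points -/

noncomputable def ca (m : Nat) : Nat := Nat.land (Nat.shiftRight m (nat_lit 2)) (nat_lit 1023)
noncomputable def cb (m : Nat) : Nat := Nat.land (Nat.shiftRight m (nat_lit 12)) (nat_lit 1023)
noncomputable def cc (m : Nat) : Nat := Nat.land (Nat.shiftRight m (nat_lit 22)) (nat_lit 1023)
noncomputable def cd (m : Nat) : Nat := Nat.land (Nat.shiftRight m (nat_lit 32)) (nat_lit 1023)
noncomputable def sqd (a b : Nat) : Nat :=
  Nat.add (Nat.mul (Nat.sub a b) (Nat.sub a b)) (Nat.mul (Nat.sub b a) (Nat.sub b a))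
/-- The rational part of `1296` times the squared distance. -/
noncomputable def nrm (x y : Nat) : Nat :=
  Nat.add (sqd (ca x) (ca y)) (Nat.add (Nat.mul (nat_lit 33) (sqd (cb x) (cb y)))
    (Nat.add (Nat.mul (nat_lit 3) (sqd (cc x) (cc y))) (Nat.mul (nat_lit 99) (sqd (cd x) (cd y)))))
noncomputable def irr (x y : Nat) : Bool :=
  Nat.beq
    (Nat.add (Nat.add (Nat.mul (ca x) (cb x)) (Nat.mul (ca y) (cb y)))
      (Nat.mul (nat_lit 3) (Nat.add (Nat.mul (cc x) (cd x)) (Nat.mul (cc y) (cd y)))))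
    (Nat.add (Nat.add (Nat.mul (ca x) (cb y)) (Nat.mul (ca y) (cb x)))
      (Nat.mul (nat_lit 3) (Nat.add (Nat.mul (cc x) (cd y)) (Nat.mul (cc y) (cd x)))))
noncomputable def unitB (x y : Nat) : Bool := Bool.rec false (irr x y) (Nat.beq (nrm x y) (nat_lit 1296))

noncomputable def P (m : ℕ) : EuclideanSpace ℝ (Fin 2) :=
  !₂[((ca m : ℝ) + cb m * √33) / 36, √3 * ((cc m : ℝ) + cd m * √33) / 36]

theorem sqd_cast (a b : ℕ) : ((sqd a b : ℕ) : ℤ) = ((a : ℤ) - b) ^ 2 := by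
  change (((a - b) * (a - b) + (b - a) * (b - a) : ℕ) : ℤ) = _
  rcases le_total a b with h | h
  · rw [Nat.sub_eq_zero_of_le h]; push_cast [Nat.cast_sub h]; ring
  · rw [Nat.sub_eq_zero_of_le h]; push_cast [Nat.cast_sub h]; ring

/-- The irrational part. -/
noncomputable def irrZ (x y : ℕ) : ℤ :=
  ((ca x : ℤ) - ca y) * ((cb x : ℤ) - cb y) + 3 * (((cc x : ℤ) - cc y) * ((cd x : ℤ) - cd y))

theorem nrm_cast (x y : ℕ) : ((nrm x y : ℕ) : ℤ) = ((ca x : ℤ) - ca y) ^ 2 + 33 * ((cb x : ℤ) - cb y) ^ 2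
    + 3 * ((cc x : ℤ) - cc y) ^ 2 + 99 * ((cd x : ℤ) - cd y) ^ 2 := by
  change ((sqd (ca x) (ca y) + (33 * sqd (cb x) (cb y) + (3 * sqd (cc x) (cc y) + 99 * sqd (cd x) (cd y))) : ℕ) : ℤ) = _
  push_cast [sqd_cast]
  ring

theorem irr_iff (x y : ℕ) (h : irr x y = true) : irrZ x y = 0 := by
  have h1 : (ca x * cb x + ca y * cb y) + 3 * (cc x * cd x + cc y * cd y) =
    (ca x * cb y + ca y * cb x) + 3 * (cc x * cd y + cc y * cd x) := Nat.eq_of_beq_eq_true h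
  have h2 : ((ca x : ℤ) * cb x + ca y * cb y) + 3 * (cc x * cd x + cc y * cd y) =
    (ca x * cb y + ca y * cb x) + 3 * (cc x * cd y + cc y * cd x) := by exact_mod_cast h1
  unfold irrZ
  linarith

theorem dist_P (x y : ℕ) : 1296 * dist (P x) (P y) ^ 2 = ((nrm x y : ℕ) : ℝ) + 2 * (irrZ x y : ℝ) * √33 := by
  have h1 : ((nrm x y : ℕ) : ℝ) = ((ca x : ℝ) - ca y) ^ 2 + 33 * ((cb x : ℝ) - cb y) ^ 2
    + 3 * ((cc x : ℝ) - cc y) ^ 2 + 99 * ((cd x : ℝ) - cd y) ^ 2 := by exact_mod_cast nrm_cast x y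
  have h33 : √33 ^ 2 = 33 := Real.sq_sqrt (by norm_num)
  have h3 : √3 ^ 2 = 3 := Real.sq_sqrt (by norm_num)
  rw [EuclideanSpace.dist_sq_eq, Fin.sum_univ_two, Real.dist_eq, Real.dist_eq, sq_abs, sq_abs, h1]
  unfold irrZ P
  simp only [Matrix.cons_val_zero, Matrix.cons_val_one]
  push_cast
  generalize √33 = s at *
  generalize √3 = t at *
  have : t ^ 2 * s ^ 2 = 99 := by rw [h33, h3]; norm_num
  linear_combination (((cb x : ℝ) - cb y) ^ 2) * h33 + 3 * ((cd x : ℝ) - cd y) ^ 2 * h33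
    + (((cc x : ℝ) - cc y) + ((cd x : ℝ) - cd y) * s) ^ 2 * h3

theorem irrat {a b : ℤ} (h : (a : ℝ) + 2 * (b : ℝ) * √33 = 0) : a = 0 ∧ b = 0 := by
  have hi : Irrational √33 := by
    have : Irrational (√((33 : ℕ) : ℝ)) := by
      rw [irrational_sqrt_natCast_iff]
      rintro ⟨r, hr⟩
      have h1 : r < 6 := by nlinarith
      interval_cases r <;> omega
    exact_mod_cast this
  have hb : b = 0 := by
    by_contra hb
    have hb' : (b : ℝ) ≠ 0 := by exact_mod_cast hb
    refine hi ⟨((-a : ℤ) : ℚ) / ((2 * b : ℤ) : ℚ), ?_⟩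
    push_cast
    field_simp
    linarith
  subst hb
  simp at h
  exact ⟨h, rfl⟩

theorem dist_eq_one {x y : ℕ} (h : dist (P x) (P y) = 1) : nrm x y = 1296 := by
  have h1 := dist_P x y
  rw [h] at h1
  have h2 := irrat (a := (nrm x y : ℤ) - 1296) (b := irrZ x y) (by push_cast; linarith)
  omega

theorem P_eq {x y : ℕ} (h : P x = P y) : nrm x y = 0 := by
  have h1 := dist_P x y
  rw [h, dist_self] at h1
  have h2 := irrat (a := (nrm x y : ℤ)) (b := irrZ x y) (by push_cast; linarith)
  omega

theorem unit_dist {x y : ℕ} (h : unitB x y = true) : dist (P x) (P y) = 1 := by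
  rcases brec_true h with ⟨h1, h2⟩ | ⟨_, hd⟩
  · have h3 := dist_P x y
    have h4 : nrm x y = 1296 := Nat.eq_of_beq_eq_true h1
    rw [h4, irr_iff x y h2] at h3
    have h5 : dist (P x) (P y) ^ 2 = 1 := by push_cast at h3; linarith
    have h6 := dist_nonneg (x := P x) (y := P y)
    nlinarith
  · exact absurd hd (by simp)

noncomputable def andB (a b : Bool) : Bool := Bool.rec false b a

theorem andB_true {a b : Bool} (h : andB a b = true) : a = true ∧ b = true := by
  cases a
  · exact absurd h (by change ¬ (false = true); simp)
  · exact ⟨rfl, h⟩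

noncomputable def tst (x y : Nat) : Bool :=
  Bool.rec
    (Bool.rec true (Bool.rec true false (Nat.beq (nrm x y) (nat_lit 1296)))
      (Nat.beq (Nat.land x (nat_lit 3)) (Nat.land y (nat_lit 3))))
    false (Nat.beq (nrm x y) (nat_lit 0))

theorem tst_true {x y : ℕ} (h : tst x y = true) : nrm x y ≠ 0 ∧ (x &&& 3 = y &&& 3 → nrm x y ≠ 1296) := by
  rcases brec_true h with ⟨_, hd⟩ | ⟨h1, h2⟩
  · exact absurd hd (by simp)
  · refine ⟨Nat.ne_of_beq_eq_false h1, fun hc => ?_⟩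
    rcases brec_true h2 with ⟨h3, h4⟩ | ⟨h3, h4⟩
    · rcases brec_true h4 with ⟨_, hd⟩ | ⟨h5, _⟩
      · exact absurd hd (by simp)
      · exact Nat.ne_of_beq_eq_false h5
    · exact absurd hc (Nat.ne_of_beq_eq_false h3)

noncomputable def all1 (x : Nat) (l : List Nat) : Bool := List.rec true (fun y _ ih => andB (tst x y) ih) l
noncomputable def all2 (l : List Nat) : Bool := List.rec true (fun x l ih => andB (all1 x l) ih) l

theorem all1_true (x : ℕ) (l : List ℕ) (h : all1 x l = true) : ∀ y ∈ l, tst x y = true := by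
  induction l with
  | nil => simp
  | cons y l ih =>
    have h' : andB (tst x y) (all1 x l) = true := h
    have := andB_true h'
    intro z hz
    rcases List.mem_cons.1 hz with rfl | hz
    · exact this.1
    · exact ih this.2 z hz

theorem all2_true (l : List ℕ) (h : all2 l = true) : l.Pairwise fun x y => tst x y = true := by
  induction l with
  | nil => simp
  | cons y l ih =>
    have h' : andB (all1 y l) (all2 l) = true := h
    have := andB_true h'
    exact List.Pairwise.cons (all1_true y l this.1) (ih this.2)

noncomputable def bld (n : Nat) : List Nat → Bool :=
  Nat.rec all2 (fun n ih acc => frc (T.get ptT n) (fun m => ih (m :: acc))) n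

theorem bld_true (n : ℕ) : ∀ acc, bld n acc = all2 ((List.range n).map (T.get ptT) ++ acc) := by
  induction n with
  | zero => intro acc; rfl
  | succ n ih =>
    intro acc
    have h : bld (n + 1) acc = frc (T.get ptT n) (fun m => bld n (m :: acc)) := rfl
    rw [h, frc_eq, ih, List.range_succ]
    simp

theorem bld_check : bld (nat_lit 421) [] = true := by decide +kernel

theorem tst_all {u v : ℕ} (huv : u < v) (hv : v < 421) : tst (ptT.get u) (ptT.get v) = true := by
  have h := bld_check
  rw [bld_true, List.append_nil] at h
  have h2 := all2_true _ h
  rw [List.pairwise_map, List.pairwise_iff_getElem] at h2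
  have h3 := h2 u v (by rw [List.length_range]; exact huv.trans hv) (by rw [List.length_range]; exact hv) huv
  simpa only [List.getElem_range] using h3

/-! ### The adjacency lists -/

noncomputable def T.all (p : Nat → Bool) (t : T) : Bool := T.rec (fun m => p m) (fun _ _ a b => andB a b) t

theorem T.all_get (p : ℕ → Bool) (t : T) (h : t.all p = true) : ∀ j, p (t.get j) = true := by
  induction t with
  | L m => intro j; exact h
  | N l r hl hr =>
    have h' := andB_true (show andB (l.all p) (r.all p) = true from h)
    intro j
    have h2 : (T.N l r).get j = T.sel l.get r.get j := rfl
    rw [h2]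
    unfold T.sel
    cases Nat.beq (Nat.land j (nat_lit 1)) (nat_lit 0)
    · exact hr h'.2 _
    · exact hl h'.1 _

/-- Two vertices are at distance one, or they are the vertices 0 and 1. -/
noncomputable def edge (v u : Nat) : Bool :=
  Bool.rec
    (andB (Nat.beq (Nat.add u v) (nat_lit 1)) (Bool.rec true false (Nat.beq u v)))
    (andB (Nat.ble u (nat_lit 420)) (Nat.ble v (nat_lit 420)))
    (unitB (ptT.get u) (ptT.get v))
noncomputable def edges (v : Nat) (l : List Nat) : Bool := List.rec true (fun u _ ih => andB (edge v u) ih) l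
noncomputable def leafOK (m : Nat) : Bool := edges (vert m) (nbl m)

theorem edges_true (v : ℕ) (l : List ℕ) (h : edges v l = true) : ∀ u ∈ l, edge v u = true := by
  induction l with
  | nil => simp
  | cons y l ih =>
    have h' : andB (edge v y) (edges v l) = true := h
    have := andB_true h'
    intro z hz
    rcases List.mem_cons.1 hz with rfl | hz
    · exact this.1
    · exact ih this.2 z hz

theorem adj_check : adj.all leafOK = true := by decide +kernel

theorem adj_edge (j u : ℕ) (hu : u ∈ nbl (adj.get j)) : edge (vert (adj.get j)) u = true :=
  edges_true _ _ (T.all_get _ _ adj_check j) u hu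

noncomputable def ixt (x : Nat) : Bool :=
  Bool.rec
    (andB (Nat.ble (nat_lit 421) (vert (adj.get (Nat.mod (Nat.pow (nat_lit 2) (Nat.add x (nat_lit 64))) (nat_lit 523)))))
      (Nat.ble (nat_lit 421) (Nat.mod x (nat_lit 522))))
    true
    (Nat.beq (vert (adj.get (Nat.mod (Nat.pow (nat_lit 2) (Nat.add x (nat_lit 64))) (nat_lit 523)))) (Nat.mod x (nat_lit 522)))
noncomputable def ixs (n : Nat) : Bool := Nat.rec true (fun n ih => andB (ixt n) ih) n

theorem ixs_true (n : ℕ) (h : ixs n = true) : ∀ x < n, ixt x = true := by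
  induction n with
  | zero => intro x hx; omega
  | succ n ih =>
    have h' := andB_true (show andB (ixt n) (ixs n) = true from h)
    intro x hx
    rcases Nat.lt_succ_iff_lt_or_eq.1 hx with hx | rfl
    · exact ih h'.2 x hx
    · exact h'.1

theorem ixs_check : ixs (nat_lit 2088) = true := by decide +kernel

theorem OK.mk' {κ : ℕ → ℕ} (h4 : ∀ v, κ v < 4) (hbig : ∀ v, 421 ≤ v → κ v = 0)
    (hu : ∀ u v, u < 421 → v < 421 → unitB (ptT.get u) (ptT.get v) = true → κ u ≠ κ v) (h01 : κ 0 ≠ κ 1) : OK κ := by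
  refine ⟨h4, fun j u hj => ?_, fun x hx => ?_⟩
  · have h := adj_edge j u hj
    generalize vert (adj.get j) = v at h
    rcases brec_true h with ⟨h1, h2⟩ | ⟨h1, h2⟩
    · have h3 := andB_true h2
      have h4 : u ≤ 420 := Nat.le_of_ble_eq_true h3.1
      have h5 : v ≤ 420 := Nat.le_of_ble_eq_true h3.2
      exact hu u v (by omega) (by omega) h1
    · have h3 := andB_true h2
      have h4 : u + v = 1 := Nat.eq_of_beq_eq_true h3.1
      have h5 : (u = 0 ∧ v = 1) ∨ (u = 1 ∧ v = 0) := by omega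
      rcases h5 with ⟨rfl, rfl⟩ | ⟨rfl, rfl⟩
      · exact h01
      · exact h01.symm
  · have h := ixs_true 2088 ixs_check x hx
    unfold ixt at h
    change Bool.rec (motive := fun _ => Bool) (andB (Nat.ble 421 (vert (adj.get (2 ^ (x + 64) % 523)))) (Nat.ble 421 (x % 522))) true
      (Nat.beq (vert (adj.get (2 ^ (x + 64) % 523))) (x % 522)) = true at h
    generalize vert (adj.get (2 ^ (x + 64) % 523)) = w at h
    rcases brec_true h with ⟨h1, _⟩ | ⟨_, h2⟩
    · rw [Nat.eq_of_beq_eq_true h1]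
    · have h3 := andB_true h2
      rw [hbig _ (Nat.le_of_ble_eq_true h3.1), hbig _ (Nat.le_of_ble_eq_true h3.2)]


/-! ### The certificates -/

def tr121212 : T :=
  open T in
 (N (N (N (N (N (N (L 244719116278455659299)
 (L 51748507428596800181493738277410))
 (N (L 4521351572898)
 (L 169014329538565422871598070326209))) (N (N (L 7848742806209724674826539517548818929027)
 (L 20409183982975937679228480609))
 (N (L 1369635171338279205966895581663404226)
 (L 0)))) (N (N (N (L 1473420610602115802173867877521568061332174166878787)
 (L 6168293800227493158527441227074317378093591267417442))
 (N (L 683378250857146874425900753502992055157674602435)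
 (L 428206206485649325099621344426297960632898876711923211939295418687722419779312889231952171117335650610480522995602320066912579532894681268093501082784))) (N (N (L 526409124597266979305917127230498722)
 (L 37511125768427041))
 (N (L 167033365902568671831547111861026)
 (L 0))))) (N (N (N (N (L 5460520917556740143804763777564930768611257845295235)
 (L 3385941502081727833858178578433383906671563726226448379745200993))
 (N (L 4521083138082)
 (L 2516148755536692049457345))) (N (N (L 16857820202069281)
 (L 37511121456688321))
 (N (L 367060105505476555562314512799934595730283909986366240893729)
 (L 0)))) (N (N (N (L 13085068096176447352715935991312311356905506358644831770370903155478155937295458)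
 (L 1374761392083728438132755504027267010))
 (N (L 3502509780266909891558039770321609051655503484331778)
 (L 0))) (N (N (L 4521035159874)
 (L 4669950177999055413497122968592005388022432973209414733064714104338662145197439800541947470606995384993))
 (N (L 37159228610048034)
 (L 0)))))) (N (N (N (N (N (L 2785745821225827001729714566393903962950577844213467232901203741965277527688015631261251257013040216672435795798840839637254958548526559639370511978641202239007583027893239352993914835155496556353893450604372361824971106)
 (L 751854957071685470380062788779291879294964098690))
 (N (L 4521096771234)
 (L 169014329538566003114672577176577))) (N (N (L 42503857993913634796192951062299084151851184338712722605908742426478561698072059630191688931812934346588619017763391953826312740998626)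
 (L 37317605536690305))
 (N (L 20399487780954422497872572322)
 (L 0)))) (N (N (N (L 22895376501789554593567452626888726380379541793513187362)
 (L 304120452376400571554))
 (N (L 918056109847839155473432815228923706869000974640867)
 (L 0))) (N (N (L 19045260646778651601697075105)
 (L 2519689665622304137277889))
 (N (L 1249552531493596820214424032010856705)
 (L 0))))) (N (N (N (N (L 2622877559469916860109796285136966878834185989357332014184328037)
 (L 413162552034586237297213621886092742670517286055887258889411))
 (N (L 3382729556269408639613270115070040907203)
 (L 166954350710481014201401486451457))) (N (N (L 930221915219527473334184403411413155)
 (L 14514685593606998189309759779520833703126878474579378856348645327106033644665588277014737207812135054247715858673767456724094154851403029914080693320727100110697182389281))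
 (N (L 926926025526148298089583833144945762)
 (L 0)))) (N (N (N (L 10172495648425726510246184600162430101347)
 (L 183351995154868858817))
 (N (L 309605077778807613366474574968385320063995345288460698632908076450739250590879265286873746177145285908931139779)
 (L 0))) (N (N (L 37036509031408387)
 (L 37599093236018369))
 (N (L 8539800508308324861914048966708636706531)
 (L 0)))))))
theorem t121212_0 : chkR (hexb (nat_lit 1) (nat_lit 2) (nat_lit 1) (nat_lit 2) (nat_lit 1) (nat_lit 2)) tr121212 (nat_lit 5) (nat_lit 0) = true := by decide +kernel
theorem t121212_5 : chkR (hexb (nat_lit 1) (nat_lit 2) (nat_lit 1) (nat_lit 2) (nat_lit 1) (nat_lit 2)) tr121212 (nat_lit 8) (nat_lit 5) = true := by decide +kernel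
theorem t121212_13 : chkR (hexb (nat_lit 1) (nat_lit 2) (nat_lit 1) (nat_lit 2) (nat_lit 1) (nat_lit 2)) tr121212 (nat_lit 13) (nat_lit 13) = true := by decide +kernel
theorem t121212_26 : chkR (hexb (nat_lit 1) (nat_lit 2) (nat_lit 1) (nat_lit 2) (nat_lit 1) (nat_lit 2)) tr121212 (nat_lit 10) (nat_lit 26) = true := by decide +kernel
theorem t121212_36 : chkR (hexb (nat_lit 1) (nat_lit 2) (nat_lit 1) (nat_lit 2) (nat_lit 1) (nat_lit 2)) tr121212 (nat_lit 10) (nat_lit 36) = true := by decide +kernel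
theorem t121212_46 : chkR (hexb (nat_lit 1) (nat_lit 2) (nat_lit 1) (nat_lit 2) (nat_lit 1) (nat_lit 2)) tr121212 (nat_lit 7) (nat_lit 46) = true := by decide +kernel
def tr121213 : T :=
  open T in
 (N (N (N (N (N (L 29352210501305540380368602637403765116952415148331962454389353312245951179586562180)
 (L 440110321790470593822040326512391890179821526217895941571402021488626206919063227720738))
 (N (L 1049659304901304446416712133410351713)
 (L 37141644757511233))) (N (N (L 67049419829901322882)
 (L 37106454105813057))
 (N (L 240020108891959343206789226273280089134274805999654973887426864828233203330281976893667)
 (L 69072095412902557171977733593623650628761800098195043721804321437611890013209435956098089106912)))) (N (N (N (L 737110677899203616077505220226079836451792236324547)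
 (L 552871713))
 (N (L 15696740644139106)
 (L 2496075094665631507798369))) (N (N (L 37018984224486935927793742801026)
 (L 166795720266940713177459202288865))
 (N (L 36911213247377200823239106438719513686251659922163166271257941047041500113258281619508978179803745319151776568848849032556285738382864777382214941297055750432418)
 (L 0))))) (N (N (N (N (L 42574241469211316566597790700005683303894410708555037611582102664342155329749395267)
 (L 1799525461825873506020289))
 (N (L 5318645371029280698830353972772108422615286487756717103990048894179)
 (L 37106462766239809))) (N (N (L 5238518072354437653344221003130430664771)
 (L 37141640533256577))
 (N (L 4510344113378)
 (L 0)))) (N (N (N (L 13643218229692038466346595426600796122039976099055966909909618677068301954193459841218)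
 (L 3382654065679292686730487487462692659756565736676869456956329729))
 (N (L 100370573162485248315716052196526419053782469578957022702449737662045912816046313280229636934370797359547404675562822038732646380097276994427096128713644724119359568828942937587226557913061238221904340321431709792281417918798450522235906369)
 (L 166558006770075115430690382786657))) (N (N (L 406380190612478646687648236251646050)
 (L 4533892280481))
 (N (L 11857054816722128508311357789377022932881875835143068579)
 (L 0))))))
theorem t121213_0 : chkR (hexb (nat_lit 1) (nat_lit 2) (nat_lit 1) (nat_lit 2) (nat_lit 1) (nat_lit 3)) tr121213 (nat_lit 8) (nat_lit 0) = true := by decide +kernel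
theorem t121213_8 : chkR (hexb (nat_lit 1) (nat_lit 2) (nat_lit 1) (nat_lit 2) (nat_lit 1) (nat_lit 3)) tr121213 (nat_lit 4) (nat_lit 8) = true := by decide +kernel
theorem t121213_12 : chkR (hexb (nat_lit 1) (nat_lit 2) (nat_lit 1) (nat_lit 2) (nat_lit 1) (nat_lit 3)) tr121213 (nat_lit 5) (nat_lit 12) = true := by decide +kernel
theorem t121213_17 : chkR (hexb (nat_lit 1) (nat_lit 2) (nat_lit 1) (nat_lit 2) (nat_lit 1) (nat_lit 3)) tr121213 (nat_lit 12) (nat_lit 17) = true := by decide +kernel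
def tr121232 : T :=
  open T in
 (N (N (N (N (N (N (L 501611648733547507848352956501567631368208791370124555302014213)
 (L 1827100481448129107296590506243265281762662638430403))
 (N (L 3403793890478765400946852779516090291845775820751859256780108329677257544859903229419485647071130167364)
 (L 51030551545694117088569920966755532641030537208961028641))) (N (N (L 48755399749579358391803863435746527927503876827013049700)
 (L 4572547688129))
 (N (L 553914401)
 (L 0)))) (N (N (N (L 27516445780628398174320514896631930239342907449635787331)
 (L 228319578609560167769565563614052840514746752633685767522626186175866337))
 (N (L 3206622476022735196321751196935879732130)
 (L 0))) (N (N (L 91041403257320172367734200548445007381758569858)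
 (L 2163327642560330728181914349033967246557514925684982776834092161))
 (N (L 740400174703006612236610)
 (L 0))))) (N (N (N (N (L 16445158483228589140805416620950279517684795971636682135017849901542)
 (L 648547403848215876408316611782814019))
 (N (L 128369887052889336109476955875938)
 (L 11384880140957723749750988749806546808033))) (N (N (L 4361761130035347775438726601561595803230731368992055635153175032817181527345176030730633374068772734499)
 (L 9215590423912494091855752612156775636547))
 (N (L 618090420488518846153053358029023274592573641059)
 (L 0)))) (N (N (N (L 4770259902103957855404403557367729661922)
 (L 558161761))
 (N (L 553920193)
 (L 0))) (N (N (L 64908157754046399358798876972354)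
 (L 418049800032495695449500337819988384091034707365446000664994))
 (N (L 92216575981380870568476693117022883638448994)
 (L 0)))))) (N (N (N (N (N (L 353696932884684013258581553544275810273332795268230243715908)
 (L 1300257893029105047510004183122443443172145046245090111805775714))
 (N (L 66463141506746002207425068510995644206651804832588577811139934790065154669427120736226826857923)
 (L 37352806825143361))) (N (N (L 270161797735309518090923754234387936485106690819625816713186)
 (L 2513786418990018582654177))
 (N (L 553912417)
 (L 0)))) (N (N (N (L 4813165799976786878498240264549982350404)
 (L 415114734090179283237730403766292928101810225784680045205729))
 (N (L 1444936473871745416394052654712434111717984038728832312548338721)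
 (L 0))) (N (N (L 73792327052473500484890218286756711900728866)
 (L 307129419868762810434))
 (N (L 1010069634827797563623024992044718946)
 (L 0))))) (N (N (N (N (L 218190384680144699629380011940426915863385114210911680219164954162189937802551736092570709326326051)
 (L 47636659451153007373480586157602))
 (N (L 4954546267709115091867868792918829040551194860490819)
 (L 92045514985835399163264139185864611766240416))) (N (N (L 193433844153483289358112668252024727053197813516793989884003)
 (L 1428617283622757315416524610818632143172664011956414843748745730165526499554))
 (N (L 197042726889736711618)
 (L 0)))) (N (N (N (L 581630112229996273391162088654432483)
 (L 37247229908324321))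
 (N (L 553920385)
 (L 0))) (N (N (L 371371756684412488318115665606581326345727403016178090833329055843)
 (L 169331263273715043107300566422690))
 (N (L 11278160129935796172930846761451401537665)
 (L 0)))))))
theorem t121232_0 : chkR (hexb (nat_lit 1) (nat_lit 2) (nat_lit 1) (nat_lit 2) (nat_lit 3) (nat_lit 2)) tr121232 (nat_lit 8) (nat_lit 0) = true := by decide +kernel
theorem t121232_8 : chkR (hexb (nat_lit 1) (nat_lit 2) (nat_lit 1) (nat_lit 2) (nat_lit 3) (nat_lit 2)) tr121232 (nat_lit 7) (nat_lit 8) = true := by decide +kernel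
theorem t121232_15 : chkR (hexb (nat_lit 1) (nat_lit 2) (nat_lit 1) (nat_lit 2) (nat_lit 3) (nat_lit 2)) tr121232 (nat_lit 6) (nat_lit 15) = true := by decide +kernel
theorem t121232_21 : chkR (hexb (nat_lit 1) (nat_lit 2) (nat_lit 1) (nat_lit 2) (nat_lit 3) (nat_lit 2)) tr121232 (nat_lit 13) (nat_lit 21) = true := by decide +kernel
theorem t121232_34 : chkR (hexb (nat_lit 1) (nat_lit 2) (nat_lit 1) (nat_lit 2) (nat_lit 3) (nat_lit 2)) tr121232 (nat_lit 10) (nat_lit 34) = true := by decide +kernel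
theorem t121232_44 : chkR (hexb (nat_lit 1) (nat_lit 2) (nat_lit 1) (nat_lit 2) (nat_lit 3) (nat_lit 2)) tr121232 (nat_lit 8) (nat_lit 44) = true := by decide +kernel
def tr121312 : T :=
  open T in
 (N (N (N (N (N (N (L 24074440158151839473460843982493343842867816083737644283094073423586364722487840701350465070490963833592163005472933219549253086897911628521636438555322352965450489809834225830555170102145169558938970248572789131883842843160654449098585116210302369957763400509845443661987419613084643267)
 (L 17847145144010494194658549461115430867284916969073570606659580578292975269700529668))
 (N (L 3205924187250936226332836029029256546753739232306572885755276931)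
 (L 560752353))) (N (N (L 34994798691258408305504349442373268979452342721)
 (L 558426209))
 (N (L 16445086016625353396309793762072546537002215455210532841804270265474)
 (L 50387058174755997892495901500485216909199488616400249953)))) (N (N (N (L 501806706016588561653005453987965506)
 (L 166710360199088187007433776340547))
 (N (L 1099555230593312434203900515890835042)
 (L 570645358635342025919797108064870748448003518784931300839538866490921757323908543970953513636536481))) (N (N (L 550560225)
 (L 262288734534556595042585440653731875))
 (N (L 929119112537066252478543745465730966215836101707757494550363562100134583095289408137571)
 (L 0))))) (N (N (N (N (L 89908472272667071143407420947680468366037635)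
 (L 4307225238984633402387822944956964693571))
 (N (L 59051172511425297153341800104123115496767548303616475929506)
 (L 2490174695189842069035841))) (N (N (L 550556897)
 (L 32338971292734640338365214386850))
 (N (L 501757435576952857315479609897176323)
 (L 0)))) (N (N (N (L 327633974414087729379227251858680997019654820833382670899170)
 (L 19779904099399007713742431929472974652198114340965469248554144876215968230245886375939839066962326662366753127328299754607804657859589316948655105))
 (N (L 6046956346980657655492140099)
 (L 11374257999817706846835925486975611675393))) (N (N (L 550556385)
 (L 1762604229115049396946289573888222869829452657870036030551954577023859502466))
 (N (L 50555055546620638075334287184322)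
 (L 0)))))) (N (N (N (N (N (L 289954603232030563195855071277345847583557847517974255753698)
 (L 1187475817034827792676430649092065487830411282262403))
 (N (L 274709716848693588032843361779736257)
 (L 308299493788789546433))) (N (N (L 550556609)
 (L 558423905))
 (N (L 128211507418086421109353023560898)
 (L 28266634814682235199899089947555024307196516917933875916043151220512)))) (N (N (N (L 753519556312040707254530)
 (L 1101238301824183757175801213838536272738))
 (N (L 1370894582140479950724543209727876290)
 (L 37475960904258081))) (N (N (L 550564225)
 (L 20341452256934149917944601827))
 (N (L 1060577188421265882444439236420170083)
 (L 0))))) (N (N (N (N (L 6430363294797646434971804972367895256485173829195506480540610638353798314310463831728990146)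
 (L 145240227941165237354361562718071349002814623746))
 (N (L 1474670340598597412249442)
 (L 28186702129331541356095877091404063499440994628343095394451384381012978817964835084831803760467748104587670587029646048148276112199552643296797851522018700577))) (N (N (L 550559649)
 (L 32583174304465637271795769828770))
 (N (L 8592544018243415275271533260708342703972)
 (L 0)))) (N (N (N (L 263573863932137932335361)
 (L 558423873))
 (N (L 116806798767759674067223223598321268965607920751469130789753067881306879041750521539)
 (L 11177540564069389571063348636690633246945))) (N (N (L 550562049)
 (L 6226708901678515000287444541542390467028416575662785))
 (N (L 243504837637510887697091)
 (L 0)))))))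
theorem t121312_0 : chkR (hexb (nat_lit 1) (nat_lit 2) (nat_lit 1) (nat_lit 3) (nat_lit 1) (nat_lit 2)) tr121312 (nat_lit 3) (nat_lit 0) = true := by decide +kernel
theorem t121312_3 : chkR (hexb (nat_lit 1) (nat_lit 2) (nat_lit 1) (nat_lit 3) (nat_lit 1) (nat_lit 2)) tr121312 (nat_lit 14) (nat_lit 3) = true := by decide +kernel
theorem t121312_17 : chkR (hexb (nat_lit 1) (nat_lit 2) (nat_lit 1) (nat_lit 3) (nat_lit 1) (nat_lit 2)) tr121312 (nat_lit 10) (nat_lit 17) = true := by decide +kernel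
theorem t121312_27 : chkR (hexb (nat_lit 1) (nat_lit 2) (nat_lit 1) (nat_lit 3) (nat_lit 1) (nat_lit 2)) tr121312 (nat_lit 10) (nat_lit 27) = true := by decide +kernel
theorem t121312_37 : chkR (hexb (nat_lit 1) (nat_lit 2) (nat_lit 1) (nat_lit 3) (nat_lit 1) (nat_lit 2)) tr121312 (nat_lit 10) (nat_lit 37) = true := by decide +kernel
theorem t121312_47 : chkR (hexb (nat_lit 1) (nat_lit 2) (nat_lit 1) (nat_lit 3) (nat_lit 1) (nat_lit 2)) tr121312 (nat_lit 7) (nat_lit 47) = true := by decide +kernel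
theorem t121312_54 : chkR (hexb (nat_lit 1) (nat_lit 2) (nat_lit 1) (nat_lit 3) (nat_lit 1) (nat_lit 2)) tr121312 (nat_lit 4) (nat_lit 54) = true := by decide +kernel
def tr121313 : T :=
  open T in
 (N (N (N (N (N (L 7548577711567998021392753969798210217263268321919780037)
 (L 100102522312315144083682555782737053132807131511101502077305929377590371))
 (N (L 13728793925499181378921838016791194711107298)
 (L 6295714037746239768064761835792409346370918765471936353173200093817255419250993082708501263932379561624676630705598978))) (N (N (L 159099569383196914047655812112047710175498650446909717620451)
 (L 753321884512599149069100670668405300320607954369))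
 (N (L 1175456767410986201228335280048106178)
 (L 37264800947736769)))) (N (N (N (L 15524865032646609778143466755)
 (L 2483085992678985699971522))
 (N (L 8377911720391087314939963553)
 (L 554961217))) (N (N (L 746898565164368060277320187972138731393261020930)
 (L 55504770344516759372288050884494230775958297268280242907421416276497244491093743530315809332426100836699547881367843074191916737235265))
 (N (L 3648052995241084545630535500708240673900736301786532)
 (L 37159251941574465))))) (N (N (N (N (L 201563226231287577236037916919257539694919110223411952208720544093296838)
 (L 464961268624902160453741273896139320304724455010))
 (N (L 48553851343723141020580660681671131925222416500351575241358450508558690)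
 (L 27843552645340260935516348307567625454038433))) (N (N (L 81777324767344341710250096782435)
 (L 51295837911849199108181054547381691082187604431262354372441672165383728578255693859))
 (N (L 902966299979975804169746937952721291942859296182666172909795243262305441596149825021572)
 (L 92305634251345935514404706598899610079565793)))) (N (N (N (L 20243474925039530020428435971)
 (L 12072387845141699319614154371))
 (N (L 154384882551029957871230644492493290704846782221636578359535749319919153480359235700702209278331355382561906025993785092354)
 (L 92217043534754015129796151779941420113719201))) (N (N (L 61249552129289528018547768601122)
 (L 2680110632962680486536476187639598082754))
 (N (L 412965957245070659200943759206691483570276841517282274578435)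
 (L 169723741847089443891152495017709706147526014940688282853184))))))
theorem t121313_0 : chkR (hexb (nat_lit 1) (nat_lit 2) (nat_lit 1) (nat_lit 3) (nat_lit 1) (nat_lit 3)) tr121313 (nat_lit 10) (nat_lit 0) = true := by decide +kernel
theorem t121313_10 : chkR (hexb (nat_lit 1) (nat_lit 2) (nat_lit 1) (nat_lit 3) (nat_lit 1) (nat_lit 3)) tr121313 (nat_lit 6) (nat_lit 10) = true := by decide +kernel
theorem t121313_16 : chkR (hexb (nat_lit 1) (nat_lit 2) (nat_lit 1) (nat_lit 3) (nat_lit 1) (nat_lit 3)) tr121313 (nat_lit 6) (nat_lit 16) = true := by decide +kernel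
theorem t121313_22 : chkR (hexb (nat_lit 1) (nat_lit 2) (nat_lit 1) (nat_lit 3) (nat_lit 1) (nat_lit 3)) tr121313 (nat_lit 7) (nat_lit 22) = true := by decide +kernel
theorem t121313_29 : chkR (hexb (nat_lit 1) (nat_lit 2) (nat_lit 1) (nat_lit 3) (nat_lit 1) (nat_lit 3)) tr121313 (nat_lit 3) (nat_lit 29) = true := by decide +kernel
def tr123212 : T :=
  open T in
 (N (N (N (N (N (N (L 688749283302342324676219434558332515)
 (L 2505521268940627934572609))
 (N (L 2127491421784232758667906)
 (L 0))) (N (N (L 30421397788748001)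
 (L 0))
 (N (L 4514565156225)
 (L 0)))) (N (N (N (L 36544904330722129222180635960606214574740936818218557349)
 (L 167984219407867932842082459737089))
 (N (L 27315939542512958451529293556205313287563043)
 (L 0))) (N (N (L 728283309430841610642898863419402303344050621542655610926487332)
 (L 0))
 (N (L 2990078837313499154961800930592323029310646118634375565391085268901015351922035343520455501474319423745)
 (L 0))))) (N (N (N (N (L 4089773690973583347356282000893511527588)
 (L 2503160071857733238103297))
 (N (L 1360384246220568894117166670646405954)
 (L 0))) (N (N (L 79663952967894868794612328156771958782070566528679474895621814474222349447352849380033578883782735574068934910973909690337)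
 (L 0))
 (N (L 554715457)
 (L 0)))) (N (N (N (L 88681509623679918970511482366073228186625699)
 (L 0))
 (N (L 91783991648675672265606632784749969457130530)
 (L 0))) (N (N (L 8226623342189489895899458506429860534722)
 (L 0))
 (N (L 2503159076842981903903681)
 (L 0)))))) (N (N (N (N (N (L 43327093544900524356199032697191724537679462207595462090914457165635074638939983968446426425288588543754525956)
 (L 6197523832809473042593077601777445028155546211544833))
 (N (L 1019154400566849086204322)
 (L 0))) (N (N (L 23365231933243457692188621059350564867476940235556507517816833335446045803014944616632397842271804641318219)
 (L 0))
 (N (L 36983317446389601)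
 (L 0)))) (N (N (N (L 9570822178372280647938537966130512824614258281220737180629771684418221487281307551003467637060531297947463953817170395551606576589347105993283476919662367789222432974748878585914942333510020544839212454850186951926869890)
 (L 38116135841540204956321701472493785613730751718926330960228795523170527850973496964695827785676621432768000))
 (N (L 167263864702682388418456610164258)
 (L 0))) (N (N (L 2408760302222771003703558905346603064640725642352883712136147242491112674654248208332818861514146818810193505465699048992094337571895417318339)
 (L 0))
 (N (L 37212026491989633)
 (L 0))))) (N (N (N (N (L 1235886035428859747228928469894095146017717995123448189263308772)
 (L 2509063332088056646834273))
 (N (L 8609448130133614613190480991764704776387)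
 (L 0))) (N (N (L 1185918319092345337382405823559670593899633552852809949828181868375235010789791133512901088653217720401135635277603)
 (L 0))
 (N (L 152914170765500541569)
 (L 0)))) (N (N (N (L 10829379305646322888354947459763920344409767191949086786)
 (L 0))
 (N (L 167271089239722473844218465430753)
 (L 0))) (N (N (L 885407520444626525490319497690409730)
 (L 0))
 (N (L 167587876174598531198866714611233)
 (L 0)))))))
theorem t123212_0 : chkR (hexb (nat_lit 1) (nat_lit 2) (nat_lit 3) (nat_lit 2) (nat_lit 1) (nat_lit 2)) tr123212 (nat_lit 5) (nat_lit 0) = true := by decide +kernel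
theorem t123212_5 : chkR (hexb (nat_lit 1) (nat_lit 2) (nat_lit 3) (nat_lit 2) (nat_lit 1) (nat_lit 2)) tr123212 (nat_lit 5) (nat_lit 5) = true := by decide +kernel
theorem t123212_10 : chkR (hexb (nat_lit 1) (nat_lit 2) (nat_lit 3) (nat_lit 2) (nat_lit 1) (nat_lit 2)) tr123212 (nat_lit 3) (nat_lit 10) = true := by decide +kernel
theorem t123212_13 : chkR (hexb (nat_lit 1) (nat_lit 2) (nat_lit 3) (nat_lit 2) (nat_lit 1) (nat_lit 2)) tr123212 (nat_lit 9) (nat_lit 13) = true := by decide +kernel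
theorem t123212_22 : chkR (hexb (nat_lit 1) (nat_lit 2) (nat_lit 3) (nat_lit 2) (nat_lit 1) (nat_lit 2)) tr123212 (nat_lit 12) (nat_lit 22) = true := by decide +kernel
theorem t123212_34 : chkR (hexb (nat_lit 1) (nat_lit 2) (nat_lit 3) (nat_lit 2) (nat_lit 1) (nat_lit 2)) tr123212 (nat_lit 4) (nat_lit 34) = true := by decide +kernel
def tr123232 : T :=
  open T in
 (N (N (N (N (N (N (N (L 1063134081406938046378096402473298252617489723880267018453085368935803326845983954130946689901158434079568606757234747044814115)
 (L 2540940315163556007177089))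
 (N (L 38773551498337120715372776160117436516294780829935902180)
 (L 0))) (N (N (L 4690267154170674731464650418435)
 (L 0))
 (N (L 6261770642137427555387111139408946384429937415333488849052812090049882166716609)
 (L 0)))) (N (N (N (L 9004320552022486694939159874)
 (L 0))
 (N (L 558106849)
 (L 0))) (N (N (L 22940420283003688677097692442386736062217420160118319588)
 (L 0))
 (N (L 2574643403941728814658320969638295329580102963820127320717263338462903232823908031308866209468893498267621778367845)
 (L 0))))) (N (N (N (N (L 46982241759837822667538694942570786455692245776894044965)
 (L 0))
 (N (L 303976319615651041570)
 (L 0))) (N (N (L 5094222286563365607188426351063763527300)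
 (L 0))
 (N (L 1391055518995648195680985789567114850)
 (L 0)))) (N (N (N (L 4611056296162268949710124234161528319140)
 (L 0))
 (N (L 124985414361121123650)
 (L 0))) (N (N (L 2316622686593052661025732)
 (L 0))
 (N (L 133222175599238900918962652468046657)
 (L 0)))))) (N (N (N (N (N (L 73539259858943860397201282863938)
 (L 20834756384278633277993020448))
 (N (L 8229165397438875187658818307687678850557105728141560846978824331171)
 (L 0))) (N (N (L 511607002295932441002382794918302755)
 (L 0))
 (N (L 4147970049517218272079728543799422768118617679385896855906550344578)
 (L 0)))) (N (N (N (L 143264839142878472438967503183137)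
 (L 0))
 (N (L 558106945)
 (L 0))) (N (N (L 26238004162177032909154791969765000828777717239606243213889672893346)
 (L 0))
 (N (L 187031481485397848308997059779755776810056305082354417649757586751469264308631552581909522738788316018406678946)
 (L 0))))) (N (N (N (N (L 91121052037868279723932737262293530817373922)
 (L 0))
 (N (L 558114977)
 (L 0))) (N (N (L 147291326966293783562582913543364)
 (L 0))
 (N (L 308444242296298809378)
 (L 0)))) (N (N (N (L 203217167311543859367558145560023044)
 (L 0))
 (N (L 272991765300536433921)
 (L 0))) (N (N (L 7272955091092560901706498077006365026552811668335250892335309099896141230889675834546988675)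
 (L 0))
 (N (L 542529383701972687877630529)
 (L 0))))))) (N (N (N (N (N (N (L 182055586754828485764202222176983889778412569691453387466350752659843098659)
 (L 20844396097888044611075910753))
 (N (L 4630625799360635389085530109600527886681151009314518434636365714888251429147553389090959620908366261026)
 (L 0))) (N (N (L 50563353908297203984150694733666)
 (L 0))
 (N (L 37493529813460610)
 (L 0)))) (N (N (N (L 412838245116681630275134217321189507)
 (L 0))
 (N (L 558114721)
 (L 0))) (N (N (L 308376760427030934572231675433450640902427830434)
 (L 0))
 (N (L 503376901896910503061604014688015283071353108359234836360717316)
 (L 0))))) (N (N (N (N (L 3392455467182800803765055045895907220835)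
 (L 0))
 (N (L 6999295774057699295996742377678726912875957749364991906669690650169193449204705)
 (L 0))) (N (N (L 30462073008608971907417661568126628910950845794160020868)
 (L 0))
 (N (L 405817190088663472575681336881763234)
 (L 0)))) (N (N (N (L 2262850614785015073904443383036043011978319822678820)
 (L 0))
 (N (L 930183881078837402554724859548659522)
 (L 0))) (N (N (L 289786691404183397407235267622386463685888519331)
 (L 0))
 (N (L 161560772904983320800204988667797682792283365065664099073238770335115842)
 (L 0)))))) (N (N (N (N (N (L 2324886566109987088717570)
 (L 0))
 (N (L 143344008680933928113912825064450)
 (L 0))) (N (N (L 86028942951320493006940522158044437835580798039275853545644581207232665043651586946)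
 (L 0))
 (N (L 305561727437142289186)
 (L 0)))) (N (N (N (L 43689712608982143898018677861948401031960134233257930493005096544954403)
 (L 0))
 (N (L 558108769)
 (L 0))) (N (N (L 410974722410559583913167379955320636075789830574295063750371)
 (L 0))
 (N (L 621947434737681830795560617687672770)
 (L 0))))) (N (N (N (N (L 2265555568384612868426858808158815255942457085766850)
 (L 0))
 (N (L 558114561)
 (L 0))) (N (N (L 405118697004359345187851333603559840956136535643744053315683)
 (L 0))
 (N (L 1279421231403976318899107935949203171)
 (L 0)))) (N (N (N (L 11619267062857838457521808976187972308596843517752300628643)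
 (L 0))
 (N (L 6881443907634020133657722138458155127075)
 (L 0))) (N (N (L 163997579741949383132404203429961986784844293905987)
 (L 0))
 (N (L 169013934780368557123990032068385)
 (L 0))))))))
theorem t123232_0 : chkR (hexb (nat_lit 1) (nat_lit 2) (nat_lit 3) (nat_lit 2) (nat_lit 3) (nat_lit 2)) tr123232 (nat_lit 8) (nat_lit 0) = true := by decide +kernel
theorem t123232_8 : chkR (hexb (nat_lit 1) (nat_lit 2) (nat_lit 3) (nat_lit 2) (nat_lit 3) (nat_lit 2)) tr123232 (nat_lit 11) (nat_lit 8) = true := by decide +kernel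
theorem t123232_19 : chkR (hexb (nat_lit 1) (nat_lit 2) (nat_lit 3) (nat_lit 2) (nat_lit 3) (nat_lit 2)) tr123232 (nat_lit 8) (nat_lit 19) = true := by decide +kernel
theorem t123232_27 : chkR (hexb (nat_lit 1) (nat_lit 2) (nat_lit 3) (nat_lit 2) (nat_lit 3) (nat_lit 2)) tr123232 (nat_lit 7) (nat_lit 27) = true := by decide +kernel
theorem t123232_34 : chkR (hexb (nat_lit 1) (nat_lit 2) (nat_lit 3) (nat_lit 2) (nat_lit 3) (nat_lit 2)) tr123232 (nat_lit 14) (nat_lit 34) = true := by decide +kernel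
theorem t123232_48 : chkR (hexb (nat_lit 1) (nat_lit 2) (nat_lit 3) (nat_lit 2) (nat_lit 3) (nat_lit 2)) tr123232 (nat_lit 9) (nat_lit 48) = true := by decide +kernel
theorem t123232_57 : chkR (hexb (nat_lit 1) (nat_lit 2) (nat_lit 3) (nat_lit 2) (nat_lit 3) (nat_lit 2)) tr123232 (nat_lit 8) (nat_lit 57) = true := by decide +kernel
theorem t123232_65 : chkR (hexb (nat_lit 1) (nat_lit 2) (nat_lit 3) (nat_lit 2) (nat_lit 3) (nat_lit 2)) tr123232 (nat_lit 2) (nat_lit 65) = true := by decide +kernel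
def tr123132 : T :=
  open T in
 (N (N (N (N (N (N (N (L 8891520820968986072242592239179806599046788)
 (L 45378600540870785776454762843144977827364190893734930435))
 (N (L 15630992043585662408503614593)
 (L 2578725564400074356286593))) (N (N (L 1038484172832299969081294977191218242)
 (L 301324673585868553453674089939280100))
 (N (L 912089431041470778835064506518484801759464271162149)
 (L 0)))) (N (N (N (L 587046872338292079135528929194048158878957167491)
 (L 70093266208862417261235952250605091441928546))
 (N (L 1482389435847240801739165164525775569396725010196739)
 (L 0))) (N (N (L 157983887963036173233524827598115)
 (L 313999799248017408602899348160239829988458885259898654517524172451546330763751893514455433326019334914862817505))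
 (N (L 37109117327056995)
 (L 0))))) (N (N (N (N (L 956297323315577324181521617213351093971771446705511080234601417615290807513091624968195)
 (L 20786360281312919660321678020))
 (N (L 2359151260252500341879344777521068962195934925679907)
 (L 0))) (N (N (L 578830312205271647589869840434134751222186434404)
 (L 11426248454635475055458245400067340853697))
 (N (L 764004807725027932821670390180682031408313048644)
 (L 0)))) (N (N (N (L 121867799198003259692891137911074)
 (L 43572632372467661747990356746557519982704740891135413969120284905331875))
 (N (L 1194016568418296151201004559489194001135519527127850199797737666)
 (L 0))) (N (N (L 128038746739208338775642280601379)
 (L 313488854534254846433))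
 (N (L 1043250264139413610063990400071469652974860720326211953264474117383193057035917151823527)
 (L 0)))))) (N (N (N (N (N (L 4307515358718511145456048211783972383619)
 (L 51560401797335212268577199446803469583761096159339748323))
 (N (L 19296946281895950093105519653)
 (L 0))) (N (N (L 55206036358980121030562943345819102574502520425996471500516577298209661543375707588)
 (L 231883859187135565086634267861788737312404084456366437929301166349181410))
 (N (L 5056875120503641108427685017613348904087496375759624402105103645031)
 (L 0)))) (N (N (N (L 587026049125750309400064876468551377640231870691)
 (L 170583023795749575829409863376868))
 (N (L 180464645714092717048756808668420962)
 (L 0))) (N (N (L 11246272358250017538338335466211394036546)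
 (L 15742413027672952324240746153985157186041502174480995149110985109517708178088865))
 (N (L 306570641928844026083)
 (L 0))))) (N (N (N (N (L 11901549047900150639085043415442660599175984106016614267856132512741)
 (L 8566379761623066922511838518360771082652960928830182780637335222707780335305424842567557827))
 (N (L 636206523110515706273515729764512867)
 (L 0))) (N (N (L 401470301220183059526089534116629178106204708739)
 (L 570727969))
 (N (L 920858440999665303695143327124907162813358908402148)
 (L 0)))) (N (N (N (L 576643228800571906113225053506275155375627476547)
 (L 9748079088998328720154719166300948073958240488464654563))
 (N (L 1347189248077751568866754)
 (L 0))) (N (N (L 78132839536866013990023006314403)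
 (L 11613550195359031779967912691709644713601))
 (N (L 7459191592203960308086891940)
 (L 0))))))) (N (N (N (N (N (N (L 47791254314750704458424979505586540544751271363161050163895053239287730049924590852)
 (L 33723887065222941213576256680275697359184226))
 (N (L 9722952660259592086474449035947055022104908374328080068)
 (L 1080965204421625989273056124080047810075420947023202697193811450133721690087265370329271724178308371846596588823773868349934149317268033125456051370709486975896462039965737159296))) (N (N (L 372190192360924609568545)
 (L 3323594581872257829857989924163925371171))
 (N (L 20573607338180515138453463492)
 (L 0)))) (N (N (N (L 4724285202125221211991764001225724488101184070772131)
 (L 26439742941469876459392911798353882279863915759112380868))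
 (N (L 11008244829684041793826035466534479752109176851059111427681770528177588082789932546899791996519345913987047758438663736841021142001435516146255381128795148650311319604359386802478712449259288779235)
 (L 0))) (N (N (L 56073922429821502865975109191004891487902112706)
 (L 427282415362452727417685223608529990719872549732050308979745))
 (N (L 37374118819635907)
 (L 0))))) (N (N (N (N (L 652662079478512147335485398964763907209490944261342448431419782)
 (L 171153607762263240324538410836676))
 (N (L 306714489870641831395)
 (L 0))) (N (N (L 11834489651755565985199185885026533543675380081164347395)
 (L 20825085166622229575560963361))
 (N (L 11390215730108763201431553374998987635044)
 (L 0)))) (N (N (N (L 3048966708129624410038511427)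
 (L 975309113989040753143657520166595848282926634410009413729098399070378077646596412295676161622541487330224572767842))
 (N (L 12157509423765451750282489314)
 (L 0))) (N (N (L 20397473693114274381416230242)
 (L 38285284992723969))
 (N (L 24073508403324687891834962496723840880631052687569132904851906904386618998521194083)
 (L 0)))))) (N (N (N (N (N (L 1214482738580403630016062823921359682)
 (L 702571094497542565247355416237245938814951189443))
 (N (L 11076806360573401569820861577174129071929448802124107060775967082305888962224577836994780384116333940673909470268542313604738438612487761481782631168295865623654848168777925995914563184099751701199609983754690)
 (L 0))) (N (N (L 1102556379151865484501632595079692556666350911609253228937047772824135031972)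
 (L 20796087394708135920289259617))
 (N (L 998967710139708652385675382766019397)
 (L 0)))) (N (N (N (L 265488186610484142523319139833310050)
 (L 1043826993973836538639973191278866040402894856144566137674365125365466802088275848028612))
 (N (L 24738879689610732865211433591522)
 (L 0))) (N (N (L 752533945867478654950696718287264487749825862339)
 (L 52135162961756083331916411135463099910912295387303112289))
 (N (L 18235227984939005641394975049222434646335555004084231056496398283582729761708682337952527744372330892719952825631033003518556236605572400836730780798938713696615599310103783778737583334148473534781600595052329849366700193848755199219985431464095702289210306343220926517879061688338981732)
 (L 0))))) (N (N (N (N (L 174387586595058943459870309885197282315601848636360125453576279927370180)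
 (L 11432756320950717956251422135689206586531))
 (N (L 2826725537718824953302835303995769131420907544506817732)
 (L 0))) (N (N (L 166838354184040834069385874046309841768055671933110548039873542700524643)
 (L 38285272163151425))
 (N (L 174902671683346191725455137968725922314560190736814069577582654440764097932967574954251302883887279695519729728542495635633062937770010934440289772373599879795711925928461308230865115495961749118534707491765545283)
 (L 0)))) (N (N (N (L 11182830989205819338640129018298970181826)
 (L 1900378738342093800440031987925373573732212726593199775082303383856153993922))
 (N (L 49700042724286998848768301485889734766779681)
 (L 0))) (N (N (L 30335319892517632304226207850039491942577601349925410363561593169407709801920159285442786499055143997152162)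
 (L 427483483570059918497823076236452033798665702023652598721601))
 (N (L 30060713651185681822413678773540921780237891470387717051772017338948503026799533956)
 (L 0))))))))
theorem t123132_0 : chkR (hexb (nat_lit 1) (nat_lit 2) (nat_lit 3) (nat_lit 1) (nat_lit 3) (nat_lit 2)) tr123132 (nat_lit 7) (nat_lit 0) = true := by decide +kernel
theorem t123132_7 : chkR (hexb (nat_lit 1) (nat_lit 2) (nat_lit 3) (nat_lit 1) (nat_lit 3) (nat_lit 2)) tr123132 (nat_lit 11) (nat_lit 7) = true := by decide +kernel
theorem t123132_18 : chkR (hexb (nat_lit 1) (nat_lit 2) (nat_lit 3) (nat_lit 1) (nat_lit 3) (nat_lit 2)) tr123132 (nat_lit 8) (nat_lit 18) = true := by decide +kernel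
theorem t123132_26 : chkR (hexb (nat_lit 1) (nat_lit 2) (nat_lit 3) (nat_lit 1) (nat_lit 3) (nat_lit 2)) tr123132 (nat_lit 9) (nat_lit 26) = true := by decide +kernel
theorem t123132_35 : chkR (hexb (nat_lit 1) (nat_lit 2) (nat_lit 3) (nat_lit 1) (nat_lit 3) (nat_lit 2)) tr123132 (nat_lit 6) (nat_lit 35) = true := by decide +kernel
theorem t123132_41 : chkR (hexb (nat_lit 1) (nat_lit 2) (nat_lit 3) (nat_lit 1) (nat_lit 3) (nat_lit 2)) tr123132 (nat_lit 7) (nat_lit 41) = true := by decide +kernel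
theorem t123132_48 : chkR (hexb (nat_lit 1) (nat_lit 2) (nat_lit 3) (nat_lit 1) (nat_lit 3) (nat_lit 2)) tr123132 (nat_lit 7) (nat_lit 48) = true := by decide +kernel
theorem t123132_55 : chkR (hexb (nat_lit 1) (nat_lit 2) (nat_lit 3) (nat_lit 1) (nat_lit 3) (nat_lit 2)) tr123132 (nat_lit 4) (nat_lit 55) = true := by decide +kernel
theorem t123132_59 : chkR (hexb (nat_lit 1) (nat_lit 2) (nat_lit 3) (nat_lit 1) (nat_lit 3) (nat_lit 2)) tr123132 (nat_lit 2) (nat_lit 59) = true := by decide +kernel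
theorem t123132_61 : chkR (hexb (nat_lit 1) (nat_lit 2) (nat_lit 3) (nat_lit 1) (nat_lit 3) (nat_lit 2)) tr123132 (nat_lit 9) (nat_lit 61) = true := by decide +kernel
theorem t123132_70 : chkR (hexb (nat_lit 1) (nat_lit 2) (nat_lit 3) (nat_lit 1) (nat_lit 3) (nat_lit 2)) tr123132 (nat_lit 7) (nat_lit 70) = true := by decide +kernel
theorem t123132_77 : chkR (hexb (nat_lit 1) (nat_lit 2) (nat_lit 3) (nat_lit 1) (nat_lit 3) (nat_lit 2)) tr123132 (nat_lit 7) (nat_lit 77) = true := by decide +kernel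
theorem t123132_84 : chkR (hexb (nat_lit 1) (nat_lit 2) (nat_lit 3) (nat_lit 1) (nat_lit 3) (nat_lit 2)) tr123132 (nat_lit 8) (nat_lit 84) = true := by decide +kernel
theorem t123132_92 : chkR (hexb (nat_lit 1) (nat_lit 2) (nat_lit 3) (nat_lit 1) (nat_lit 3) (nat_lit 2)) tr123132 (nat_lit 6) (nat_lit 92) = true := by decide +kernel
def tr123213 : T :=
  open T in
 (N (N (N (N (N (N (N (L 44493918510156865867631937862744973826559674890502544227)
 (L 52513603944630218752505522715607766843099503180425221265834321692497147503977763383052298429080819335129051284296367947752920348043719035184782884))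
 (N (L 3928917133595008314117744130)
 (L 11448121575674380141764878554769039647843))) (N (N (L 27721240198229868726042731753936652897278549940663205782196373870408882104810297114333827674042282687194725)
 (L 488254611036874477252416386710778896872747332968736189789874346330998457391584161168466816931694074199832703739007593524087909009111652326910259712498276396692947343253336794916))
 (N (L 1384564438331377037791416959126758915)
 (L 423274815748109664768964257989811427)))) (N (N (N (L 19425423612138752264091899590355735884118562592169401314)
 (L 144602831263410264194576753275710134051701891907))
 (N (L 87247706984336384825878803714868730613718529197767768574285193427886180)
 (L 575151073))) (N (N (L 289465939266519228175837340068433448391226741570)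
 (L 11710189062533289940421539194048505466665388446381975720585447875408671887942115))
 (N (L 2882306008742932180443372994)
 (L 7836438111649045517304386562))))) (N (N (N (N (L 410777266234126867144017392935891702729535116514126579913124)
 (L 4312481042205403043133779655345924217732))
 (N (L 249972306235774105539946491517872227)
 (L 6401527802550420779792393741113730864884801008835459))) (N (N (L 3323595124518775238581463963938765184451)
 (L 79461762709832672170823512982648674565716846250746642031780))
 (N (L 868838495427544047183897071230000111720950815024515)
 (L 398569318218226338633085654598086650650924337043118642723922658)))) (N (N (N (L 4120871047480332288214452747840668851459)
 (L 20832791937442926801486997061))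
 (N (L 17737831205077666617271899649038474590068291)
 (L 575970913))) (N (N (L 166727599652062875691532113635052485539598414905344165502506622497376919227057035467669715806249565303416993961634183554819)
 (L 6308130868487148154430062973064014151060584917476162))
 (N (L 7239745783603292554542406461436891272114204671117962773000890091963944085966183263357696496535857302187173)
 (L 422580334282989214695977402439016176379231859309120244261697)))))) (N (N (N (N (N (L 868200498107856849009188123816250263203097131984262)
 (L 87406208179785296831060272579252450010773098564524755309080824361802382091020482592837962617133271336411756963772899774360415826453220))
 (N (L 13880377732102837753409726148)
 (L 2548031503593179079531747))) (N (N (L 29297633117318608974780014426580424490963449437982868812200690837371657127142652924907621647632614348890276)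
 (L 16073284290092022092988352242654619063022169206633367628529320620313805121679815677030601679236))
 (N (L 56893637709694743297504341205090)
 (L 50136449466390585728428963387088135348575458)))) (N (N (N (L 7230817291156815489716287037255346437905988889695658595646394870209684734745412)
 (L 957943225646227155692677))
 (N (L 2491376276702019144225447391538306794212669898760000232259276784331813562923148708534923365)
 (L 575967873))) (N (N (L 49499593846019447546907393425279633097197543796434920322)
 (L 11474899520601192630348811315415450460355))
 (N (L 127000836611553484018310812904654249905630297382110939724458582910841134596792573761)
 (L 232735426773432287808691821102720918323576060965196784575663366692269411))))) (N (N (N (N (L 368247770367726995544046254305246715235230588355)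
 (L 604474724042246672728240910234903866512962264547))
 (N (L 78139561176040052807561434916259)
 (L 2280066898880583093733290536749578870329152922084441511202464804159055483969601))) (N (N (L 4292119552743053370879623115570522202914)
 (L 20824014370347604403911779492))
 (N (L 2529136272244591160761922)
 (L 138619995709279084780743523430708630533636550713253486188322017)))) (N (N (N (L 675458695071440340719483749007050427974664608995)
 (L 130424975220205502325176546968053787392902476625120527032369839732847638250487095231576752411725505705956315834330724245701))
 (N (L 462133906323514644717677904147096434919279992419)
 (L 575976897))) (N (N (L 145249721042561214326334034398376392956162662851)
 (L 2235170256109760156048834))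
 (N (L 410860077298038714785414656762412212463069789936626748707752107322895574321179494378078717277751497095000438943047773533838807500066176545161299971827172)
 (L 130444103719433453885026096465516161554154656587918157998106008321007612721719799137))))))) (N (N (N (N (N (N (L 61600144972386671490270300037163696021419522550477820304963)
 (L 127643178157121344974998665295076917909038201781841530339307807639396109716706682021))
 (N (L 466735732513572630240499652515880163)
 (L 82630872814064297806040596525743443413878477906833658390306))) (N (N (L 1190213650685919963410383697010100247342528785080067)
 (L 633387442127297033643514229093186273458340477968686608707840841424259560719186868117701))
 (N (L 256226157533672144214811584242120959172807534595)
 (L 51604866540674216118042226573731679138307224267112374178)))) (N (N (N (L 27646554395526878418309575784503816911210999706437833973965330112387)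
 (L 1496751653815050622401326937679771264343038829983169057542352613105419705634))
 (N (L 85773345320288158864221259981305220054915906)
 (L 37880688460014337))) (N (N (L 502518493521168350776848367139953475)
 (L 2556294635973555163536899))
 (N (L 400005864673402288346350272595293390248232985858)
 (L 1603919791730628391153589868739210796761247651572224597130272675))))) (N (N (N (N (L 711930954046113219047207306480500617604524190692)
 (L 975308794766575379000559737729051869738704457292815892242496266443604295076161618424987690932561664726144062627332))
 (N (L 956286877084293424476665710732060752638383617530307723035517765)
 (L 2165404601699520332457020317808177242018))) (N (N (L 166934688707859664046858232700482)
 (L 150022412250699312172814711050492990751495652461984055243168394822312238198476004004309108464195708997401592866333367298691))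
 (N (L 448578967522387297351663617923598230991565249763)
 (L 32010578771653018947804867897121)))) (N (N (N (L 356472710094002285837906255756867598187518323459)
 (L 35326186135350754810447513941690493905446694))
 (N (L 13680442501624037238189718270391491874366851)
 (L 575973377))) (N (N (L 1514561781222312527014926908968611245209312506194723)
 (L 462106461328723755661762229827379783918434933987))
 (N (L 37282460196741250)
 (L 1400797114033340062022342675596667809)))))) (N (N (N (N (N (L 27183154319900468338440005073380997751695364)
 (L 311059585021275036836))
 (N (L 49531481526495657732073207930468)
 (L 311039001903464212066))) (N (N (L 783808156347788311140820438095948649226377024549830209478448279791444815203)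
 (L 345795430441692429160387627659777447173515756535382713571776368382399427590719196794837076156948677))
 (N (L 58895003265895191849945306778930180486940907982661134100163)
 (L 16728186811235534046973536850427513994584899)))) (N (N (N (L 8098354242848634233660180414583042861734361836346479052764737638098176212786948)
 (L 28513749951678967402508418044637425635133496825252399415679327461125))
 (N (L 620525616806291464952745843833444099739281907076074539646849271751879404109158200681465085992779837900651433339747)
 (L 575973121))) (N (N (L 116626451943742266561)
 (L 4729518496300510875839514348369520804818366572830178))
 (N (L 2394666871494774965212228466808224076241342669528035)
 (L 131260018025550820868228963775703927486223160759719875861797352213012418891715551970))))) (N (N (N (N (L 6118135263672017051666432877425216542887227604920355)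
 (L 604533444586268686995771061473514639788780101828))
 (N (L 14943664396762408247495987678133166718207488432735366403)
 (L 575154465))) (N (N (L 204525845583039953879914912800834819)
 (L 28502861204144151213477616529514782287346771476553056327686229368291))
 (N (L 548130105012556466427400879035990669824077967458)
 (L 8586027917408007342138600710752170270943836346091065545044460524268685845231701414901455810)))) (N (N (N (L 79660150230351317928342111423598366631207069156363348782050)
 (L 422775247612528190583805491823426219507140715937896208571908))
 (N (L 205129181179770980785096471814937943068993104892550848063074296617304332995)
 (L 289470212218978655275519495373110497323591246661))) (N (N (L 17648841411194946400526641462726763233680259)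
 (L 34667079858262520357946751508258829511881449218))
 (N (L 37373006716658115)
 (L 239001849771108204984081443130728431518718374841549018625894825075993824))))))))
theorem t123213_0 : chkR (hexb (nat_lit 1) (nat_lit 2) (nat_lit 3) (nat_lit 2) (nat_lit 1) (nat_lit 3)) tr123213 (nat_lit 9) (nat_lit 0) = true := by decide +kernel
theorem t123213_9 : chkR (hexb (nat_lit 1) (nat_lit 2) (nat_lit 3) (nat_lit 2) (nat_lit 1) (nat_lit 3)) tr123213 (nat_lit 7) (nat_lit 9) = true := by decide +kernel
theorem t123213_16 : chkR (hexb (nat_lit 1) (nat_lit 2) (nat_lit 3) (nat_lit 2) (nat_lit 1) (nat_lit 3)) tr123213 (nat_lit 7) (nat_lit 16) = true := by decide +kernel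
theorem t123213_23 : chkR (hexb (nat_lit 1) (nat_lit 2) (nat_lit 3) (nat_lit 2) (nat_lit 1) (nat_lit 3)) tr123213 (nat_lit 8) (nat_lit 23) = true := by decide +kernel
theorem t123213_31 : chkR (hexb (nat_lit 1) (nat_lit 2) (nat_lit 3) (nat_lit 2) (nat_lit 1) (nat_lit 3)) tr123213 (nat_lit 11) (nat_lit 31) = true := by decide +kernel
theorem t123213_42 : chkR (hexb (nat_lit 1) (nat_lit 2) (nat_lit 3) (nat_lit 2) (nat_lit 1) (nat_lit 3)) tr123213 (nat_lit 7) (nat_lit 42) = true := by decide +kernel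
theorem t123213_49 : chkR (hexb (nat_lit 1) (nat_lit 2) (nat_lit 3) (nat_lit 2) (nat_lit 1) (nat_lit 3)) tr123213 (nat_lit 9) (nat_lit 49) = true := by decide +kernel
theorem t123213_58 : chkR (hexb (nat_lit 1) (nat_lit 2) (nat_lit 3) (nat_lit 2) (nat_lit 1) (nat_lit 3)) tr123213 (nat_lit 6) (nat_lit 58) = true := by decide +kernel
theorem t123213_64 : chkR (hexb (nat_lit 1) (nat_lit 2) (nat_lit 3) (nat_lit 2) (nat_lit 1) (nat_lit 3)) tr123213 (nat_lit 5) (nat_lit 64) = true := by decide +kernel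
theorem t123213_69 : chkR (hexb (nat_lit 1) (nat_lit 2) (nat_lit 3) (nat_lit 2) (nat_lit 1) (nat_lit 3)) tr123213 (nat_lit 9) (nat_lit 69) = true := by decide +kernel
theorem t123213_78 : chkR (hexb (nat_lit 1) (nat_lit 2) (nat_lit 3) (nat_lit 2) (nat_lit 1) (nat_lit 3)) tr123213 (nat_lit 4) (nat_lit 78) = true := by decide +kernel
theorem t123213_82 : chkR (hexb (nat_lit 1) (nat_lit 2) (nat_lit 3) (nat_lit 2) (nat_lit 1) (nat_lit 3)) tr123213 (nat_lit 5) (nat_lit 82) = true := by decide +kernel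
theorem t123213_87 : chkR (hexb (nat_lit 1) (nat_lit 2) (nat_lit 3) (nat_lit 2) (nat_lit 1) (nat_lit 3)) tr123213 (nat_lit 9) (nat_lit 87) = true := by decide +kernel
theorem t123213_96 : chkR (hexb (nat_lit 1) (nat_lit 2) (nat_lit 3) (nat_lit 2) (nat_lit 1) (nat_lit 3)) tr123213 (nat_lit 16) (nat_lit 96) = true := by decide +kernel
theorem t123213_112 : chkR (hexb (nat_lit 1) (nat_lit 2) (nat_lit 3) (nat_lit 2) (nat_lit 1) (nat_lit 3)) tr123213 (nat_lit 8) (nat_lit 112) = true := by decide +kernel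
theorem t123213_120 : chkR (hexb (nat_lit 1) (nat_lit 2) (nat_lit 3) (nat_lit 2) (nat_lit 1) (nat_lit 3)) tr123213 (nat_lit 6) (nat_lit 120) = true := by decide +kernel
theorem t123213_126 : chkR (hexb (nat_lit 1) (nat_lit 2) (nat_lit 3) (nat_lit 2) (nat_lit 1) (nat_lit 3)) tr123213 (nat_lit 2) (nat_lit 126) = true := by decide +kernel
def tr121323 : T :=
  open T in
 (N (N (N (N (N (N (N (N (L 348260513096953446146725979511325651410726451655123395978732690454591522797580386871300)
 (L 11783555084272930340572474563705234565026))
 (N (L 308466866225762294948)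
 (L 0))) (N (N (L 1665567630483322159469593047914034044867)
 (L 0))
 (N (L 14179235338791944015866688392846754411524057308560990947)
 (L 0)))) (N (N (N (L 548490103052351193837861535365276993796356776707)
 (L 0))
 (N (L 5755681800891339021713867205399806531600664098511688)
 (L 0))) (N (N (L 2517325575571364551189508)
 (L 0))
 (N (L 303301227296334005457476174440967216470462827320921819192804)
 (L 0))))) (N (N (N (N (L 374009357921953728076530563219479740724094077783187542360706233864721366277109057973540)
 (L 0))
 (N (L 8538844263777666256758628394417164667200288750640458864635972942710753950858141841497792036)
 (L 0))) (N (N (L 788506727601128538900919952330400691954731112941887440995268611825050936415498914986153606333140984559187819676609558438970352509363178093902947113660020161684098351266488154080797002954664999327512607769665733349830974217149570)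
 (L 0))
 (N (L 11501872932320125038169143318538079705921)
 (L 0)))) (N (N (N (L 10319928563859027984729175956622525286766504846300993641790150498751214462887511559663671954760131136543282860706045002454859233169473077012124675)
 (L 0))
 (N (L 12261402944906911898723881377566357652739259895846211021395156598772440397775649)
 (L 0))) (N (N (L 765431968576855162249719337959413146846036237700)
 (L 0))
 (N (L 424700112573981447226245842354421578565653030911059366372482)
 (L 0)))))) (N (N (N (N (N (L 1109752182178552059562333932847068738778193832822427222024578147685947169986)
 (L 37722412728315361))
 (N (L 8228525931811114934979540823564529869113558077705363382994990554116)
 (L 0))) (N (N (L 92523319120919058317157687109309662723416802)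
 (L 0))
 (N (L 765455798630424854412109089723730112746184633827)
 (L 0)))) (N (N (N (L 75925531529120885002519851379348682510472307559665701512804)
 (L 0))
 (N (L 15164518138668515)
 (L 0))) (N (N (L 116482776594592589410)
 (L 0))
 (N (L 840023967323831716354308601238298146)
 (L 0))))) (N (N (N (N (L 37118609361886967006605584540015279527395954298821426633704751711018310666276579555)
 (L 0))
 (N (L 51387403632998225381538914474522507431930288988301319970)
 (L 0))) (N (N (L 7626524582046525375972465206947)
 (L 0))
 (N (L 15916079978990583769776958790752262781552780790189068444556252272588692022664739)
 (L 0)))) (N (N (N (L 7981449563180967557408383672846802486814768983558037701451040030391498020092253034439940324478951297621211153635863973)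
 (L 0))
 (N (L 426306714017170218023496387796976881373893237713831379347651)
 (L 0))) (N (N (L 51368819231692275656886445306056137066625825678353624515)
 (L 0))
 (N (L 2549216387302475266089441)
 (L 0))))))) (N (N (N (N (N (N (L 7934268711607656415390644960066658429332089899687739731016823013311850763561708999230992387)
 (L 44341118719735240827667433607264202229651092290))
 (N (L 11406173751628103352573186465286111715746)
 (L 0))) (N (N (L 27190333018958448857065983471686268305051971)
 (L 0))
 (N (L 49697066595485375237333024775108)
 (L 0)))) (N (N (N (L 525205331954030075334387772291621058)
 (L 0))
 (N (L 227959154064964395933720474520868162926204040766702557774252255880220332843638863353310011276194665009542490526878137306491321912437516483)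
 (L 0))) (N (N (L 19062819394263650669108681891)
 (L 0))
 (N (L 303080432746061668692794612498225222959301763857817511649055674440597977477269298209795)
 (L 0))))) (N (N (N (N (L 4302028962405211557016649654434377293635)
 (L 0))
 (N (L 2529101648327599775272350200717150410123185068539790456826422654459721015696606157814885351464295217538079248829771882504257982234929965211324452629226211)
 (L 0))) (N (N (L 3570086493635560445195237884545440623324557844985261318)
 (L 0))
 (N (L 39372211600661652390249721377935315353379783307056160355)
 (L 0)))) (N (N (N (L 43472349178184543075417695885017188939393189)
 (L 0))
 (N (L 1007976459556007525515465447838903385658175269157649688594783779)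
 (L 0))) (N (N (L 421009521904116585253795894109861989225368815546979930727429)
 (L 0))
 (N (L 64513129721108970787278809834209)
 (L 0)))))) (N (N (N (N (N (L 7397092626941100191057583689438583978115108875405955367590920161643273190205300504518256677)
 (L 6478168813304634897160553432992107064957257311691425))
 (N (L 24035571772501443)
 (L 0))) (N (N (L 167746494782571815247362840616193)
 (L 0))
 (N (L 1322899177001675187470419638185892803)
 (L 0)))) (N (N (N (L 633492105837705813314449251665951404961152604729890421110436196928752475396)
 (L 0))
 (N (L 1401393683364642929093811618994199363)
 (L 0))) (N (N (L 37143178838614083)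
 (L 0))
 (N (L 49459295195142342099928131608097)
 (L 0))))) (N (N (N (N (L 2917706080177688646983938941431583249678631935255140)
 (L 0))
 (N (L 197308071253960063735586407128191395442230545376100515595174510232575452398013243779299)
 (L 0))) (N (N (L 7478514594092213905139998180)
 (L 0))
 (N (L 3445696176078577908789961824341249501667646275339501158081814306)
 (L 0)))) (N (N (N (L 1152167095975329942620118446321118737059339022205104846524751977277460323138)
 (L 0))
 (N (L 26844946566801634291874553406765534734334206662971386639234082628131)
 (L 0))) (N (N (L 64274786907335907002475543029123)
 (L 0))
 (N (L 3426315004198563746452137123661521107443027803522659249091286468)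
 (L 0)))))))) (N (N (N (N (N (N (N (L 5211868001122440661556241689587849682852)
 (L 19329160848817577964062223229874167234591766007661469153))
 (N (L 93047326558440004479325215437859896065073218)
 (L 0))) (N (N (L 232281163551529598926764886837841328785498857057688368242435)
 (L 0))
 (N (L 11501530285575747489596328180583202663458)
 (L 0)))) (N (N (N (L 1999045445691933571194434)
 (L 0))
 (N (L 67320267170650426612435662122496158846251816576200606493341311252831048)
 (L 0))) (N (N (L 569310200604096484753368714470867232268907616343615806133606049065473715561564907178125086394978980)
 (L 0))
 (N (L 765396734028200466117666180101490620448351741348)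
 (L 0))))) (N (N (N (N (L 262959559347873337391444118522143523)
 (L 0))
 (N (L 21569299005391674915778601948304006349643523)
 (L 0))) (N (N (L 5732479005800505445192868718966721367095312932970565)
 (L 0))
 (N (L 6232608013655297165054007168167909719466438579480164)
 (L 0)))) (N (N (N (L 595254418149613044135085651606231614542815676588390987852509252563612168091922856603375595638813604753905063989460544704188142088384992223708878276513287812248228465700108280537091559682902341435594321592026422399851426440236664981304808835106466909037800780024411765429319778172162873340114637591420731281995052643271543279644262689934628494818005120412226084611619414180642502963714014489175179015220186303825429622250022147466226050)
 (L 0))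
 (N (L 6358110207065675272371058403648717790784144753092836)
 (L 0))) (N (N (L 51392761712456236853944716909457524860127001574934341092)
 (L 0))
 (N (L 781505180609424673623301685170184322)
 (L 0)))))) (N (N (N (N (N (L 3379320128315444151180093060435126813432861047821634494254690471322683257718237372357558153837846064243238858029662377547401618405)
 (L 6472322821390079616885929512717814151903093789627713))
 (N (L 5168298039219115803146538394174950592913838745952997)
 (L 0))) (N (N (L 415316450087102397910270401177233885621902399388483697305794)
 (L 0))
 (N (L 10841682166843654040494194330128686292580)
 (L 0)))) (N (N (N (L 112487713346085654132124152713064932842628193157)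
 (L 0))
 (N (L 70930047301984064631166366517492782324711689092856849164473642188985217292729692674201896723170)
 (L 0))) (N (N (L 37479680800530627)
 (L 0))
 (N (L 6329073193794892679955403660331796771770427252796898)
 (L 0))))) (N (N (N (N (L 96953121033027550354712278137236587543852026520343051561219)
 (L 0))
 (N (L 11405592792113200122019630095837496613700)
 (L 0))) (N (N (L 2517325595349291828780420)
 (L 0))
 (N (L 28253551496020543328634820207868450534928213624482632568307726163427)
 (L 0)))) (N (N (N (L 499857619938389746770415289813756259)
 (L 0))
 (N (L 21426354850691958819696205650204641551218081585031874037430259638176484425339479423990827189398778486881870201013725411)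
 (L 0))) (N (N (L 170039568094889710945972652386274)
 (L 0))
 (N (L 580937185)
 (L 0))))))) (N (N (N (N (N (N (L 289417290601083967588047844160545776308829397827)
 (L 710701161836371297368328672221101141238462061653643987240920993))
 (N (L 2234976709288971211119521)
 (L 0))) (N (N (L 155453558902387699365033426295650)
 (L 0))
 (N (L 93439427549552098391459870882530966609108580)
 (L 0)))) (N (N (N (L 1099626777182975073809629503368764865)
 (L 0))
 (N (L 1382513075446140662588094265579383845)
 (L 0))) (N (N (L 11389351195635053982524828551842955536451)
 (L 0))
 (N (L 11374267090774400681525510411605952437731)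
 (L 0))))) (N (N (N (N (L 7825122125542510706816547202)
 (L 0))
 (N (L 994764689675147852839692051905147906472585568902238989700816910496284551363)
 (L 0))) (N (N (L 1050925305629495619967025708172615205)
 (L 0))
 (N (L 150667843773563490934995351838277984116198877475)
 (L 0)))) (N (N (N (L 70133945493443674643907662762608852350838692)
 (L 0))
 (N (L 2501984792834832469353956)
 (L 0))) (N (N (L 54848595186003534831907994647752221128467075)
 (L 0))
 (N (L 69495910336661497705664394024695732180914992119879083020963893647555328770620139509845122999425)
 (L 0)))))) (N (N (N (N (N (L 4189327076348931412562459051063076991133639281762020)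
 (L 16060877698533153813504183377700120312922450556606058844350666187468770126645760))
 (N (L 99689650431917837786099625287556)
 (L 0))) (N (N (L 4547259689346)
 (L 0))
 (N (L 401149423126062390656667020833777869706601538274)
 (L 0)))) (N (N (N (L 915291164872035809731973)
 (L 0))
 (N (L 11411096049222862581055341394897519519938)
 (L 0))) (N (N (L 11326252576966210317394351724564358980548)
 (L 0))
 (N (L 51364913717163735430051669330452190675521163160186643458)
 (L 0))))) (N (N (N (N (L 245402226961582012556782376108290922790602940993021375261923)
 (L 0))
 (N (L 3479441874702082994605277831605087581896599519492380803804456420)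
 (L 0))) (N (N (L 74669210664222350403)
 (L 0))
 (N (L 9728001196122361574229753494321957493954391248970980290)
 (L 0)))) (N (N (N (L 15014588459402269514551402198696158052347490406812396227)
 (L 0))
 (N (L 33462619670769219191850793555053099721727522)
 (L 0))) (N (N (L 747073056359901569774475579437130069757816282682028037301101913125850132380294499099011)
 (L 0))
 (N (L 3564271218397928981810843454539250799104640725650877397999936513)
 (L 0)))))))))
theorem t121323_0 : chkR (hexb (nat_lit 1) (nat_lit 2) (nat_lit 1) (nat_lit 3) (nat_lit 2) (nat_lit 3)) tr121323 (nat_lit 5) (nat_lit 0) = true := by decide +kernel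
theorem t121323_5 : chkR (hexb (nat_lit 1) (nat_lit 2) (nat_lit 1) (nat_lit 3) (nat_lit 2) (nat_lit 3)) tr121323 (nat_lit 7) (nat_lit 5) = true := by decide +kernel
theorem t121323_12 : chkR (hexb (nat_lit 1) (nat_lit 2) (nat_lit 1) (nat_lit 3) (nat_lit 2) (nat_lit 3)) tr121323 (nat_lit 9) (nat_lit 12) = true := by decide +kernel
theorem t121323_21 : chkR (hexb (nat_lit 1) (nat_lit 2) (nat_lit 1) (nat_lit 3) (nat_lit 2) (nat_lit 3)) tr121323 (nat_lit 4) (nat_lit 21) = true := by decide +kernel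
theorem t121323_25 : chkR (hexb (nat_lit 1) (nat_lit 2) (nat_lit 1) (nat_lit 3) (nat_lit 2) (nat_lit 3)) tr121323 (nat_lit 1) (nat_lit 25) = true := by decide +kernel
theorem t121323_26 : chkR (hexb (nat_lit 1) (nat_lit 2) (nat_lit 1) (nat_lit 3) (nat_lit 2) (nat_lit 3)) tr121323 (nat_lit 8) (nat_lit 26) = true := by decide +kernel
theorem t121323_34 : chkR (hexb (nat_lit 1) (nat_lit 2) (nat_lit 1) (nat_lit 3) (nat_lit 2) (nat_lit 3)) tr121323 (nat_lit 6) (nat_lit 34) = true := by decide +kernel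
theorem t121323_40 : chkR (hexb (nat_lit 1) (nat_lit 2) (nat_lit 1) (nat_lit 3) (nat_lit 2) (nat_lit 3)) tr121323 (nat_lit 9) (nat_lit 40) = true := by decide +kernel
theorem t121323_49 : chkR (hexb (nat_lit 1) (nat_lit 2) (nat_lit 1) (nat_lit 3) (nat_lit 2) (nat_lit 3)) tr121323 (nat_lit 11) (nat_lit 49) = true := by decide +kernel
theorem t121323_60 : chkR (hexb (nat_lit 1) (nat_lit 2) (nat_lit 1) (nat_lit 3) (nat_lit 2) (nat_lit 3)) tr121323 (nat_lit 11) (nat_lit 60) = true := by decide +kernel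
theorem t121323_71 : chkR (hexb (nat_lit 1) (nat_lit 2) (nat_lit 1) (nat_lit 3) (nat_lit 2) (nat_lit 3)) tr121323 (nat_lit 5) (nat_lit 71) = true := by decide +kernel
theorem t121323_76 : chkR (hexb (nat_lit 1) (nat_lit 2) (nat_lit 1) (nat_lit 3) (nat_lit 2) (nat_lit 3)) tr121323 (nat_lit 6) (nat_lit 76) = true := by decide +kernel
theorem t121323_82 : chkR (hexb (nat_lit 1) (nat_lit 2) (nat_lit 1) (nat_lit 3) (nat_lit 2) (nat_lit 3)) tr121323 (nat_lit 7) (nat_lit 82) = true := by decide +kernel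
theorem t121323_89 : chkR (hexb (nat_lit 1) (nat_lit 2) (nat_lit 1) (nat_lit 3) (nat_lit 2) (nat_lit 3)) tr121323 (nat_lit 7) (nat_lit 89) = true := by decide +kernel
theorem t121323_96 : chkR (hexb (nat_lit 1) (nat_lit 2) (nat_lit 1) (nat_lit 3) (nat_lit 2) (nat_lit 3)) tr121323 (nat_lit 10) (nat_lit 96) = true := by decide +kernel
theorem t121323_106 : chkR (hexb (nat_lit 1) (nat_lit 2) (nat_lit 1) (nat_lit 3) (nat_lit 2) (nat_lit 3)) tr121323 (nat_lit 7) (nat_lit 106) = true := by decide +kernel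
theorem t121323_113 : chkR (hexb (nat_lit 1) (nat_lit 2) (nat_lit 1) (nat_lit 3) (nat_lit 2) (nat_lit 3)) tr121323 (nat_lit 9) (nat_lit 113) = true := by decide +kernel
theorem t121323_122 : chkR (hexb (nat_lit 1) (nat_lit 2) (nat_lit 1) (nat_lit 3) (nat_lit 2) (nat_lit 3)) tr121323 (nat_lit 8) (nat_lit 122) = true := by decide +kernel
theorem t121323_130 : chkR (hexb (nat_lit 1) (nat_lit 2) (nat_lit 1) (nat_lit 3) (nat_lit 2) (nat_lit 3)) tr121323 (nat_lit 6) (nat_lit 130) = true := by decide +kernel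
def tr123123 : T :=
  open T in
 (N (N (N (N (N (N (N (N (L 26337877294976941072009278242183997276679016498224757960736019526801466611109260040431823613514)
 (L 11559093388538714474759574892790536528290))
 (N (L 67297096345310645033947020622419150788267209609414250773338295273054083)
 (L 0))) (N (N (L 264191465423645650523526420964318052)
 (L 0))
 (N (L 47149660021130352411346501261001830428707292841279283107)
 (L 0)))) (N (N (N (L 7991290386225125147641927403463656453447049032436428989714792035029722513616995102974288797817961366683645934335204739)
 (L 2607064688243012682444001))
 (N (L 94563019651692633145892711558850206059815362)
 (L 0))) (N (N (L 360771099686915439900982772643764542681389187398103990886853)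
 (L 0))
 (N (L 761609863526456650762364027332698916917067398921024041331542997090476009086728016024815)
 (L 0))))) (N (N (N (N (L 3226937785492068279837893769446321494377763499613202046330798652381093839403002923937734182)
 (L 6361233784277647898777974746110700830583056377914113))
 (N (L 6647188951181320314246103554305637768323)
 (L 0))) (N (N (L 20601922648587425236463772738)
 (L 0))
 (N (L 321045264929457592665580551006542264529211120115512602033205665580443524263598664220889283290378444679903797762)
 (L 0)))) (N (N (N (L 11902368511201438617128359133792173817941823075877847310089091342117)
 (L 0))
 (N (L 569645857)
 (L 0))) (N (N (L 304132841046948748676)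
 (L 0))
 (N (L 4740078196386)
 (L 0)))))) (N (N (N (N (N (L 1351781416908632175779343090737945355588)
 (L 2609427136718899892304577))
 (N (L 341175881713740286902721127508391089013928001915239440775854732009323490658)
 (L 0))) (N (N (L 117214782199106889698191507270325658059967641040403269863619784992884274143628182844224769940234663742150839055979079661087963313575932347912344227577595188733471007109895836312378751587189795887179387856785138519991761867848247857499185816017129428021053157450040132348517130979)
 (L 0))
 (N (L 410162186897630204668363573227713915998577832144255373532333188343744576515102715263941204404200514)
 (L 0)))) (N (N (N (L 256233954576890075975781491885552109360753517379)
 (L 4928325389638905576395088433984924853094071521248478395154549056465869762876135957389678460282741018740943090293014275673153339575191853178768855191463684012474436257313832843107191118093883808))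
 (N (L 569646017)
 (L 0))) (N (N (L 2940002377120941242578039809694215398462342729737722387337901539333194169045090710706741580946811319064548076311934617330634558157011526832637720781231961414779943693580435951315135167268762088913052498206918)
 (L 0))
 (N (L 4740258590178)
 (L 0))))) (N (N (N (N (L 18769794258177123553475800463106983388196296431049739018999537471178850184517287701964694096527958746399252993747385182994558105527556)
 (L 775805947319109345171324537926748708272750585441))
 (N (L 577035398842455263604857216620084874872425669700)
 (L 0))) (N (N (L 804905524272766927731081040903221577223008953757847773486670051921539063519105322579591568660674637338726087490241255099152321332525416824782904343884356177314829075163778669797)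
 (L 0))
 (N (L 1773938310844394441271742668024686388048791955329048593915411108936489587104441641474500082470518333666)
 (L 0)))) (N (N (N (L 5183113521483571628264573247361028996395979100186883)
 (L 0))
 (N (L 569647233)
 (L 0))) (N (N (L 37532240299529891)
 (L 0))
 (N (L 6410922698726516820389585300121886944412481394351585)
 (L 0))))))) (N (N (N (N (N (N (L 985172026125285085356459737662284942000012961341893)
 (L 313633652867419448129))
 (N (L 881723988016096471023626222750186905886698106644890763871551284928511845090)
 (L 0))) (N (N (L 9214731051149839654852333255082700446564)
 (L 0))
 (N (L 8550405864234756807895837169783986511780)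
 (L 0)))) (N (N (N (L 37084800958359107)
 (L 53404375521588853523142286479629454478222261213865227745))
 (N (L 569646497)
 (L 0))) (N (N (L 96910301078087751344227766628621847482270173933902901125989)
 (L 0))
 (N (L 406322207379564176233689714371616003)
 (L 0))))) (N (N (N (N (L 955430442515611195138949)
 (L 2589356936282979993480993))
 (N (L 343919335611024480528710339146263033872134593472812158407386838505218226886592161227619)
 (L 0))) (N (N (L 2601755103776701244551801988630386179496104314468766608617728740)
 (L 0))
 (N (L 121715514854869297623971197149089)
 (L 0)))) (N (N (N (L 5182573707598576263876153726863827432286055442982883)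
 (L 0))
 (N (L 569642913)
 (L 0))) (N (N (L 447060922976436357243172657941023045681372242789757905869757669)
 (L 0))
 (N (L 234795903566054040972737609323770410514534441876465867216858092887138115)
 (L 0)))))) (N (N (N (N (N (L 2514271309792228679921985567982744945650583247582731252706793564239999458857772689002173987732693314325831453370599581341955117011329278458296235741241796)
 (L 39112205783395649))
 (N (L 4732919635305004027874615979437889100405480797791843)
 (L 0))) (N (N (L 53381985354332701648284696170146243628802897718929146784428081845434114)
 (L 0))
 (N (L 315218271997374275042)
 (L 0)))) (N (N (N (L 753606480360323713566064964921283638141455231107)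
 (L 0))
 (N (L 569646945)
 (L 0))) (N (N (L 716543857282553278978826668206258606918266040899894899559421567337072731939)
 (L 0))
 (N (L 38463005159176899)
 (L 0))))) (N (N (N (N (L 355066561560011797265810312939820995)
 (L 2605886661884131341571041))
 (N (L 15920357453092396188070408462094125918837525014530169921237652458905268430028432019715744492003623040742245291536261987)
 (L 0))) (N (N (L 663023249462758884933010809212839480933498903381218476469296926081136477612315295532373359575627112793260273776943859956798057636828860353398875509825606)
 (L 0))
 (N (L 1572658929396378179208623871920391388310288038116555683507797229647035696004035365826142269282107045315)
 (L 0)))) (N (N (N (L 4948933247843442918006403214475612274105689682288741)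
 (L 0))
 (N (L 569652033)
 (L 0))) (N (N (L 93210218235030286153181925313143964089884503336579626667152079595535624760454964228695717087512606939896167166701835710478491178261733)
 (L 0))
 (N (L 2570464041912190354708705)
 (L 0)))))))) (N (N (N (N (N (N (N (L 1611631921864312919102914532804682809214174915264962026930593014552605495577524436692708773)
 (L 96132492355137977324124987480300400521568129))
 (N (L 14946976231874103490388564325338652293000150096312818819)
 (L 0))) (N (N (L 5118925356609018615672010168617606201846885884102067543626660621082030987017151266937578332367446664091908932981919047786344015086152124623650893386226215158184413877191353233140159566386664539084011852541796715707293602)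
 (L 0))
 (N (L 85764730946840049868849258788083426146671749)
 (L 0)))) (N (N (N (L 7898926529414950490238522616064916048232317721708985770789687618308)
 (L 176145707436387016631183927481473))
 (N (L 872172084138055343496150209263645977130094672943652579588783937527020593313)
 (L 0))) (N (N (L 12914573945438382989652902996320719834464746428498537877925292189477)
 (L 0))
 (N (L 94691555260889338109638402942235181702768460845163583078838792137307618076406289019304119838301322170590690421754458890748913068892360068556740005086373118246339004863439298)
 (L 0))))) (N (N (N (N (L 158254593649036655419838981375967280819358316964596815638209088395085777411754901085262434354842763386801545460787995483077)
 (L 2605885238605903279809441))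
 (N (L 94264102508199183894352225090680636724222914)
 (L 0))) (N (N (L 222953307775504224033)
 (L 0))
 (N (L 675897443452954112776760156022577407055331942850)
 (L 0)))) (N (N (N (L 89280256160275548247053349440715700436111041220)
 (L 0))
 (N (L 569649537)
 (L 0))) (N (N (L 20341340162790538230427536515712436715414229287317426782219178498401947635171582942890588951173212649251112616839042912332408759523145878977031579317487145617591322197658601225289616291727365187834204348186648313243012243086801180164875346461637873969888681363097142469732647423629459839938323546138900171178170995430651475967581054658813745465502596599103470957133858915861589960942525648786176416817399257834525018545182446513786980293299009642485564271309702540432596120997343803741813924579962801530000678828630487626658733628258)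
 (L 0))
 (N (L 315218744961593369666)
 (L 0)))))) (N (N (N (N (N (L 502418987193257233696191522626202883)
 (L 21347411753602662266882040545))
 (N (L 576621753091228551252151459270604361479782948065)
 (L 0))) (N (N (L 69698336007114332328739053994498455643709986)
 (L 0))
 (N (L 871238179357357494651438346464811884820741544072798668593547518266317269281)
 (L 0)))) (N (N (N (L 17039003464845499055358470016481586307290626563083177369459277194124997)
 (L 0))
 (N (L 569643041)
 (L 0))) (N (N (L 3849968467742011975025566608725686043441405304774427090292268559249295788080830097145989806433839719268)
 (L 0))
 (N (L 38830636855583714)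
 (L 0))))) (N (N (N (N (L 14682727623327521098691386850819208224826500)
 (L 38830741864147745))
 (N (L 70395319365814886487455237749949551749194244)
 (L 0))) (N (N (L 1551722063880194549970077177245028647209862341934331401002432957649303895233594852603553394038527246080990639738496086036340057741855098205115865162565415819315883229522571553274243630742450054120303140590059286380622354944995972949764571400060299508718436)
 (L 0))
 (N (L 667616584770897781933749954142505008432395445315)
 (L 0)))) (N (N (N (L 175568340487537095000613194919294213899719267702190454982465867142294875415321748078525676273370895765348555682)
 (L 0))
 (N (L 569646625)
 (L 0))) (N (N (L 80978371919108476403075163427386467765087004688683232755329113965160486899460299500643148682645951695649495749293754042261576968357311383372076215131108188022157616022561278152180264948845662842580538767492096867)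
 (L 0))
 (N (L 129199186746107958868495028912618389693397288050133023558640929905952265007221531041)
 (L 0))))))) (N (N (N (N (N (N (L 71129228725739017723075104634483415959774981)
 (L 29135559621384808606206560292301819759090472214142960737736062755265))
 (N (L 36115426783346758457547212785174330961378250870050943304044951715277555756521584853359825051522)
 (L 0))) (N (N (L 1183961552963494153706939013941143256950322942450532)
 (L 0))
 (N (L 6360731036506062347511404822496516773235864828419557)
 (L 0)))) (N (N (N (L 195987196050810495693571928361177530448598516048807986851300)
 (L 439051813639862127368295770124257010334298284690592970316610))
 (N (L 569649281)
 (L 0))) (N (N (L 1597381806617002870310454098620573478439552516411794828917406137308529414341948523721418334862496664299313552992377164051058230553956434489847166580378081915253666564716529594991861884253626637527123368723766689563969147318913176433742637294660)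
 (L 0))
 (N (L 1949069348438664629082165555615735304377355671339216543221298434838804931425)
 (L 0))))) (N (N (N (N (L 4498537074312828279148877045232070305869280438968003)
 (L 2577551771138289176009185))
 (N (L 1087825371621944197874993035644690608920038561064642)
 (L 0))) (N (N (L 1026362422187635644086986721748124223442366385976064598026706155013876667842066371990371220202661630338367210735336011250955529309796385918798182639007491)
 (L 0))
 (N (L 124697697141573712861352115164681248395983326193792935431343189965756189455047865710475758577937234951638724187528741561083441909852763622068927045667316729801335446191234178)
 (L 0)))) (N (N (N (L 204471573402800667731224243750594211)
 (L 0))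
 (N (L 569643297)
 (L 0))) (N (N (L 68895735476120200573411719554799648475198405493531615003820733847480262741913166512759752313755788906469800758963388617456666250804767571391951580427061317393146897079003823427589162683230196096932389515861768004190014413019753213906726639577867014111901097055357608226727757850307874030250828382702760346537172674653605231300948446255965943462261922831001079551093730179564521715867033887140)
 (L 0))
 (N (L 1923448042012481555897896019462367114635476509268779134319270742635186596866)
 (L 0)))))) (N (N (N (N (N (L 11416126762986232181421531124512031341221464034256940201158221784484)
 (L 38830733284962049))
 (N (L 647218044366084729554824707536067523)
 (L 0))) (N (N (L 59111425580979174418747970854914)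
 (L 0))
 (N (L 2577546613882042843162052)
 (L 0)))) (N (N (N (L 191209158514285831328900378953318783510506211880569024340769301965056228)
 (L 0))
 (N (L 569645921)
 (L 0))) (N (N (L 274415594830030737746584946722523393520868126051)
 (L 0))
 (N (L 38830647599294178)
 (L 0))))) (N (N (N (N (L 1228767251206207408333489628897107170)
 (L 38901118932477665))
 (N (L 11421374200999007565551426062432106832963)
 (L 0))) (N (N (L 70525616794847324723477556162425839402214502)
 (L 0))
 (N (L 2358139058588198866660405177809661673301252182186158086024102096728311604931671724646247243943080129635037130353283)
 (L 0)))) (N (N (N (L 256394695008311058094112280767241687484524692042358772734820)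
 (L 0))
 (N (L 4555382463361)
 (L 0))) (N (N (L 707471769277760591429745421295176821788894720538447218820505206323499826001736976389654168897660085134613703254884005886548076600012402148940610637854752649821404321269254317123)
 (L 0))
 (N (L 6381190276327430741645606533119220577973335672545090)
 (L 0)))))))))
theorem t123123_0 : chkR (hexb (nat_lit 1) (nat_lit 2) (nat_lit 3) (nat_lit 1) (nat_lit 2) (nat_lit 3)) tr123123 (nat_lit 7) (nat_lit 0) = true := by decide +kernel
theorem t123123_7 : chkR (hexb (nat_lit 1) (nat_lit 2) (nat_lit 3) (nat_lit 1) (nat_lit 2) (nat_lit 3)) tr123123 (nat_lit 5) (nat_lit 7) = true := by decide +kernel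
theorem t123123_12 : chkR (hexb (nat_lit 1) (nat_lit 2) (nat_lit 3) (nat_lit 1) (nat_lit 2) (nat_lit 3)) tr123123 (nat_lit 7) (nat_lit 12) = true := by decide +kernel
theorem t123123_19 : chkR (hexb (nat_lit 1) (nat_lit 2) (nat_lit 3) (nat_lit 1) (nat_lit 2) (nat_lit 3)) tr123123 (nat_lit 8) (nat_lit 19) = true := by decide +kernel
theorem t123123_27 : chkR (hexb (nat_lit 1) (nat_lit 2) (nat_lit 3) (nat_lit 1) (nat_lit 2) (nat_lit 3)) tr123123 (nat_lit 6) (nat_lit 27) = true := by decide +kernel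
theorem t123123_33 : chkR (hexb (nat_lit 1) (nat_lit 2) (nat_lit 3) (nat_lit 1) (nat_lit 2) (nat_lit 3)) tr123123 (nat_lit 3) (nat_lit 33) = true := by decide +kernel
theorem t123123_36 : chkR (hexb (nat_lit 1) (nat_lit 2) (nat_lit 3) (nat_lit 1) (nat_lit 2) (nat_lit 3)) tr123123 (nat_lit 3) (nat_lit 36) = true := by decide +kernel
theorem t123123_39 : chkR (hexb (nat_lit 1) (nat_lit 2) (nat_lit 3) (nat_lit 1) (nat_lit 2) (nat_lit 3)) tr123123 (nat_lit 5) (nat_lit 39) = true := by decide +kernel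
theorem t123123_44 : chkR (hexb (nat_lit 1) (nat_lit 2) (nat_lit 3) (nat_lit 1) (nat_lit 2) (nat_lit 3)) tr123123 (nat_lit 1) (nat_lit 44) = true := by decide +kernel
theorem t123123_45 : chkR (hexb (nat_lit 1) (nat_lit 2) (nat_lit 3) (nat_lit 1) (nat_lit 2) (nat_lit 3)) tr123123 (nat_lit 2) (nat_lit 45) = true := by decide +kernel
theorem t123123_47 : chkR (hexb (nat_lit 1) (nat_lit 2) (nat_lit 3) (nat_lit 1) (nat_lit 2) (nat_lit 3)) tr123123 (nat_lit 5) (nat_lit 47) = true := by decide +kernel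
theorem t123123_52 : chkR (hexb (nat_lit 1) (nat_lit 2) (nat_lit 3) (nat_lit 1) (nat_lit 2) (nat_lit 3)) tr123123 (nat_lit 5) (nat_lit 52) = true := by decide +kernel
theorem t123123_57 : chkR (hexb (nat_lit 1) (nat_lit 2) (nat_lit 3) (nat_lit 1) (nat_lit 2) (nat_lit 3)) tr123123 (nat_lit 1) (nat_lit 57) = true := by decide +kernel
theorem t123123_58 : chkR (hexb (nat_lit 1) (nat_lit 2) (nat_lit 3) (nat_lit 1) (nat_lit 2) (nat_lit 3)) tr123123 (nat_lit 1) (nat_lit 58) = true := by decide +kernel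
theorem t123123_59 : chkR (hexb (nat_lit 1) (nat_lit 2) (nat_lit 3) (nat_lit 1) (nat_lit 2) (nat_lit 3)) tr123123 (nat_lit 2) (nat_lit 59) = true := by decide +kernel
theorem t123123_61 : chkR (hexb (nat_lit 1) (nat_lit 2) (nat_lit 3) (nat_lit 1) (nat_lit 2) (nat_lit 3)) tr123123 (nat_lit 2) (nat_lit 61) = true := by decide +kernel
theorem t123123_63 : chkR (hexb (nat_lit 1) (nat_lit 2) (nat_lit 3) (nat_lit 1) (nat_lit 2) (nat_lit 3)) tr123123 (nat_lit 4) (nat_lit 63) = true := by decide +kernel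
theorem t123123_67 : chkR (hexb (nat_lit 1) (nat_lit 2) (nat_lit 3) (nat_lit 1) (nat_lit 2) (nat_lit 3)) tr123123 (nat_lit 7) (nat_lit 67) = true := by decide +kernel
theorem t123123_74 : chkR (hexb (nat_lit 1) (nat_lit 2) (nat_lit 3) (nat_lit 1) (nat_lit 2) (nat_lit 3)) tr123123 (nat_lit 7) (nat_lit 74) = true := by decide +kernel
theorem t123123_81 : chkR (hexb (nat_lit 1) (nat_lit 2) (nat_lit 3) (nat_lit 1) (nat_lit 2) (nat_lit 3)) tr123123 (nat_lit 19) (nat_lit 81) = true := by decide +kernel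
theorem t123123_100 : chkR (hexb (nat_lit 1) (nat_lit 2) (nat_lit 3) (nat_lit 1) (nat_lit 2) (nat_lit 3)) tr123123 (nat_lit 7) (nat_lit 100) = true := by decide +kernel
theorem t123123_107 : chkR (hexb (nat_lit 1) (nat_lit 2) (nat_lit 3) (nat_lit 1) (nat_lit 2) (nat_lit 3)) tr123123 (nat_lit 3) (nat_lit 107) = true := by decide +kernel
theorem t123123_110 : chkR (hexb (nat_lit 1) (nat_lit 2) (nat_lit 3) (nat_lit 1) (nat_lit 2) (nat_lit 3)) tr123123 (nat_lit 3) (nat_lit 110) = true := by decide +kernel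
theorem t123123_113 : chkR (hexb (nat_lit 1) (nat_lit 2) (nat_lit 3) (nat_lit 1) (nat_lit 2) (nat_lit 3)) tr123123 (nat_lit 9) (nat_lit 113) = true := by decide +kernel
theorem t123123_122 : chkR (hexb (nat_lit 1) (nat_lit 2) (nat_lit 3) (nat_lit 1) (nat_lit 2) (nat_lit 3)) tr123123 (nat_lit 7) (nat_lit 122) = true := by decide +kernel
theorem t123123_129 : chkR (hexb (nat_lit 1) (nat_lit 2) (nat_lit 3) (nat_lit 1) (nat_lit 2) (nat_lit 3)) tr123123 (nat_lit 12) (nat_lit 129) = true := by decide +kernel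
theorem t123123_141 : chkR (hexb (nat_lit 1) (nat_lit 2) (nat_lit 3) (nat_lit 1) (nat_lit 2) (nat_lit 3)) tr123123 (nat_lit 7) (nat_lit 141) = true := by decide +kernel
theorem t123123_148 : chkR (hexb (nat_lit 1) (nat_lit 2) (nat_lit 3) (nat_lit 1) (nat_lit 2) (nat_lit 3)) tr123123 (nat_lit 1) (nat_lit 148) = true := by decide +kernel


theorem f121212 {κ : ℕ → ℕ} (ok : OK κ) (hb : Good κ (hexb (nat_lit 1) (nat_lit 2) (nat_lit 1) (nat_lit 2) (nat_lit 1) (nat_lit 2))) : False := by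
  have hl := hexb_low (nat_lit 1) (nat_lit 2) (nat_lit 1) (nat_lit 2) (nat_lit 1) (nat_lit 2)
  have h : ∀ j < 0, ¬ Good κ (QQ tr121212 j) := fun j hj => absurd hj (Nat.not_lt_zero j)
  have h5 := chkR_s ok hb hl 5 0 (by norm_num) h t121212_0
  have h13 := chkR_s ok hb hl 8 5 (by norm_num) h5 t121212_5
  have h26 := chkR_s ok hb hl 13 13 (by norm_num) h13 t121212_13
  have h36 := chkR_s ok hb hl 10 26 (by norm_num) h26 t121212_26
  have h46 := chkR_s ok hb hl 10 36 (by norm_num) h36 t121212_36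
  have h53 := chkR_s ok hb hl 7 46 (by norm_num) h46 t121212_46
  have he : QQ tr121212 52 = 0 := by decide +kernel
  exact h53 52 (by norm_num) (by rw [he]; exact Good_zero κ)

theorem f121213 {κ : ℕ → ℕ} (ok : OK κ) (hb : Good κ (hexb (nat_lit 1) (nat_lit 2) (nat_lit 1) (nat_lit 2) (nat_lit 1) (nat_lit 3))) : False := by
  have hl := hexb_low (nat_lit 1) (nat_lit 2) (nat_lit 1) (nat_lit 2) (nat_lit 1) (nat_lit 3)
  have h : ∀ j < 0, ¬ Good κ (QQ tr121213 j) := fun j hj => absurd hj (Nat.not_lt_zero j)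
  have h8 := chkR_s ok hb hl 8 0 (by norm_num) h t121213_0
  have h12 := chkR_s ok hb hl 4 8 (by norm_num) h8 t121213_8
  have h17 := chkR_s ok hb hl 5 12 (by norm_num) h12 t121213_12
  have h29 := chkR_s ok hb hl 12 17 (by norm_num) h17 t121213_17
  have he : QQ tr121213 28 = 0 := by decide +kernel
  exact h29 28 (by norm_num) (by rw [he]; exact Good_zero κ)

theorem f121232 {κ : ℕ → ℕ} (ok : OK κ) (hb : Good κ (hexb (nat_lit 1) (nat_lit 2) (nat_lit 1) (nat_lit 2) (nat_lit 3) (nat_lit 2))) : False := by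
  have hl := hexb_low (nat_lit 1) (nat_lit 2) (nat_lit 1) (nat_lit 2) (nat_lit 3) (nat_lit 2)
  have h : ∀ j < 0, ¬ Good κ (QQ tr121232 j) := fun j hj => absurd hj (Nat.not_lt_zero j)
  have h8 := chkR_s ok hb hl 8 0 (by norm_num) h t121232_0
  have h15 := chkR_s ok hb hl 7 8 (by norm_num) h8 t121232_8
  have h21 := chkR_s ok hb hl 6 15 (by norm_num) h15 t121232_15
  have h34 := chkR_s ok hb hl 13 21 (by norm_num) h21 t121232_21
  have h44 := chkR_s ok hb hl 10 34 (by norm_num) h34 t121232_34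
  have h52 := chkR_s ok hb hl 8 44 (by norm_num) h44 t121232_44
  have he : QQ tr121232 51 = 0 := by decide +kernel
  exact h52 51 (by norm_num) (by rw [he]; exact Good_zero κ)

theorem f121312 {κ : ℕ → ℕ} (ok : OK κ) (hb : Good κ (hexb (nat_lit 1) (nat_lit 2) (nat_lit 1) (nat_lit 3) (nat_lit 1) (nat_lit 2))) : False := by
  have hl := hexb_low (nat_lit 1) (nat_lit 2) (nat_lit 1) (nat_lit 3) (nat_lit 1) (nat_lit 2)
  have h : ∀ j < 0, ¬ Good κ (QQ tr121312 j) := fun j hj => absurd hj (Nat.not_lt_zero j)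
  have h3 := chkR_s ok hb hl 3 0 (by norm_num) h t121312_0
  have h17 := chkR_s ok hb hl 14 3 (by norm_num) h3 t121312_3
  have h27 := chkR_s ok hb hl 10 17 (by norm_num) h17 t121312_17
  have h37 := chkR_s ok hb hl 10 27 (by norm_num) h27 t121312_27
  have h47 := chkR_s ok hb hl 10 37 (by norm_num) h37 t121312_37
  have h54 := chkR_s ok hb hl 7 47 (by norm_num) h47 t121312_47
  have h58 := chkR_s ok hb hl 4 54 (by norm_num) h54 t121312_54
  have he : QQ tr121312 57 = 0 := by decide +kernel
  exact h58 57 (by norm_num) (by rw [he]; exact Good_zero κ)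

theorem f121313 {κ : ℕ → ℕ} (ok : OK κ) (hb : Good κ (hexb (nat_lit 1) (nat_lit 2) (nat_lit 1) (nat_lit 3) (nat_lit 1) (nat_lit 3))) : False := by
  have hl := hexb_low (nat_lit 1) (nat_lit 2) (nat_lit 1) (nat_lit 3) (nat_lit 1) (nat_lit 3)
  have h : ∀ j < 0, ¬ Good κ (QQ tr121313 j) := fun j hj => absurd hj (Nat.not_lt_zero j)
  have h10 := chkR_s ok hb hl 10 0 (by norm_num) h t121313_0
  have h16 := chkR_s ok hb hl 6 10 (by norm_num) h10 t121313_10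
  have h22 := chkR_s ok hb hl 6 16 (by norm_num) h16 t121313_16
  have h29 := chkR_s ok hb hl 7 22 (by norm_num) h22 t121313_22
  have h32 := chkR_s ok hb hl 3 29 (by norm_num) h29 t121313_29
  have he : QQ tr121313 31 = 0 := by decide +kernel
  exact h32 31 (by norm_num) (by rw [he]; exact Good_zero κ)

theorem f123212 {κ : ℕ → ℕ} (ok : OK κ) (hb : Good κ (hexb (nat_lit 1) (nat_lit 2) (nat_lit 3) (nat_lit 2) (nat_lit 1) (nat_lit 2))) : False := by
  have hl := hexb_low (nat_lit 1) (nat_lit 2) (nat_lit 3) (nat_lit 2) (nat_lit 1) (nat_lit 2)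
  have h : ∀ j < 0, ¬ Good κ (QQ tr123212 j) := fun j hj => absurd hj (Nat.not_lt_zero j)
  have h5 := chkR_s ok hb hl 5 0 (by norm_num) h t123212_0
  have h10 := chkR_s ok hb hl 5 5 (by norm_num) h5 t123212_5
  have h13 := chkR_s ok hb hl 3 10 (by norm_num) h10 t123212_10
  have h22 := chkR_s ok hb hl 9 13 (by norm_num) h13 t123212_13
  have h34 := chkR_s ok hb hl 12 22 (by norm_num) h22 t123212_22
  have h38 := chkR_s ok hb hl 4 34 (by norm_num) h34 t123212_34
  have he : QQ tr123212 37 = 0 := by decide +kernel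
  exact h38 37 (by norm_num) (by rw [he]; exact Good_zero κ)

theorem f123232 {κ : ℕ → ℕ} (ok : OK κ) (hb : Good κ (hexb (nat_lit 1) (nat_lit 2) (nat_lit 3) (nat_lit 2) (nat_lit 3) (nat_lit 2))) : False := by
  have hl := hexb_low (nat_lit 1) (nat_lit 2) (nat_lit 3) (nat_lit 2) (nat_lit 3) (nat_lit 2)
  have h : ∀ j < 0, ¬ Good κ (QQ tr123232 j) := fun j hj => absurd hj (Nat.not_lt_zero j)
  have h8 := chkR_s ok hb hl 8 0 (by norm_num) h t123232_0
  have h19 := chkR_s ok hb hl 11 8 (by norm_num) h8 t123232_8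
  have h27 := chkR_s ok hb hl 8 19 (by norm_num) h19 t123232_19
  have h34 := chkR_s ok hb hl 7 27 (by norm_num) h27 t123232_27
  have h48 := chkR_s ok hb hl 14 34 (by norm_num) h34 t123232_34
  have h57 := chkR_s ok hb hl 9 48 (by norm_num) h48 t123232_48
  have h65 := chkR_s ok hb hl 8 57 (by norm_num) h57 t123232_57
  have h67 := chkR_s ok hb hl 2 65 (by norm_num) h65 t123232_65
  have he : QQ tr123232 66 = 0 := by decide +kernel
  exact h67 66 (by norm_num) (by rw [he]; exact Good_zero κ)

theorem f123132 {κ : ℕ → ℕ} (ok : OK κ) (hb : Good κ (hexb (nat_lit 1) (nat_lit 2) (nat_lit 3) (nat_lit 1) (nat_lit 3) (nat_lit 2))) : False := by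
  have hl := hexb_low (nat_lit 1) (nat_lit 2) (nat_lit 3) (nat_lit 1) (nat_lit 3) (nat_lit 2)
  have h : ∀ j < 0, ¬ Good κ (QQ tr123132 j) := fun j hj => absurd hj (Nat.not_lt_zero j)
  have h7 := chkR_s ok hb hl 7 0 (by norm_num) h t123132_0
  have h18 := chkR_s ok hb hl 11 7 (by norm_num) h7 t123132_7
  have h26 := chkR_s ok hb hl 8 18 (by norm_num) h18 t123132_18
  have h35 := chkR_s ok hb hl 9 26 (by norm_num) h26 t123132_26
  have h41 := chkR_s ok hb hl 6 35 (by norm_num) h35 t123132_35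
  have h48 := chkR_s ok hb hl 7 41 (by norm_num) h41 t123132_41
  have h55 := chkR_s ok hb hl 7 48 (by norm_num) h48 t123132_48
  have h59 := chkR_s ok hb hl 4 55 (by norm_num) h55 t123132_55
  have h61 := chkR_s ok hb hl 2 59 (by norm_num) h59 t123132_59
  have h70 := chkR_s ok hb hl 9 61 (by norm_num) h61 t123132_61
  have h77 := chkR_s ok hb hl 7 70 (by norm_num) h70 t123132_70
  have h84 := chkR_s ok hb hl 7 77 (by norm_num) h77 t123132_77
  have h92 := chkR_s ok hb hl 8 84 (by norm_num) h84 t123132_84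
  have h98 := chkR_s ok hb hl 6 92 (by norm_num) h92 t123132_92
  have he : QQ tr123132 97 = 0 := by decide +kernel
  exact h98 97 (by norm_num) (by rw [he]; exact Good_zero κ)

theorem f123213 {κ : ℕ → ℕ} (ok : OK κ) (hb : Good κ (hexb (nat_lit 1) (nat_lit 2) (nat_lit 3) (nat_lit 2) (nat_lit 1) (nat_lit 3))) : False := by
  have hl := hexb_low (nat_lit 1) (nat_lit 2) (nat_lit 3) (nat_lit 2) (nat_lit 1) (nat_lit 3)
  have h : ∀ j < 0, ¬ Good κ (QQ tr123213 j) := fun j hj => absurd hj (Nat.not_lt_zero j)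
  have h9 := chkR_s ok hb hl 9 0 (by norm_num) h t123213_0
  have h16 := chkR_s ok hb hl 7 9 (by norm_num) h9 t123213_9
  have h23 := chkR_s ok hb hl 7 16 (by norm_num) h16 t123213_16
  have h31 := chkR_s ok hb hl 8 23 (by norm_num) h23 t123213_23
  have h42 := chkR_s ok hb hl 11 31 (by norm_num) h31 t123213_31
  have h49 := chkR_s ok hb hl 7 42 (by norm_num) h42 t123213_42
  have h58 := chkR_s ok hb hl 9 49 (by norm_num) h49 t123213_49
  have h64 := chkR_s ok hb hl 6 58 (by norm_num) h58 t123213_58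
  have h69 := chkR_s ok hb hl 5 64 (by norm_num) h64 t123213_64
  have h78 := chkR_s ok hb hl 9 69 (by norm_num) h69 t123213_69
  have h82 := chkR_s ok hb hl 4 78 (by norm_num) h78 t123213_78
  have h87 := chkR_s ok hb hl 5 82 (by norm_num) h82 t123213_82
  have h96 := chkR_s ok hb hl 9 87 (by norm_num) h87 t123213_87
  have h112 := chkR_s ok hb hl 16 96 (by norm_num) h96 t123213_96
  have h120 := chkR_s ok hb hl 8 112 (by norm_num) h112 t123213_112
  have h126 := chkR_s ok hb hl 6 120 (by norm_num) h120 t123213_120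
  have h128 := chkR_s ok hb hl 2 126 (by norm_num) h126 t123213_126
  have he : QQ tr123213 127 = 0 := by decide +kernel
  exact h128 127 (by norm_num) (by rw [he]; exact Good_zero κ)

theorem f121323 {κ : ℕ → ℕ} (ok : OK κ) (hb : Good κ (hexb (nat_lit 1) (nat_lit 2) (nat_lit 1) (nat_lit 3) (nat_lit 2) (nat_lit 3))) : False := by
  have hl := hexb_low (nat_lit 1) (nat_lit 2) (nat_lit 1) (nat_lit 3) (nat_lit 2) (nat_lit 3)
  have h : ∀ j < 0, ¬ Good κ (QQ tr121323 j) := fun j hj => absurd hj (Nat.not_lt_zero j)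
  have h5 := chkR_s ok hb hl 5 0 (by norm_num) h t121323_0
  have h12 := chkR_s ok hb hl 7 5 (by norm_num) h5 t121323_5
  have h21 := chkR_s ok hb hl 9 12 (by norm_num) h12 t121323_12
  have h25 := chkR_s ok hb hl 4 21 (by norm_num) h21 t121323_21
  have h26 := chkR_s ok hb hl 1 25 (by norm_num) h25 t121323_25
  have h34 := chkR_s ok hb hl 8 26 (by norm_num) h26 t121323_26
  have h40 := chkR_s ok hb hl 6 34 (by norm_num) h34 t121323_34
  have h49 := chkR_s ok hb hl 9 40 (by norm_num) h40 t121323_40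
  have h60 := chkR_s ok hb hl 11 49 (by norm_num) h49 t121323_49
  have h71 := chkR_s ok hb hl 11 60 (by norm_num) h60 t121323_60
  have h76 := chkR_s ok hb hl 5 71 (by norm_num) h71 t121323_71
  have h82 := chkR_s ok hb hl 6 76 (by norm_num) h76 t121323_76
  have h89 := chkR_s ok hb hl 7 82 (by norm_num) h82 t121323_82
  have h96 := chkR_s ok hb hl 7 89 (by norm_num) h89 t121323_89
  have h106 := chkR_s ok hb hl 10 96 (by norm_num) h96 t121323_96
  have h113 := chkR_s ok hb hl 7 106 (by norm_num) h106 t121323_106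
  have h122 := chkR_s ok hb hl 9 113 (by norm_num) h113 t121323_113
  have h130 := chkR_s ok hb hl 8 122 (by norm_num) h122 t121323_122
  have h136 := chkR_s ok hb hl 6 130 (by norm_num) h130 t121323_130
  have he : QQ tr121323 135 = 0 := by decide +kernel
  exact h136 135 (by norm_num) (by rw [he]; exact Good_zero κ)

theorem f123123 {κ : ℕ → ℕ} (ok : OK κ) (hb : Good κ (hexb (nat_lit 1) (nat_lit 2) (nat_lit 3) (nat_lit 1) (nat_lit 2) (nat_lit 3))) : False := by
  have hl := hexb_low (nat_lit 1) (nat_lit 2) (nat_lit 3) (nat_lit 1) (nat_lit 2) (nat_lit 3)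
  have h : ∀ j < 0, ¬ Good κ (QQ tr123123 j) := fun j hj => absurd hj (Nat.not_lt_zero j)
  have h7 := chkR_s ok hb hl 7 0 (by norm_num) h t123123_0
  have h12 := chkR_s ok hb hl 5 7 (by norm_num) h7 t123123_7
  have h19 := chkR_s ok hb hl 7 12 (by norm_num) h12 t123123_12
  have h27 := chkR_s ok hb hl 8 19 (by norm_num) h19 t123123_19
  have h33 := chkR_s ok hb hl 6 27 (by norm_num) h27 t123123_27
  have h36 := chkR_s ok hb hl 3 33 (by norm_num) h33 t123123_33
  have h39 := chkR_s ok hb hl 3 36 (by norm_num) h36 t123123_36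
  have h44 := chkR_s ok hb hl 5 39 (by norm_num) h39 t123123_39
  have h45 := chkR_s ok hb hl 1 44 (by norm_num) h44 t123123_44
  have h47 := chkR_s ok hb hl 2 45 (by norm_num) h45 t123123_45
  have h52 := chkR_s ok hb hl 5 47 (by norm_num) h47 t123123_47
  have h57 := chkR_s ok hb hl 5 52 (by norm_num) h52 t123123_52
  have h58 := chkR_s ok hb hl 1 57 (by norm_num) h57 t123123_57
  have h59 := chkR_s ok hb hl 1 58 (by norm_num) h58 t123123_58
  have h61 := chkR_s ok hb hl 2 59 (by norm_num) h59 t123123_59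
  have h63 := chkR_s ok hb hl 2 61 (by norm_num) h61 t123123_61
  have h67 := chkR_s ok hb hl 4 63 (by norm_num) h63 t123123_63
  have h74 := chkR_s ok hb hl 7 67 (by norm_num) h67 t123123_67
  have h81 := chkR_s ok hb hl 7 74 (by norm_num) h74 t123123_74
  have h100 := chkR_s ok hb hl 19 81 (by norm_num) h81 t123123_81
  have h107 := chkR_s ok hb hl 7 100 (by norm_num) h100 t123123_100
  have h110 := chkR_s ok hb hl 3 107 (by norm_num) h107 t123123_107
  have h113 := chkR_s ok hb hl 3 110 (by norm_num) h110 t123123_110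
  have h122 := chkR_s ok hb hl 9 113 (by norm_num) h113 t123123_113
  have h129 := chkR_s ok hb hl 7 122 (by norm_num) h122 t123123_122
  have h141 := chkR_s ok hb hl 12 129 (by norm_num) h129 t123123_129
  have h148 := chkR_s ok hb hl 7 141 (by norm_num) h141 t123123_141
  have h149 := chkR_s ok hb hl 1 148 (by norm_num) h148 t123123_148
  have he : QQ tr123123 148 = 0 := by decide +kernel
  exact h149 148 (by norm_num) (by rw [he]; exact Good_zero κ)


/-! ### The main theorem -/

noncomputable def pt (v : Fin 421) : EuclideanSpace ℝ (Fin 2) := P (ptT.get v)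

theorem pt_ne {u v : Fin 421} (h : u < v) : pt u ≠ pt v := fun he =>
  (tst_true (tst_all (u := u) (v := v) h v.2)).1 (P_eq he)

theorem pt_inj : Function.Injective pt := by
  intro u v h
  rcases lt_trichotomy u v with h1 | h1 | h1
  · exact absurd h (pt_ne h1)
  · exact h1
  · exact absurd h.symm (pt_ne h1)

/-- The explicit 4-coloring. -/
noncomputable def col (v : Fin 421) : Fin 4 := ⟨ptT.get v &&& 3, Nat.lt_succ_of_le Nat.and_le_right⟩

theorem col_lt {u v : Fin 421} (h : u < v) (hd : dist (pt u) (pt v) = 1) : col u ≠ col v := fun hc =>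
  (tst_true (tst_all (u := u) (v := v) h v.2)).2 (congrArg Fin.val hc) (dist_eq_one hd)

theorem col_proper {u v : Fin 421} (hd : dist (pt u) (pt v) = 1) : col u ≠ col v := by
  rcases lt_trichotomy u v with h1 | h1 | h1
  · exact col_lt h1 hd
  · subst h1; simp at hd
  · exact (col_lt h1 (by rw [dist_comm]; exact hd)).symm

theorem dist_01 : dist (P (ptT.get 0)) (P (ptT.get 1)) = 8 / Real.sqrt 3 := by
  have h1 : Nat.beq (nrm (ptT.get (nat_lit 0)) (ptT.get (nat_lit 1))) (nat_lit 27648) = true := by decide +kernel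
  have h2 : irr (ptT.get (nat_lit 0)) (ptT.get (nat_lit 1)) = true := by decide +kernel
  have h1' : nrm (ptT.get 0) (ptT.get 1) = 27648 := Nat.eq_of_beq_eq_true h1
  have h3 := dist_P (ptT.get 0) (ptT.get 1)
  rw [h1', irr_iff _ _ h2] at h3
  have h4 : dist (P (ptT.get 0)) (P (ptT.get 1)) ^ 2 = (8 / Real.sqrt 3) ^ 2 := by
    rw [div_pow, Real.sq_sqrt (by norm_num)]
    push_cast at h3
    linarith
  exact (sq_eq_sq₀ dist_nonneg (by positivity)).1 h4

/-- Renaming of the colors: `a`, `b`, `c` become 0, 1, 2. -/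
def sg (a b c x : Fin 4) : ℕ := if x = a then 0 else if x = b then 1 else if x = c then 2 else 3

theorem sg_inj : ∀ a b c : Fin 4, a ≠ b → a ≠ c → b ≠ c → ∀ x y, sg a b c x = sg a b c y → x = y := by
  decide

theorem sg_lt (a b c x : Fin 4) : sg a b c x < 4 := by
  unfold sg; split_ifs <;> norm_num

theorem forced {κ : ℕ → ℕ} (ok : OK κ) (hO : κ 320 = 0) (h0 : κ 55 = 1) (h1 : κ 59 = 2)
    (hs : ∀ v ∈ [57, 54, 56, 58], κ v ≠ 0) (a2 : κ 59 ≠ κ 57) (a3 : κ 57 ≠ κ 54) (a4 : κ 54 ≠ κ 56)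
    (a5 : κ 56 ≠ κ 58) (a6 : κ 58 ≠ κ 55) : False := by
  have key : ∀ {c2 c3 c4 c5 : ℕ}, κ 57 = c2 → κ 54 = c3 → κ 56 = c4 → κ 58 = c5 → Good κ (hexb 1 2 c2 c3 c4 c5) :=
    fun h2 h3 h4 h5 => hexb_good ok hO h0 h1 h2 h3 h4 h5
  have b2 := hs 57 (by simp)
  have b3 := hs 54 (by simp)
  have b4 := hs 56 (by simp)
  have b5 := hs 58 (by simp)
  have l2 := ok.lt 57
  have l3 := ok.lt 54
  have l4 := ok.lt 56
  have l5 := ok.lt 58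
  rw [h0] at a6
  rw [h1] at a2
  have h2 : κ 57 = 1 ∨ κ 57 = 3 := by omega
  have h3 : κ 54 = 1 ∨ κ 54 = 2 ∨ κ 54 = 3 := by omega
  have h4 : κ 56 = 1 ∨ κ 56 = 2 ∨ κ 56 = 3 := by omega
  have h5 : κ 58 = 2 ∨ κ 58 = 3 := by omega
  rcases h2 with h2 | h2 <;> rcases h3 with h3 | h3 | h3 <;> try omega
  all_goals rcases h4 with h4 | h4 | h4 <;> try omega
  all_goals rcases h5 with h5 | h5 <;> try omega
  · exact f121212 ok (key h2 h3 h4 h5)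
  · exact f121213 ok (key h2 h3 h4 h5)
  · exact f121232 ok (key h2 h3 h4 h5)
  · exact f121312 ok (key h2 h3 h4 h5)
  · exact f121313 ok (key h2 h3 h4 h5)
  · exact f121323 ok (key h2 h3 h4 h5)
  · exact f123123 ok (key h2 h3 h4 h5)
  · exact f123132 ok (key h2 h3 h4 h5)
  · exact f123212 ok (key h2 h3 h4 h5)
  · exact f123213 ok (key h2 h3 h4 h5)
  · exact f123232 ok (key h2 h3 h4 h5)

theorem unit_of {u v : ℕ} (h : unitB (ptT.get u) (ptT.get v) = true) : dist (P (ptT.get u)) (P (ptT.get v)) = 1 :=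
  unit_dist h

theorem mono (f : ℕ → Fin 4)
    (hf : ∀ u v, u < 421 → v < 421 → unitB (ptT.get u) (ptT.get v) = true → f u ≠ f v) : f 0 = f 1 := by
  by_contra h01
  have e : ∀ u v, u < 421 → v < 421 → unitB (ptT.get u) (ptT.get v) = true → f u ≠ f v := hf
  have eO0 := e 320 55 (by norm_num) (by norm_num) (by decide +kernel)
  have eO1 := e 320 59 (by norm_num) (by norm_num) (by decide +kernel)
  have e01 := e 55 59 (by norm_num) (by norm_num) (by decide +kernel)
  have inj := sg_inj _ _ _ eO0 eO1 e01
  let κ : ℕ → ℕ := fun v => if v < 421 then sg (f 320) (f 55) (f 59) (f v) else 0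
  have hk : ∀ v, v < 421 → κ v = sg (f 320) (f 55) (f 59) (f v) := fun v hv => if_pos hv
  have hne : ∀ u v, u < 421 → v < 421 → f u ≠ f v → κ u ≠ κ v := by
    intro u v hu hv h h'
    rw [hk u hu, hk v hv] at h'
    exact h (inj _ _ h')
  have hku : ∀ u v, u < 421 → v < 421 → unitB (ptT.get u) (ptT.get v) = true → κ u ≠ κ v :=
    fun u v hu hv h => hne u v hu hv (e u v hu hv h)
  have ok : OK κ := by
    refine OK.mk' (fun v => ?_) (fun v hv => if_neg (by omega)) hku (hne 0 1 (by norm_num) (by norm_num) h01)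
    by_cases hv : v < 421
    · rw [hk v hv]; exact sg_lt _ _ _ _
    · rw [show κ v = 0 from if_neg hv]; norm_num
  have hO : κ 320 = 0 := by rw [hk 320 (by norm_num)]; simp [sg]
  have h0 : κ 55 = 1 := by rw [hk 55 (by norm_num)]; simp [sg, eO0.symm]
  have h1 : κ 59 = 2 := by rw [hk 59 (by norm_num)]; simp [sg, eO1.symm, e01.symm]
  refine forced ok hO h0 h1 ?_ (hku 59 57 (by norm_num) (by norm_num) (by decide +kernel))
    (hku 57 54 (by norm_num) (by norm_num) (by decide +kernel)) (hku 54 56 (by norm_num) (by norm_num) (by decide +kernel))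
    (hku 56 58 (by norm_num) (by norm_num) (by decide +kernel)) (hku 58 55 (by norm_num) (by norm_num) (by decide +kernel))
  intro v hv
  rw [← hO]
  simp only [List.mem_cons, List.not_mem_nil, or_false] at hv
  rcases hv with rfl | rfl | rfl | rfl
  · exact hku 57 320 (by norm_num) (by norm_num) (by decide +kernel)
  · exact hku 54 320 (by norm_num) (by norm_num) (by decide +kernel)
  · exact hku 56 320 (by norm_num) (by norm_num) (by decide +kernel)
  · exact hku 58 320 (by norm_num) (by norm_num) (by decide +kernel)

theorem stmt_3 :
    ∃ S : Set (EuclideanSpace ℝ (Fin 2)), S.Finite ∧ S.ncard = 421 ∧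
      ∃ p ∈ S, ∃ q ∈ S, dist p q = 8 / Real.sqrt 3 ∧
        (∃ c : EuclideanSpace ℝ (Fin 2) → Fin 4, (∀ x ∈ S, ∀ y ∈ S, dist x y = 1 → c x ≠ c y)) ∧
        (∀ c : EuclideanSpace ℝ (Fin 2) → Fin 4, (∀ x ∈ S, ∀ y ∈ S, dist x y = 1 → c x ≠ c y) → c p = c q) := by
  refine ⟨Set.range pt, Set.finite_range pt, ?_, pt 0, ⟨0, rfl⟩, pt 1, ⟨1, rfl⟩, dist_01, ?_, ?_⟩
  · rw [← Set.image_univ, Set.ncard_image_of_injective _ pt_inj, Set.ncard_univ, Nat.card_fin]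
  · refine ⟨Function.extend pt col (fun _ => 0), ?_⟩
    rintro _ ⟨u, rfl⟩ _ ⟨v, rfl⟩ hd
    rw [pt_inj.extend_apply, pt_inj.extend_apply]
    exact col_proper hd
  · intro c hc
    exact mono (fun v => c (P (ptT.get v))) fun u v hu hv h =>
      hc _ ⟨⟨u, hu⟩, rfl⟩ _ ⟨⟨v, hv⟩, rfl⟩ (unit_of h)
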